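/- arXiv:1302.2638 — 2 statements merged into one kernel-verified Lean document; each statement's English description precedes it below -/
import Mathlib

section
/- Let n be a positive integer and let β₁, β₂ be real parameters with β₁ ≥ 0 and β₂ ≥ 0. For G drawn from the quaternion real anti-spherical ensemble of size 2n with parameters (β₁, β₂), and for every complex number z, ⟨det(z·I − G)⟩ = Σ_{j=0}^{n} z^{2(n−j)} · ∏_{i=1}^{j} (β₁ + n + 1 − i)/(β₁ + β₂ + 2n + 1/2 − i). Equivalently, the even-degree skew orthogonal polynomial is Q_{2n}(z) = (Γ(β₁+n+1)/Γ(2n+1/2+β₁+β₂)) · Σ_{j=0}^{n} (Γ(n+j+1/2+β₁+β₂)/Γ(j+1+β₁)) z^{2j}. -/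
open MeasureTheory Matrix
open scoped ComplexOrder

/-- The `2n × 2n` complex matrix (indexed by `Fin n × Fin 2`) whose `(j,k)`-th `2 × 2`
block is `[[z_{jk}, w_{jk}], [-conj w_{jk}, conj z_{jk}]]`. -/
noncomputable def quatMatrix (n : ℕ) (x : Fin n → Fin n → ℂ × ℂ) :
    Matrix (Fin n × Fin 2) (Fin n × Fin 2) ℂ :=
  Matrix.of fun a b =>
    if a.2 = 0 then
      (if b.2 = 0 then (x a.1 b.1).1 else (x a.1 b.1).2)
    else
      (if b.2 = 0 then -(starRingEnd ℂ) ((x a.1 b.1).2)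
        else (starRingEnd ℂ) ((x a.1 b.1).1))

/-- The (unnormalized) density of the quaternion real anti-spherical ensemble of size
`2n` with parameters `(β₁, β₂)`: `det(G† G)^{β₁} det(I - G† G)^{β₂}` on the set where
`I - G† G` is positive definite, and `0` elsewhere (the determinants are real, so we
take real parts). -/
noncomputable def quatAntiSphericalWeight (n : ℕ) (β₁ β₂ : ℝ) (x : Fin n → Fin n → ℂ × ℂ) : ℝ :=
  Set.indicator
    {x' : Fin n → Fin n → ℂ × ℂ | (1 - (quatMatrix n x')ᴴ * quatMatrix n x').PosDef}
    (fun x' => (((quatMatrix n x')ᴴ * quatMatrix n x').det.re) ^ β₁ *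
      ((1 - (quatMatrix n x')ᴴ * quatMatrix n x').det.re) ^ β₂) x

/-!
Expand `det (z I - G)` multilinearly in its rows. The ensemble is invariant under multiplying one
quaternion row by the imaginary unit `i`, so a term survives averaging only if it takes both complex
rows of a quaternion row or neither; this leaves `∑ S, z ^ (2 (n - |S|)) ⟨det G_{S,S}⟩`, where
`det G_{S,S}` is a quaternionic volume. By column permutation invariance and a quaternionic
Cauchy–Binet formula, `n.choose |S| * ⟨det G_{S,S}⟩` is the mean volume `⟨vol S⟩` of the rows
`S` of `G`.

Given all rows of `G` but one outside `S`, let `M = I - C† C` with `C` the given rows. The remaining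
row `y` then has density proportional to `(y Q y†) ^ (2 β₁) (1 - y M⁻¹ y†)₊ ^ (2 β₂)`, with `Q` the
projection onto the complement of the rows of `C`. Let `P` be the projection onto the complement of
the rows `S`. The infinitesimal change of variables `y ↦ y + t y P M` scales `y Q y†` because
`P M Q = Q`, turns `y M⁻¹ y†` into `y P y† = vol (S ∪ {y}) / vol S`, and has a trace made of the
`vol (S ∪ {s}) / vol S` for the other rows `s`. It is applied to the Gaussian density
`(y Q y†) ^ (2 β₁) exp (- y M⁻¹ y†)`; a radial integration, which only multiplies integrals by Gamma
factors, passes to the truncated power. The resulting linear relation between `⟨vol S⟩` and the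
`⟨vol (S ∪ {s})⟩`, summed over all `S` of size `j`, is a first-order recursion in `j`.
-/

section TruncatedPower

/-- The truncated power `u₊ ^ c`, set to `0` on `u ≤ 0` also when `c = 0`; it is the radial density
`(1 - |g|²)₊ ^ c` of the ball. -/
noncomputable def truncPow (c u : ℝ) : ℝ := if 0 < u then u ^ c else 0

variable {c u : ℝ}

lemma truncPow_of_pos (hu : 0 < u) : truncPow c u = u ^ c := if_pos hu

lemma truncPow_of_nonpos (hu : u ≤ 0) : truncPow c u = 0 := if_neg hu.not_gt

lemma truncPow_nonneg (c u : ℝ) : 0 ≤ truncPow c u := by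
  unfold truncPow
  split_ifs with hu
  exacts [Real.rpow_nonneg hu.le c, le_rfl]

lemma truncPow_le_one (hc : 0 ≤ c) (hu : u ≤ 1) : truncPow c u ≤ 1 := by
  unfold truncPow
  split_ifs with hu₀
  exacts [Real.rpow_le_one hu₀.le hu hc, zero_le_one]

lemma truncPow_mul {a : ℝ} (ha : 0 < a) (c u : ℝ) :
    truncPow c (a * u) = a ^ c * truncPow c u := by
  rcases lt_or_ge 0 u with hu | hu
  · rw [truncPow_of_pos hu, truncPow_of_pos (mul_pos ha hu), Real.mul_rpow ha.le hu.le]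
  · rw [truncPow_of_nonpos hu, truncPow_of_nonpos (mul_nonpos_of_nonneg_of_nonpos ha.le hu),
      mul_zero]

@[fun_prop]
lemma measurable_truncPow (c : ℝ) : Measurable (truncPow c) :=
  Measurable.ite measurableSet_Ioi (measurable_id.pow_const c) measurable_const

lemma lintegral_exp_neg_mul_truncPow (hc : -1 < c) :
    ∫⁻ τ : ℝ, ENNReal.ofReal (Real.exp (-τ) * truncPow c τ) =
      ENNReal.ofReal (Real.Gamma (c + 1)) := by
  have hc' : 0 < c + 1 := by linarith
  rw [Real.Gamma_eq_integral hc', ofReal_integral_eq_lintegral_ofReal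
    (Real.GammaIntegral_convergent hc'), ← lintegral_indicator measurableSet_Ioi]
  · refine lintegral_congr fun τ => ?_
    by_cases hτ : 0 < τ <;> simp [truncPow, hτ]
  · filter_upwards [ae_restrict_mem measurableSet_Ioi] with τ hτ
    exact mul_nonneg (Real.exp_nonneg _) (Real.rpow_nonneg (le_of_lt hτ) _)

lemma lintegral_exp_neg_mul_truncPow_sub (hc : -1 < c) (s : ℝ) :
    ∫⁻ τ : ℝ, ENNReal.ofReal (Real.exp (-τ) * truncPow c (τ - s)) =
      ENNReal.ofReal (Real.exp (-s)) * ENNReal.ofReal (Real.Gamma (c + 1)) := by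
  rw [← lintegral_exp_neg_mul_truncPow hc, ← lintegral_add_right_eq_self _ s,
    ← lintegral_const_mul' _ _ ENNReal.ofReal_ne_top]
  refine lintegral_congr fun τ => ?_
  rw [← ENNReal.ofReal_mul (Real.exp_nonneg _), add_sub_cancel_right, neg_add_rev, Real.exp_add,
    mul_assoc]

end TruncatedPower

section BilinForm

variable {E : Type*} [AddCommGroup E] [Module ℝ E] {B : LinearMap.BilinForm ℝ E}

lemma bilinForm_self_nonneg (hB : ∀ g ≠ 0, 0 < B g g) (g : E) : 0 ≤ B g g := by
  rcases eq_or_ne g 0 with rfl | hg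
  · simp
  · exact (hB g hg).le

lemma bilinForm_smul_self (B : LinearMap.BilinForm ℝ E) (a : ℝ) (g : E) :
    B (a • g) (a • g) = a ^ 2 * B g g := by
  simp only [map_smul, LinearMap.smul_apply, smul_eq_mul]
  ring

lemma mul_sub_le_mul_exp_neg_comp {h : E → ℝ} {k : ℝ} {L : E →ₗ[ℝ] E} (hB : B.IsSymm)
    (hh₀ : ∀ g, 0 ≤ h g) (hhL : ∀ t : ℝ, 0 < 1 + t → ∀ g, h (g + t • L g) = (1 + t) ^ k * h g)
    {t : ℝ} (ht : 0 < 1 + t) (g : E) :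
    (1 + t) ^ k * (h g * Real.exp (-B g g) - 2 * t * (B g (L g) * h g * Real.exp (-B g g)) -
        t ^ 2 * (B (L g) (L g) * h g * Real.exp (-B g g))) ≤
      h ((1 + t • L) g) * Real.exp (-B ((1 + t • L) g) ((1 + t • L) g)) := by
  have h_apply : (1 + t • L) g = g + t • L g := rfl
  have h_expand : -B (g + t • L g) (g + t • L g) =
      -B g g + -(2 * t * B g (L g) + t ^ 2 * B (L g) (L g)) := by
    simp only [map_add, map_smul, LinearMap.add_apply, LinearMap.smul_apply, smul_eq_mul,
      hB.eq (L g) g]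
    ring
  have h_weight : 0 ≤ (1 + t) ^ k * h g * Real.exp (-B g g) :=
    mul_nonneg (mul_nonneg (Real.rpow_nonneg ht.le _) (hh₀ g)) (Real.exp_nonneg _)
  rw [h_apply, hhL t ht, h_expand, Real.exp_add]
  linarith [mul_le_mul_of_nonneg_left
    (Real.add_one_le_exp (-(2 * t * B g (L g) + t ^ 2 * B (L g) (L g)))) h_weight]

end BilinForm

lemma hasDerivAt_det_one_add_smul {E : Type*} [NormedAddCommGroup E] [NormedSpace ℝ E]
    [FiniteDimensional ℝ E] (L : E →ₗ[ℝ] E) :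
    HasDerivAt (fun t : ℝ => LinearMap.det (1 + t • L)) (LinearMap.trace ℝ E L) 0 := by
  classical
  let b := Module.finBasis ℝ E
  let N := LinearMap.toMatrix b b L
  have h_eval (t : ℝ) : LinearMap.det (1 + t • L) =
      (Matrix.det (1 + (Polynomial.X : Polynomial ℝ) • N.map Polynomial.C)).eval t := by
    rw [← LinearMap.det_toMatrix b, ← Polynomial.coe_evalRingHom, RingHom.map_det]
    congr 1
    ext i j
    simp [N, Matrix.one_apply, LinearMap.toMatrix_apply, apply_ite, Finsupp.single_apply,
      eq_comm, mul_comm t]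
  simp_rw [h_eval]
  rw [LinearMap.trace_eq_matrix_trace ℝ b, ← Matrix.derivative_det_one_add_X_smul]
  exact Polynomial.hasDerivAt _ 0

lemma hasDerivAt_det_mul_rpow_mul_quadratic {E : Type*} [NormedAddCommGroup E] [NormedSpace ℝ E]
    [FiniteDimensional ℝ E] (L : E →ₗ[ℝ] E) (k a b c : ℝ) :
    HasDerivAt
      (fun t : ℝ => LinearMap.det (1 + t • L) * ((1 + t) ^ k * (a - 2 * t * b - t ^ 2 * c)))
      ((LinearMap.trace ℝ E L + k) * a - 2 * b) 0 := by
  have h_rpow : HasDerivAt (fun t : ℝ => (1 + t) ^ k) k 0 := by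
    simpa using ((hasDerivAt_id (0 : ℝ)).const_add 1).rpow_const (p := k) (by simp)
  have h_quadratic : HasDerivAt (fun t : ℝ => a - 2 * t * b - t ^ 2 * c) (-(2 * b)) 0 := by
    refine (((((hasDerivAt_id (0 : ℝ)).const_mul 2).mul_const b).const_sub a).sub
      (((hasDerivAt_id (0 : ℝ)).pow 2).mul_const c)).congr_deriv ?_
    simp
  refine ((hasDerivAt_det_one_add_smul L).mul (h_rpow.mul h_quadratic)).congr_deriv ?_
  simp only [Pi.mul_apply, zero_smul, add_zero, map_one, Real.one_rpow]
  ring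

@[fun_prop]
lemma continuous_bilinForm {E : Type*} [NormedAddCommGroup E] [NormedSpace ℝ E]
    [FiniteDimensional ℝ E] (B : LinearMap.BilinForm ℝ E) {X : Type*} [TopologicalSpace X]
    {f g : X → E} (hf : Continuous f) (hg : Continuous g) : Continuous fun x => B (f x) (g x) :=
  (B.toContinuousBilinearMap.continuous.comp hf).clm_apply hg

lemma exists_pos_mul_sq_norm_le {E : Type*} [NormedAddCommGroup E] [NormedSpace ℝ E]
    [FiniteDimensional ℝ E] {B : LinearMap.BilinForm ℝ E} (hB : ∀ g ≠ 0, 0 < B g g) :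
    ∃ κ > 0, ∀ g, κ * ‖g‖ ^ 2 ≤ B g g := by
  rcases subsingleton_or_nontrivial E with hE | hE
  · exact ⟨1, one_pos, fun g => by simp [Subsingleton.elim g 0]⟩
  have h_cont : Continuous fun g => B g g :=
    continuous_bilinForm B continuous_id continuous_id
  obtain ⟨g₀, hg₀, h_min⟩ := (isCompact_sphere (0 : E) 1).exists_isMinOn
    (NormedSpace.sphere_nonempty.2 zero_le_one) h_cont.continuousOn
  refine ⟨B g₀ g₀, hB g₀ (ne_zero_of_mem_unit_sphere ⟨g₀, hg₀⟩), fun g => ?_⟩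
  rcases eq_or_ne g 0 with rfl | hg
  · simp
  have h_le : B g₀ g₀ ≤ B (‖g‖⁻¹ • g) (‖g‖⁻¹ • g) := h_min (by simp [norm_smul, hg])
  simp only [map_smul, LinearMap.smul_apply, smul_eq_mul] at h_le
  calc B g₀ g₀ * ‖g‖ ^ 2 ≤ ‖g‖⁻¹ * (‖g‖⁻¹ * B g g) * ‖g‖ ^ 2 := by gcongr
    _ = B g g := by field_simp [norm_ne_zero_iff.2 hg]

section Haar

variable {E : Type*} [NormedAddCommGroup E] [NormedSpace ℝ E] [FiniteDimensional ℝ E]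
  [MeasurableSpace E] [BorelSpace E] (μ : Measure E) [μ.IsAddHaarMeasure]

lemma lintegral_eq_pow_finrank_mul_lintegral_comp_smul {f : E → ENNReal} (hf : Measurable f)
    {a : ℝ} (ha : 0 < a) :
    ∫⁻ g, f g ∂μ = ENNReal.ofReal (a ^ Module.finrank ℝ E) * ∫⁻ g, f (a • g) ∂μ := by
  rw [← lintegral_map hf (measurable_const_smul a), Measure.map_addHaar_smul μ ha.ne',
    lintegral_smul_measure, smul_eq_mul, ← mul_assoc, ← ENNReal.ofReal_mul (by positivity),
    abs_of_pos (by positivity), mul_inv_cancel₀ (by positivity), ENNReal.ofReal_one, one_mul]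

section LinearChange

variable {L : E →ₗ[ℝ] E} (f : E → ℝ)

lemma measurableEmbedding_of_det_ne_zero (hL : LinearMap.det L ≠ 0) : MeasurableEmbedding L :=
  (L.equivOfDetNeZero hL).toContinuousLinearEquiv.toHomeomorph.measurableEmbedding

lemma integral_eq_abs_det_mul_integral_comp (hL : LinearMap.det L ≠ 0) :
    ∫ g, f g ∂μ = |LinearMap.det L| * ∫ g, f (L g) ∂μ := by
  rw [← (measurableEmbedding_of_det_ne_zero hL).integral_map (μ := μ) f,
    Measure.map_linearMap_addHaar_eq_smul_addHaar μ hL, integral_smul_measure,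
    ENNReal.toReal_ofReal (abs_nonneg _), smul_eq_mul, abs_inv,
    mul_inv_cancel_left₀ (abs_ne_zero.2 hL)]

variable {μ f} in
lemma integrable_comp_of_det_ne_zero (hL : LinearMap.det L ≠ 0) (hf : Integrable f μ) :
    Integrable (fun g => f (L g)) μ := by
  refine ((measurableEmbedding_of_det_ne_zero hL).integrable_map_iff (μ := μ)).1 ?_
  rw [Measure.map_linearMap_addHaar_eq_smul_addHaar μ hL]
  exact hf.smul_measure ENNReal.ofReal_ne_top

end LinearChange

section RadialIntegrals

variable {h s : E → ℝ} {m c : ℝ}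

lemma lintegral_mul_truncPow_sub (hh : Measurable h) (hs : Measurable s) (hs₀ : ∀ g, 0 ≤ s g)
    (hhm : ∀ a : ℝ, 0 < a → ∀ g, h (a • g) = a ^ m * h g)
    (hsm : ∀ a : ℝ, ∀ g, s (a • g) = a ^ 2 * s g) (τ : ℝ) :
    ∫⁻ g, ENNReal.ofReal (h g * truncPow c (τ - s g)) ∂μ =
      ENNReal.ofReal (truncPow (c + (Module.finrank ℝ E + m) / 2) τ) *
        ∫⁻ g, ENNReal.ofReal (h g * truncPow c (1 - s g)) ∂μ := by
  rcases lt_or_ge 0 τ with hτ | hτ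
  swap
  · have h_zero (g : E) : truncPow c (τ - s g) = 0 := truncPow_of_nonpos (by linarith [hs₀ g])
    simp [h_zero, truncPow_of_nonpos hτ]
  have hr : 0 < √τ := Real.sqrt_pos.2 hτ
  have h_scale (g : E) : ENNReal.ofReal (h (√τ • g) * truncPow c (τ - s (√τ • g))) =
      ENNReal.ofReal (√τ ^ m * τ ^ c) * ENNReal.ofReal (h g * truncPow c (1 - s g)) := by
    rw [← ENNReal.ofReal_mul (by positivity), hhm _ hr, hsm, Real.sq_sqrt hτ.le,
      show τ - τ * s g = τ * (1 - s g) by ring, truncPow_mul hτ]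
    ring_nf
  have h_exponent : √τ ^ Module.finrank ℝ E * (√τ ^ m * τ ^ c) =
      τ ^ (c + (Module.finrank ℝ E + m) / 2) := by
    rw [Real.sqrt_eq_rpow, ← Real.rpow_natCast, ← Real.rpow_mul hτ.le, ← Real.rpow_mul hτ.le,
      ← Real.rpow_add hτ, ← Real.rpow_add hτ]
    ring_nf
  rw [lintegral_eq_pow_finrank_mul_lintegral_comp_smul μ (by fun_prop) hr]
  simp_rw [h_scale]
  rw [lintegral_const_mul' _ _ ENNReal.ofReal_ne_top, ← mul_assoc,
    ← ENNReal.ofReal_mul (by positivity), h_exponent, truncPow_of_pos hτ]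

/- Both sides evaluate the integral of `e^{-τ} h(g) (τ - s(g))₊ ^ c` over all `(τ, g)`: the left
integrates over `τ` first, the right rescales `g` by `√τ`. -/
lemma gamma_mul_lintegral_mul_exp_neg (hh : Measurable h) (hs : Measurable s)
    (hh₀ : ∀ g, 0 ≤ h g) (hs₀ : ∀ g, 0 ≤ s g) (hc : -1 < c) (hm : 0 ≤ m)
    (hhm : ∀ a : ℝ, 0 < a → ∀ g, h (a • g) = a ^ m * h g)
    (hsm : ∀ a : ℝ, ∀ g, s (a • g) = a ^ 2 * s g) :
    ENNReal.ofReal (Real.Gamma (c + 1)) * ∫⁻ g, ENNReal.ofReal (h g * Real.exp (-s g)) ∂μ =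
      ENNReal.ofReal (Real.Gamma (c + (Module.finrank ℝ E + m) / 2 + 1)) *
        ∫⁻ g, ENNReal.ofReal (h g * truncPow c (1 - s g)) ∂μ := by
  have hd : (0 : ℝ) ≤ (Module.finrank ℝ E + m) / 2 := by positivity
  calc
    _ = ∫⁻ g, (∫⁻ τ : ℝ, ENNReal.ofReal (h g) *
          ENNReal.ofReal (Real.exp (-τ) * truncPow c (τ - s g))) ∂μ := by
      rw [← lintegral_const_mul' _ _ ENNReal.ofReal_ne_top]
      refine lintegral_congr fun g => ?_
      rw [lintegral_const_mul' _ _ ENNReal.ofReal_ne_top, lintegral_exp_neg_mul_truncPow_sub hc,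
        ENNReal.ofReal_mul (hh₀ g), mul_comm, mul_assoc]
    _ = ∫⁻ τ : ℝ, ∫⁻ g, ENNReal.ofReal (h g) *
          ENNReal.ofReal (Real.exp (-τ) * truncPow c (τ - s g)) ∂μ :=
      lintegral_lintegral_swap (by fun_prop)
    _ = ∫⁻ τ : ℝ, ENNReal.ofReal
          (Real.exp (-τ) * truncPow (c + (Module.finrank ℝ E + m) / 2) τ) *
        ∫⁻ g, ENNReal.ofReal (h g * truncPow c (1 - s g)) ∂μ := by
      refine lintegral_congr fun τ => ?_
      rw [ENNReal.ofReal_mul (Real.exp_nonneg _), mul_assoc,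
        ← lintegral_mul_truncPow_sub μ hh hs hs₀ hhm hsm,
        ← lintegral_const_mul' _ _ ENNReal.ofReal_ne_top]
      refine lintegral_congr fun g => ?_
      rw [ENNReal.ofReal_mul (Real.exp_nonneg _), ENNReal.ofReal_mul (hh₀ g), mul_left_comm]
    _ = _ := by
      rw [lintegral_mul_const _ (by fun_prop), lintegral_exp_neg_mul_truncPow (by linarith)]

lemma gamma_mul_integral_mul_exp_neg (hh : Measurable h) (hs : Measurable s)
    (hh₀ : ∀ g, 0 ≤ h g) (hs₀ : ∀ g, 0 ≤ s g) (hc : -1 < c) (hm : 0 ≤ m)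
    (hhm : ∀ a : ℝ, 0 < a → ∀ g, h (a • g) = a ^ m * h g)
    (hsm : ∀ a : ℝ, ∀ g, s (a • g) = a ^ 2 * s g) :
    Real.Gamma (c + 1) * ∫ g, h g * Real.exp (-s g) ∂μ =
      Real.Gamma (c + (Module.finrank ℝ E + m) / 2 + 1) *
        ∫ g, h g * truncPow c (1 - s g) ∂μ := by
  have hd : (0 : ℝ) ≤ (Module.finrank ℝ E + m) / 2 := by positivity
  have h_lintegral := congrArg ENNReal.toReal
    (gamma_mul_lintegral_mul_exp_neg μ hh hs hh₀ hs₀ hc hm hhm hsm)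
  rwa [ENNReal.toReal_mul, ENNReal.toReal_mul,
    ENNReal.toReal_ofReal (Real.Gamma_nonneg_of_nonneg (by linarith)),
    ENNReal.toReal_ofReal (Real.Gamma_nonneg_of_nonneg (by linarith)),
    ← integral_eq_lintegral_of_nonneg_ae (.of_forall fun g => mul_nonneg (hh₀ g)
      (Real.exp_nonneg _)) (by fun_prop),
    ← integral_eq_lintegral_of_nonneg_ae (.of_forall fun g => mul_nonneg (hh₀ g)
      (truncPow_nonneg _ _)) (by fun_prop)] at h_lintegral

end RadialIntegrals

section PositiveDefiniteForm

variable {B : LinearMap.BilinForm ℝ E} {h : E → ℝ} {m c k : ℝ} {L : E →ₗ[ℝ] E}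

lemma integrable_mul_truncPow_one_sub (hB : ∀ g ≠ 0, 0 < B g g) (hh : Continuous h)
    (hc : 0 ≤ c) : Integrable (fun g => h g * truncPow c (1 - B g g)) μ := by
  obtain ⟨κ, hκ, h_coercive⟩ := exists_pos_mul_sq_norm_le hB
  have h_compact : IsCompact (Metric.closedBall (0 : E) √(1 / κ)) := isCompact_closedBall _ _
  have h_bound : Integrable ((Metric.closedBall (0 : E) √(1 / κ)).indicator h) μ :=
    (integrable_indicator_iff h_compact.measurableSet).2
      (hh.continuousOn.integrableOn_compact h_compact)
  have h_meas : Measurable fun g => h g * truncPow c (1 - B g g) := by fun_prop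
  refine h_bound.mono h_meas.aestronglyMeasurable (.of_forall fun g => ?_)
  rcases lt_or_ge 0 (1 - B g g) with hg | hg
  · have hg_mem : g ∈ Metric.closedBall (0 : E) √(1 / κ) := by
      rw [mem_closedBall_zero_iff]
      refine Real.le_sqrt_of_sq_le ((le_div_iff₀ hκ).2 ?_)
      linarith [h_coercive g]
    have hg_nonneg : 0 ≤ B g g := (by positivity : 0 ≤ κ * ‖g‖ ^ 2).trans (h_coercive g)
    rw [Set.indicator_of_mem hg_mem, norm_mul, Real.norm_of_nonneg (truncPow_nonneg _ _)]
    exact mul_le_of_le_one_right (norm_nonneg _) (truncPow_le_one hc (by linarith))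
  · simp [truncPow_of_nonpos hg]

lemma integrable_mul_exp_neg (hB : ∀ g ≠ 0, 0 < B g g) (hh : Continuous h)
    (hh₀ : ∀ g, 0 ≤ h g) (hm : 0 ≤ m) (hhm : ∀ a : ℝ, 0 < a → ∀ g, h (a • g) = a ^ m * h g) :
    Integrable (fun g => h g * Real.exp (-B g g)) μ := by
  have h_gamma := gamma_mul_lintegral_mul_exp_neg μ hh.measurable
    (by fun_prop : Measurable fun g => B g g) hh₀ (bilinForm_self_nonneg hB) neg_one_lt_zero hm hhm
    (bilinForm_smul_self B)
  rw [zero_add, Real.Gamma_one, ENNReal.ofReal_one, one_mul] at h_gamma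
  refine ⟨by fun_prop, ?_⟩
  rw [hasFiniteIntegral_iff_ofReal
    (.of_forall fun g => mul_nonneg (hh₀ g) (Real.exp_nonneg _)), h_gamma]
  exact ENNReal.mul_lt_top ENNReal.ofReal_lt_top
    (integrable_mul_truncPow_one_sub μ hB hh le_rfl).lintegral_lt_top

/- The change of variables `g ↦ g + t L g` and `1 + u ≤ e^u` show that `t = 0` maximizes a
differentiable function, so the first variation vanishes without differentiating under the
integral sign. -/
lemma two_mul_integral_bilinForm_mul_exp_neg (hB : B.IsSymm) (hh₀ : ∀ g, 0 ≤ h g)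
    (hhL : ∀ t : ℝ, 0 < 1 + t → ∀ g, h (g + t • L g) = (1 + t) ^ k * h g)
    (h_int : Integrable (fun g => h g * Real.exp (-B g g)) μ)
    (h_int₁ : Integrable (fun g => B g (L g) * h g * Real.exp (-B g g)) μ)
    (h_int₂ : Integrable (fun g => B (L g) (L g) * h g * Real.exp (-B g g)) μ) :
    2 * ∫ g, B g (L g) * h g * Real.exp (-B g g) ∂μ =
      (LinearMap.trace ℝ E L + k) * ∫ g, h g * Real.exp (-B g g) ∂μ := by
  set J₀ := ∫ g, h g * Real.exp (-B g g) ∂μ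
  set J₁ := ∫ g, B g (L g) * h g * Real.exp (-B g g) ∂μ
  set J₂ := ∫ g, B (L g) (L g) * h g * Real.exp (-B g g) ∂μ
  let φ : ℝ → ℝ := fun t =>
    LinearMap.det (1 + t • L) * ((1 + t) ^ k * (J₀ - 2 * t * J₁ - t ^ 2 * J₂))
  have h_max : IsLocalMax φ 0 := by
    have h_det_pos : ∀ᶠ t in nhds (0 : ℝ), 0 < LinearMap.det (1 + t • L) :=
      (hasDerivAt_det_one_add_smul L).continuousAt.eventually_const_lt (by simp)
    have h_one_add_pos : ∀ᶠ t in nhds (0 : ℝ), 0 < 1 + t :=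
      (continuousAt_const.add continuousAt_id).eventually_const_lt (by simp)
    filter_upwards [h_det_pos, h_one_add_pos] with t ht_det ht
    have h_sub := h_int.sub (h_int₁.const_mul (2 * t))
    calc φ t = LinearMap.det (1 + t • L) * ∫ g, (1 + t) ^ k * (h g * Real.exp (-B g g) -
            2 * t * (B g (L g) * h g * Real.exp (-B g g)) -
            t ^ 2 * (B (L g) (L g) * h g * Real.exp (-B g g))) ∂μ := by
          rw [integral_const_mul, integral_sub (by exact h_sub) (h_int₂.const_mul _),
            integral_sub h_int (h_int₁.const_mul _), integral_const_mul, integral_const_mul]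
      _ ≤ LinearMap.det (1 + t • L) * ∫ g, h ((1 + t • L) g) *
            Real.exp (-B ((1 + t • L) g) ((1 + t • L) g)) ∂μ := by
          refine mul_le_mul_of_nonneg_left (integral_mono
            ((h_sub.sub (h_int₂.const_mul _)).const_mul _)
            (integrable_comp_of_det_ne_zero ht_det.ne' h_int) ?_) ht_det.le
          exact mul_sub_le_mul_exp_neg_comp hB hh₀ hhL ht
      _ = J₀ := by
          rw [← abs_of_pos ht_det]
          exact (integral_eq_abs_det_mul_integral_comp μ (fun g => h g * Real.exp (-B g g))
            ht_det.ne').symm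
      _ = φ 0 := by simp [φ]
  linarith [h_max.hasDerivAt_eq_zero (hasDerivAt_det_mul_rpow_mul_quadratic L k J₀ J₁ J₂)]

theorem integral_bilinForm_mul_truncPow_one_sub (hB : B.IsSymm) (hB_pos : ∀ g ≠ 0, 0 < B g g)
    (hL : ∀ g, 0 ≤ B g (L g)) (hh : Continuous h) (hh₀ : ∀ g, 0 ≤ h g) (hm : 0 ≤ m)
    (hhm : ∀ a : ℝ, 0 < a → ∀ g, h (a • g) = a ^ m * h g)
    (hhL : ∀ t : ℝ, 0 < 1 + t → ∀ g, h (g + t • L g) = (1 + t) ^ k * h g) (hc : -1 < c) :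
    (c + (Module.finrank ℝ E + m) / 2 + 1) *
        ∫ g, B g (L g) * h g * truncPow c (1 - B g g) ∂μ =
      (LinearMap.trace ℝ E L + k) / 2 * ∫ g, h g * truncPow c (1 - B g g) ∂μ := by
  have hL_cont : Continuous L := L.continuous_of_finiteDimensional
  have h_form : Measurable fun g => B g g := by fun_prop
  have h_add_two (p : E → ℝ) (hp : ∀ (a : ℝ) g, p (a • g) = a ^ 2 * p g) (a : ℝ) (ha : 0 < a)
      (g : E) : p (a • g) * h (a • g) = a ^ (m + 2) * (p g * h g) := by
    rw [hp, hhm a ha, Real.rpow_add ha, Real.rpow_two]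
    ring
  have h_deg₁ := h_add_two (fun g => B g (L g)) fun a g => by
    simp only [map_smul, LinearMap.smul_apply, smul_eq_mul]
    ring
  have h_deg₂ := h_add_two (fun g => B (L g) (L g)) fun a g => by
    rw [map_smul, bilinForm_smul_self]
  have h_gauss := two_mul_integral_bilinForm_mul_exp_neg μ hB hh₀ hhL
    (integrable_mul_exp_neg μ hB_pos hh hh₀ hm hhm)
    (integrable_mul_exp_neg μ hB_pos (by fun_prop) (fun g => mul_nonneg (hL g) (hh₀ g))
      (by positivity) h_deg₁)
    (integrable_mul_exp_neg μ hB_pos (by fun_prop)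
      (fun g => mul_nonneg (bilinForm_self_nonneg hB_pos _) (hh₀ g)) (by positivity) h_deg₂)
  have h_ball := gamma_mul_integral_mul_exp_neg μ hh.measurable h_form hh₀
    (bilinForm_self_nonneg hB_pos) hc hm hhm (bilinForm_smul_self B)
  have h_ball₁ := gamma_mul_integral_mul_exp_neg μ (h := fun g => B g (L g) * h g)
    (by fun_prop) h_form (fun g => mul_nonneg (hL g) (hh₀ g)) (bilinForm_self_nonneg hB_pos) hc
    (by positivity) h_deg₁ (bilinForm_smul_self B)
  have hx : 0 < c + (Module.finrank ℝ E + m) / 2 + 1 := by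
    have : (0 : ℝ) ≤ (Module.finrank ℝ E + m) / 2 := by positivity
    linarith
  rw [show c + (Module.finrank ℝ E + (m + 2)) / 2 + 1 =
    c + (Module.finrank ℝ E + m) / 2 + 1 + 1 by ring, Real.Gamma_add_one hx.ne'] at h_ball₁
  refine mul_left_cancel₀ (Real.Gamma_pos_of_pos hx).ne' ?_
  linear_combination (-h_ball₁) + (LinearMap.trace ℝ E L + k) / 2 * h_ball +
    Real.Gamma (c + 1) / 2 * h_gauss

end PositiveDefiniteForm

end Haar

section Quaternionic

/-- The complex matrix of a rectangular quaternion matrix, in the `2 × 2` block form that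
`quatMatrix` uses for square ones; a quaternion is stored as its pair `(z, w)`. -/
noncomputable def quatBlock {α β : Type*} (v : α → β → ℂ × ℂ) :
    Matrix (α × Fin 2) (β × Fin 2) ℂ :=
  Matrix.of fun a b =>
    if a.2 = 0 then (if b.2 = 0 then (v a.1 b.1).1 else (v a.1 b.1).2)
    else (if b.2 = 0 then -(starRingEnd ℂ) ((v a.1 b.1).2) else (starRingEnd ℂ) ((v a.1 b.1).1))

lemma quatMatrix_eq_quatBlock (n : ℕ) (x : Fin n → Fin n → ℂ × ℂ) :
    quatMatrix n x = quatBlock x := rfl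

/-- A complex matrix in `2 × 2` blocks is the matrix of a quaternion matrix. -/
def IsQuat {α β : Type*} (M : Matrix (α × Fin 2) (β × Fin 2) ℂ) : Prop :=
  ∀ a b, M (a, 1) (b, 1) = star (M (a, 0) (b, 0)) ∧ M (a, 1) (b, 0) = -star (M (a, 0) (b, 1))

/-- Conjugation by the quaternionic structure of the two copies of `ℂ²`; its fixed points are the
quaternion matrices. -/
noncomputable def quatConj {α β : Type*} (M : Matrix (α × Fin 2) (β × Fin 2) ℂ) :
    Matrix (α × Fin 2) (β × Fin 2) ℂ :=
  Matrix.of fun a b => (-1) ^ (a.2 : ℕ) * (-1) ^ (b.2 : ℕ) * star (M (a.1, a.2 + 1) (b.1, b.2 + 1))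

variable {α β γ : Type*}

lemma isQuat_iff_quatConj_eq {M : Matrix (α × Fin 2) (β × Fin 2) ℂ} :
    IsQuat M ↔ quatConj M = M := by
  constructor
  · intro hM
    ext ⟨a, e⟩ ⟨b, f⟩
    fin_cases e <;> fin_cases f <;> simp [quatConj, hM a b]
  · intro hM a b
    constructor
    · conv_lhs => rw [← hM]
      simp [quatConj]
    · conv_lhs => rw [← hM]
      simp [quatConj]

lemma quatConj_mul [Fintype β] (M : Matrix (α × Fin 2) (β × Fin 2) ℂ)
    (N : Matrix (β × Fin 2) (γ × Fin 2) ℂ) : quatConj (M * N) = quatConj M * quatConj N := by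
  ext ⟨a, e⟩ ⟨b, f⟩
  simp only [quatConj, Matrix.mul_apply, Matrix.of_apply, Fintype.sum_prod_type, Fin.sum_univ_two,
    star_sum, Finset.mul_sum]
  refine Finset.sum_congr rfl fun c _ => ?_
  simp only [star_add, star_mul', RCLike.star_def, Fin.coe_ofNat_eq_mod, Nat.zero_mod, pow_zero,
    mul_one, zero_add, one_mul, Nat.mod_succ, pow_one, mul_neg, Fin.reduceAdd, neg_mul, neg_neg,
    Fin.isValue]
  ring

lemma isQuat_quatBlock (v : α → β → ℂ × ℂ) : IsQuat (quatBlock v) := fun a b => by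
  simp [quatBlock]

namespace IsQuat

lemma one [DecidableEq α] : IsQuat (1 : Matrix (α × Fin 2) (α × Fin 2) ℂ) := fun a b => by
  simp [Matrix.one_apply, apply_ite]

lemma add_ofReal_smul_one [DecidableEq α] {M : Matrix (α × Fin 2) (α × Fin 2) ℂ} (hM : IsQuat M)
    (t : ℝ) : IsQuat (M + (t : ℂ) • 1) := fun a b => by
  rcases eq_or_ne a b with rfl | hab
  · simp [hM a a]
  · simp [hM a b, hab]

section Algebra

variable {M N : Matrix (α × Fin 2) (β × Fin 2) ℂ}

lemma conjTranspose (hM : IsQuat M) : IsQuat Mᴴ := fun b a => by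
  simp [Matrix.conjTranspose_apply, hM a b]

lemma sub (hM : IsQuat M) (hN : IsQuat N) : IsQuat (M - N) := fun a b => by
  simp [hM a b, hN a b, sub_eq_add_neg, add_comm]

lemma sum {ι : Type*} {s : Finset ι} {M : ι → Matrix (α × Fin 2) (β × Fin 2) ℂ}
    (hM : ∀ i ∈ s, IsQuat (M i)) : IsQuat (∑ i ∈ s, M i) := fun a b => by
  simp_rw [Matrix.sum_apply, star_sum, ← Finset.sum_neg_distrib]
  exact ⟨Finset.sum_congr rfl fun i hi => (hM i hi a b).1,
    Finset.sum_congr rfl fun i hi => (hM i hi a b).2⟩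

lemma submatrix {α' β' : Type*} (hM : IsQuat M) (f : α' → α) (g : β' → β) :
    IsQuat (M.submatrix (Prod.map f id) (Prod.map g id)) :=
  fun a b => hM (f a) (g b)

lemma mul [Fintype β] {N : Matrix (β × Fin 2) (γ × Fin 2) ℂ} (hM : IsQuat M) (hN : IsQuat N) :
    IsQuat (M * N) := by
  rw [isQuat_iff_quatConj_eq] at *
  rw [quatConj_mul, hM, hN]

end Algebra

section Square

variable [Fintype α] [DecidableEq α] {M : Matrix (α × Fin 2) (α × Fin 2) ℂ}

lemma inv (hM : IsQuat M) (hdet : M.det ≠ 0) : IsQuat M⁻¹ := by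
  have h_left : quatConj M⁻¹ * M = 1 := by
    have h_conj := quatConj_mul M⁻¹ M
    rwa [Matrix.nonsing_inv_mul _ hdet.isUnit, isQuat_iff_quatConj_eq.1 hM,
      isQuat_iff_quatConj_eq.1 one, eq_comm] at h_conj
  exact isQuat_iff_quatConj_eq.2 (Matrix.inv_eq_left_inv h_left).symm

end Square

section Unit

variable {D : Matrix (Unit × Fin 2) (Unit × Fin 2) ℂ}

lemma eq_smul_one (hD : IsQuat D) (hD_herm : D.IsHermitian) :
    D = ((D ((), 0) ((), 0)).re : ℂ) • 1 := by
  obtain ⟨h_diag, h_off⟩ := hD () ()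
  have h_real : ((D ((), 0) ((), 0)).re : ℂ) = D ((), 0) ((), 0) := hD_herm.coe_re_apply_self _
  have h_conj : star (D ((), 0) ((), 0)) = D ((), 0) ((), 0) := hD_herm.apply _ _
  have h_zero : D ((), 0) ((), 1) = 0 := by
    have h_symm := hD_herm.apply ((), 0) ((), 1)
    rw [h_off, star_neg, star_star] at h_symm
    exact self_eq_neg.1 h_symm.symm
  ext ⟨⟨⟩, e⟩ ⟨⟨⟩, f⟩
  fin_cases e <;> fin_cases f <;> simp [h_zero, h_diag, h_off, h_real, h_conj]

lemma det_unit (hD : IsQuat D) : D.det =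
    ((Complex.normSq (D ((), 0) ((), 0)) + Complex.normSq (D ((), 0) ((), 1)) : ℝ) : ℂ) := by
  rw [← Matrix.det_submatrix_equiv_self (Equiv.punitProd (Fin 2)).symm, Matrix.det_fin_two]
  simp [hD () (), Complex.mul_conj]

lemma det_unit_add_smul_one_ne_zero (hD : IsQuat D) (hdet : D.det = 0) {t : ℝ} (ht : t ≠ 0) :
    (D + (t : ℂ) • 1).det ≠ 0 := by
  rw [hD.det_unit, Complex.ofReal_eq_zero, add_eq_zero_iff_of_nonneg (Complex.normSq_nonneg _)
    (Complex.normSq_nonneg _), Complex.normSq_eq_zero, Complex.normSq_eq_zero] at hdet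
  rw [(hD.add_ofReal_smul_one t).det_unit]
  simpa [hdet] using ht

end Unit

section DetNonneg

lemma det_fromBlocks_nonneg [Fintype α] [DecidableEq α]
    {A : Matrix (α × Fin 2) (α × Fin 2) ℂ} {B : Matrix (α × Fin 2) (Unit × Fin 2) ℂ}
    {C : Matrix (Unit × Fin 2) (α × Fin 2) ℂ} {D : Matrix (Unit × Fin 2) (Unit × Fin 2) ℂ}
    (hA : IsQuat A) (hB : IsQuat B) (hC : IsQuat C) (hD : IsQuat D)
    (ih : ∀ M : Matrix (α × Fin 2) (α × Fin 2) ℂ, IsQuat M → 0 ≤ M.det) (hdet : D.det ≠ 0) :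
    0 ≤ (Matrix.fromBlocks A B C D).det := by
  have := Matrix.invertibleOfIsUnitDet D hdet.isUnit
  rw [Matrix.det_fromBlocks₂₂, Matrix.invOf_eq_nonsing_inv]
  refine mul_nonneg ?_ (ih _ (hA.sub ((hB.mul (hD.inv hdet)).mul hC)))
  rw [hD.det_unit, Complex.zero_le_real]
  exact add_nonneg (Complex.normSq_nonneg _) (Complex.normSq_nonneg _)

/- When the last diagonal quaternion is singular the Schur complement is unavailable; adding a small
real multiple of the identity repairs this. -/
lemma det_option_nonneg [Fintype α] [DecidableEq α]
    (ih : ∀ M : Matrix (α × Fin 2) (α × Fin 2) ℂ, IsQuat M → 0 ≤ M.det)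
    {M : Matrix (Option α × Fin 2) (Option α × Fin 2) ℂ} (hM : IsQuat M) : 0 ≤ M.det := by
  let corner (M : Matrix (Option α × Fin 2) (Option α × Fin 2) ℂ) :
      Matrix (Unit × Fin 2) (Unit × Fin 2) ℂ :=
    M.submatrix (Prod.map (fun _ => none) id) (Prod.map (fun _ => none) id)
  have h_regular (N : Matrix (Option α × Fin 2) (Option α × Fin 2) ℂ) (hN : IsQuat N)
      (hdet : (corner N).det ≠ 0) : 0 ≤ N.det := by
    let e : (α × Fin 2) ⊕ (Unit × Fin 2) ≃ Option α × Fin 2 :=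
      (Equiv.sumProdDistrib α Unit (Fin 2)).symm.trans
        (Equiv.prodCongr (Equiv.optionEquivSumPUnit α).symm (Equiv.refl (Fin 2)))
    rw [← Matrix.det_submatrix_equiv_self e, ← Matrix.fromBlocks_toBlocks (N.submatrix e e)]
    exact det_fromBlocks_nonneg (hN.submatrix some some) (hN.submatrix some _)
      (hN.submatrix _ some) (hN.submatrix _ _) ih hdet
  by_cases hdet : (corner M).det = 0
  swap
  · exact h_regular M hM hdet
  have h_cont : Continuous fun t : ℝ => (M + (t : ℂ) • 1).det := by fun_prop
  have h_lim := (h_cont.tendsto 0).mono_left (nhdsWithin_le_nhds (s := {0}ᶜ))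
  simp only [Complex.ofReal_zero, zero_smul, add_zero] at h_lim
  refine ge_of_tendsto h_lim ?_
  filter_upwards [self_mem_nhdsWithin] with t ht
  refine h_regular _ (hM.add_ofReal_smul_one t) ?_
  have h_corner : corner (M + (t : ℂ) • 1) = corner M + (t : ℂ) • 1 := by
    ext ⟨⟨⟩, e⟩ ⟨⟨⟩, f⟩
    simp [corner, Matrix.one_apply]
  rw [h_corner]
  exact (hM.submatrix _ _).det_unit_add_smul_one_ne_zero hdet ht

lemma det_nonneg [Fintype α] [DecidableEq α] {M : Matrix (α × Fin 2) (α × Fin 2) ℂ}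
    (hM : IsQuat M) : 0 ≤ M.det := by
  suffices ∀ (_ : DecidableEq α) (M : Matrix (α × Fin 2) (α × Fin 2) ℂ), IsQuat M → 0 ≤ M.det
    from this _ M hM
  clear! M
  refine Fintype.induction_empty_option (P := fun α _ => ∀ (_ : DecidableEq α)
    (M : Matrix (α × Fin 2) (α × Fin 2) ℂ), IsQuat M → 0 ≤ M.det) ?_ (by simp) ?_ α
  · intro α β _ e ih _ M hM
    classical
    let _ := Fintype.ofEquiv β e.symm
    rw [← Matrix.det_submatrix_equiv_self (Equiv.prodCongr e (Equiv.refl (Fin 2)))]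
    convert! ih inferInstance _ (hM.submatrix e e)
  · intro α _ ih _ M hM
    classical
    convert! det_option_nonneg (ih inferInstance) hM

end DetNonneg

end IsQuat

end Quaternionic

section SchurComplement

variable {m u : Type*} [Fintype m] [DecidableEq m] [Fintype u] [DecidableEq u]

lemma posSemidef_sub_mul_conjTranspose_iff {X : Matrix m m ℂ} (hX : X.PosDef)
    (a : Matrix m u ℂ) : (X - a * aᴴ).PosSemidef ↔ (1 - aᴴ * X⁻¹ * a).PosSemidef := by
  have := hX.isUnit.invertible
  have : Invertible (1 : Matrix u u ℂ) := invertibleOne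
  rw [← PosDef.fromBlocks₁₁ a 1 hX, PosDef.fromBlocks₂₂ X a PosDef.one]
  simp

lemma det_sub_mul_conjTranspose {X : Matrix m m ℂ} (hX : X.det ≠ 0) (a : Matrix m u ℂ) :
    (X - a * aᴴ).det = X.det * (1 - aᴴ * X⁻¹ * a).det := by
  have := invertibleOfIsUnitDet X hX.isUnit
  rw [← invOf_eq_nonsing_inv, ← det_fromBlocks₁₁, det_fromBlocks_one₂₂]

end SchurComplement

section RowForms

variable {β : Type*}

/-- A quaternion row vector as a complex `2`-row matrix. -/
noncomputable abbrev quatRow (y : β → ℂ × ℂ) : Matrix (Unit × Fin 2) (β × Fin 2) ℂ :=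
  quatBlock fun _ => y

/-- A quaternion column vector as a complex `2`-column matrix. -/
noncomputable abbrev quatCol (y : β → ℂ × ℂ) : Matrix (β × Fin 2) (Unit × Fin 2) ℂ :=
  quatBlock fun i _ => y i

/-- The first row of `quatRow y`, which already determines `y`, as a linear equivalence. -/
noncomputable def quatVec : (β → ℂ × ℂ) ≃ₗ[ℂ] (β × Fin 2 → ℂ) where
  toFun y := quatRow y ((), 0)
  invFun v k := (v (k, 0), v (k, 1))
  map_add' y z := by ext ⟨k, e⟩; fin_cases e <;> simp [quatBlock]
  map_smul' c y := by ext ⟨k, e⟩; fin_cases e <;> simp [quatBlock]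
  left_inv y := by ext k <;> simp [quatBlock]
  right_inv v := by ext ⟨k, e⟩; fin_cases e <;> simp [quatBlock]

lemma quatVec_real_smul (u : ℝ) (y : β → ℂ × ℂ) : quatVec (u • y) = (u : ℂ) • quatVec y := by
  rw [← map_smul, Complex.coe_smul]

variable [Fintype β]

/-- The real bilinear form `Re (y H w†)` on quaternion row vectors attached to a complex matrix,
`y` and `w` being represented by their first complex rows. -/
noncomputable def quatBilin (H : Matrix (β × Fin 2) (β × Fin 2) ℂ) :
    LinearMap.BilinForm ℝ (β → ℂ × ℂ) :=
  LinearMap.mk₂ ℝ (fun y w => (quatVec y ⬝ᵥ H *ᵥ star (quatVec w)).re)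
    (fun y y' w => by simp [add_dotProduct])
    (fun u y w => by simp [quatVec_real_smul, smul_dotProduct])
    (fun y w w' => by simp [mulVec_add, dotProduct_add])
    (fun u y w => by simp [quatVec_real_smul, mulVec_smul, dotProduct_smul])

lemma quatBilin_apply (H : Matrix (β × Fin 2) (β × Fin 2) ℂ) (y w : β → ℂ × ℂ) :
    quatBilin H y w = (quatVec y ⬝ᵥ H *ᵥ star (quatVec w)).re := rfl

lemma quatBilin_self (H : Matrix (β × Fin 2) (β × Fin 2) ℂ) (y : β → ℂ × ℂ) :
    quatBilin H y y = ((quatRow y * H * (quatRow y)ᴴ) ((), 0) ((), 0)).re := by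
  rw [Matrix.mul_assoc, quatBilin_apply]
  rfl

lemma quatRow_mul_mul_conjTranspose {H : Matrix (β × Fin 2) (β × Fin 2) ℂ} (hH : IsQuat H)
    (hH_herm : H.IsHermitian) (y : β → ℂ × ℂ) :
    quatRow y * H * (quatRow y)ᴴ = (quatBilin H y y : ℂ) • 1 := by
  rw [quatBilin_self]
  exact (((isQuat_quatBlock _).mul hH).mul (isQuat_quatBlock _).conjTranspose).eq_smul_one
    (isHermitian_mul_mul_conjTranspose _ hH_herm)

lemma quatBilin_isSymm {H : Matrix (β × Fin 2) (β × Fin 2) ℂ} (hH : H.IsHermitian) :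
    (quatBilin H).IsSymm := by
  refine ⟨fun y w => ?_⟩
  rw [quatBilin_apply, quatBilin_apply, ← Complex.conj_re, starRingEnd_apply,
    ← star_dotProduct_star, star_mulVec, hH.eq, star_star, ← dotProduct_mulVec]

lemma quatBilin_self_nonneg {H : Matrix (β × Fin 2) (β × Fin 2) ℂ} (hH : H.PosSemidef)
    (y : β → ℂ × ℂ) : 0 ≤ quatBilin H y y := by
  have h := hH.dotProduct_mulVec_nonneg (star (quatVec y))
  rw [star_star] at h
  exact (Complex.le_def.1 h).1

lemma quatBilin_self_pos {H : Matrix (β × Fin 2) (β × Fin 2) ℂ} (hH : H.PosDef)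
    {y : β → ℂ × ℂ} (hy : y ≠ 0) : 0 < quatBilin H y y := by
  have h := hH.dotProduct_mulVec_pos (x := star (quatVec y)) (by simpa using hy)
  rw [star_star] at h
  exact (Complex.lt_def.1 h).1

/-- Right multiplication of quaternion row vectors by a matrix, `y ↦ y K` on first complex rows. -/
noncomputable def quatMulRight (K : Matrix (β × Fin 2) (β × Fin 2) ℂ) :
    (β → ℂ × ℂ) →ₗ[ℂ] (β → ℂ × ℂ) :=
  quatVec.symm.toLinearMap ∘ₗ K.vecMulLinear ∘ₗ quatVec.toLinearMap

lemma quatVec_quatMulRight (K : Matrix (β × Fin 2) (β × Fin 2) ℂ) (y : β → ℂ × ℂ) :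
    quatVec (quatMulRight K y) = quatVec y ᵥ* K := by
  simp [quatMulRight]

lemma quatBilin_quatMulRight_left (H K : Matrix (β × Fin 2) (β × Fin 2) ℂ) (y w : β → ℂ × ℂ) :
    quatBilin H (quatMulRight K y) w = quatBilin (K * H) y w := by
  rw [quatBilin_apply, quatBilin_apply, quatVec_quatMulRight, ← dotProduct_mulVec, mulVec_mulVec]

lemma quatBilin_quatMulRight_right (H K : Matrix (β × Fin 2) (β × Fin 2) ℂ) (y w : β → ℂ × ℂ) :
    quatBilin H y (quatMulRight K w) = quatBilin (H * Kᴴ) y w := by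
  rw [quatBilin_apply, quatBilin_apply, quatVec_quatMulRight, star_vecMul, mulVec_mulVec]

lemma trace_quatMulRight (K : Matrix (β × Fin 2) (β × Fin 2) ℂ) :
    LinearMap.trace ℂ _ (quatMulRight K) = K.trace := by
  classical
  have h_conj := LinearMap.trace_conj' K.vecMulLinear (quatVec (β := β)).symm
  rw [LinearEquiv.conj_apply, LinearEquiv.symm_symm, LinearMap.comp_assoc] at h_conj
  rw [quatMulRight, h_conj, ← mulVecLin_transpose, ← Matrix.toLin'_apply', Matrix.trace_toLin'_eq,
    trace_transpose]

end RowForms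

section Volume

variable {α β : Type*} [Fintype α] [DecidableEq α] [Fintype β]

/-- The square root of the Gram determinant of the rows of a quaternion matrix. This is the square
of their quaternionic volume, since every quaternion contributes a `2 × 2` block. -/
noncomputable def quatVol (v : α → β → ℂ × ℂ) : ℝ :=
  √((quatBlock v * (quatBlock v)ᴴ).det.re)

lemma quatVol_nonneg (v : α → β → ℂ × ℂ) : 0 ≤ quatVol v := Real.sqrt_nonneg _

lemma det_quatBlock_mul_conjTranspose (v : α → β → ℂ × ℂ) :
    (quatBlock v * (quatBlock v)ᴴ).det = (quatVol v : ℂ) ^ 2 := by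
  have h_nonneg := (posSemidef_self_mul_conjTranspose (quatBlock v)).det_nonneg
  rw [← Complex.ofReal_pow, quatVol, Real.sq_sqrt (Complex.le_def.1 h_nonneg).1]
  exact Complex.eq_re_of_ofReal_le h_nonneg

lemma quatVol_eq_of_det_eq {v : α → β → ℂ × ℂ} {r : ℝ} (hr : 0 ≤ r)
    (h : (quatBlock v * (quatBlock v)ᴴ).det = (r : ℂ) ^ 2) : quatVol v = r := by
  rw [quatVol, h, ← Complex.ofReal_pow, Complex.ofReal_re, Real.sqrt_sq hr]

lemma quatVol_ne_zero_iff {v : α → β → ℂ × ℂ} :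
    quatVol v ≠ 0 ↔ (quatBlock v * (quatBlock v)ᴴ).PosDef := by
  rw [(posSemidef_self_mul_conjTranspose (quatBlock v)).posDef_iff_det_ne_zero,
    det_quatBlock_mul_conjTranspose]
  simp

lemma quatVol_submatrix_equiv {α' β' : Type*} [Fintype α'] [DecidableEq α'] [Fintype β']
    (e : α' ≃ α) (f : β' ≃ β) (v : α → β → ℂ × ℂ) :
    quatVol (fun i k => v (e i) (f k)) = quatVol v := by
  refine quatVol_eq_of_det_eq (quatVol_nonneg v) ?_
  let e' := Equiv.prodCongr e (Equiv.refl (Fin 2))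
  let f' := Equiv.prodCongr f (Equiv.refl (Fin 2))
  have h_submatrix : quatBlock (fun i k => v (e i) (f k)) = (quatBlock v).submatrix e' f' := rfl
  rw [← det_quatBlock_mul_conjTranspose, h_submatrix, conjTranspose_submatrix, submatrix_mul_equiv,
    det_submatrix_equiv_self]

lemma quatVol_square (v : α → α → ℂ × ℂ) : (quatVol v : ℂ) = (quatBlock v).det := by
  have h_nonneg := (isQuat_quatBlock v).det_nonneg
  have h_real : (quatBlock v).det = ((quatBlock v).det.re : ℂ) :=
    Complex.eq_re_of_ofReal_le h_nonneg
  rw [quatVol_eq_of_det_eq (Complex.le_def.1 h_nonneg).1, ← h_real]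
  rw [det_mul, det_conjTranspose, h_real, Complex.star_def, Complex.conj_ofReal, sq,
    Complex.ofReal_re]

end Volume

section RowCompl

variable {m k : Type*} [Fintype m] [DecidableEq m] [Fintype k] [DecidableEq k]

/-- The orthogonal projection onto the complement of the rows of a matrix of full row rank. -/
noncomputable def rowCompl (A : Matrix m k ℂ) : Matrix k k ℂ := 1 - Aᴴ * (A * Aᴴ)⁻¹ * A

lemma rowCompl_isHermitian (A : Matrix m k ℂ) : (rowCompl A).IsHermitian :=
  isHermitian_one.sub
    (isHermitian_conjTranspose_mul_mul _ (isHermitian_mul_conjTranspose_self A).inv)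

variable {A : Matrix m k ℂ}

lemma mul_rowCompl (hA : (A * Aᴴ).det ≠ 0) : A * rowCompl A = 0 := by
  rw [rowCompl, Matrix.mul_sub, ← Matrix.mul_assoc, ← Matrix.mul_assoc,
    mul_nonsing_inv _ hA.isUnit, Matrix.mul_one, Matrix.one_mul, sub_self]

lemma rowCompl_mul_of_mul_eq_zero {l : Type*} {B : Matrix k l ℂ} (hB : A * B = 0) :
    rowCompl A * B = B := by
  rw [rowCompl, Matrix.sub_mul, Matrix.mul_assoc, hB, Matrix.one_mul, Matrix.mul_zero, sub_zero]

lemma rowCompl_mul_self (hA : (A * Aᴴ).det ≠ 0) : rowCompl A * rowCompl A = rowCompl A :=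
  rowCompl_mul_of_mul_eq_zero (mul_rowCompl hA)

lemma rowCompl_posSemidef (hA : (A * Aᴴ).det ≠ 0) : (rowCompl A).PosSemidef := by
  have h := posSemidef_self_mul_conjTranspose (rowCompl A)
  rwa [(rowCompl_isHermitian A).eq, rowCompl_mul_self hA] at h

lemma trace_rowCompl (hA : (A * Aᴴ).det ≠ 0) :
    (rowCompl A).trace = Fintype.card k - Fintype.card m := by
  rw [rowCompl, trace_sub, Matrix.mul_assoc, trace_mul_comm, Matrix.mul_assoc,
    nonsing_inv_mul _ hA.isUnit, trace_one, trace_one]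

end RowCompl

section VolumeAddRow

variable {α β : Type*} [Fintype β]

lemma quatBlock_mul_conjTranspose_elim (v : α → β → ℂ × ℂ) (y : β → ℂ × ℂ) :
    (quatBlock (Sum.elim v fun _ : Unit => y) *
      (quatBlock (Sum.elim v fun _ : Unit => y))ᴴ).submatrix
        (Equiv.sumProdDistrib α Unit (Fin 2)).symm (Equiv.sumProdDistrib α Unit (Fin 2)).symm =
    fromBlocks (quatBlock v * (quatBlock v)ᴴ) (quatBlock v * (quatRow y)ᴴ)
      (quatRow y * (quatBlock v)ᴴ) (quatRow y * (quatRow y)ᴴ) := by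
  ext (a | a) (b | b) <;> rfl

variable [Fintype α] [DecidableEq α] {v : α → β → ℂ × ℂ}

lemma isQuat_rowCompl [DecidableEq β] (hv : quatVol v ≠ 0) : IsQuat (rowCompl (quatBlock v)) := by
  have h := isQuat_quatBlock v
  have h_inv := (h.mul h.conjTranspose).inv (quatVol_ne_zero_iff.1 hv).det_pos.ne'
  exact IsQuat.one.sub ((h.conjTranspose.mul h_inv).mul h)

lemma quatVol_elim [DecidableEq β] (hv : quatVol v ≠ 0) (y : β → ℂ × ℂ) :
    quatVol (Sum.elim v fun _ : Unit => y) =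
      quatVol v * quatBilin (rowCompl (quatBlock v)) y y := by
  have hdet := (quatVol_ne_zero_iff.1 hv).det_pos.ne'
  refine quatVol_eq_of_det_eq
    (mul_nonneg (quatVol_nonneg v) (quatBilin_self_nonneg (rowCompl_posSemidef hdet) y)) ?_
  have := invertibleOfIsUnitDet _ hdet.isUnit
  have h_schur : quatRow y * (quatRow y)ᴴ -
      quatRow y * (quatBlock v)ᴴ * (quatBlock v * (quatBlock v)ᴴ)⁻¹ * (quatBlock v * (quatRow y)ᴴ) =
      quatRow y * rowCompl (quatBlock v) * (quatRow y)ᴴ := by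
    simp only [rowCompl, Matrix.mul_sub, Matrix.sub_mul, Matrix.mul_one, Matrix.mul_assoc]
  rw [← det_submatrix_equiv_self (Equiv.sumProdDistrib α Unit (Fin 2)).symm,
    quatBlock_mul_conjTranspose_elim, det_fromBlocks₁₁, invOf_eq_nonsing_inv, h_schur,
    quatRow_mul_mul_conjTranspose (isQuat_rowCompl hv) (rowCompl_isHermitian _),
    det_quatBlock_mul_conjTranspose]
  simp [mul_pow]

lemma quatVol_elim_eq_zero (hv : quatVol v = 0) (y : β → ℂ × ℂ) :
    quatVol (Sum.elim v fun _ : Unit => y) = 0 := by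
  by_contra h
  refine quatVol_ne_zero_iff.2 ?_ hv
  exact (quatVol_ne_zero_iff.1 h).submatrix (e := Prod.map Sum.inl id)
    (Sum.inl_injective.prodMap Function.injective_id)

end VolumeAddRow

section Rows

variable {ι β : Type*} [DecidableEq ι] [Fintype β]

lemma quatVol_rows_insert_eq_elim (x : ι → β → ℂ × ℂ) {S : Finset ι} {t : ι} (ht : t ∉ S) :
    quatVol (fun i : ↥(insert t S) => x i) =
      quatVol (Sum.elim (fun i : S => x i) fun _ : Unit => x t) := by
  let e := (Finset.subtypeInsertEquivOption ht).trans (Equiv.optionEquivSumPUnit _)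
  rw [← quatVol_submatrix_equiv e (Equiv.refl β)]
  congr 1
  ext1 ⟨i, hi⟩
  rcases eq_or_ne i t with rfl | h
  · simp [e, Finset.subtypeInsertEquivOption]
  · simp [e, Finset.subtypeInsertEquivOption, h]

lemma quatVol_rows_insert [DecidableEq β] (x : ι → β → ℂ × ℂ) {S : Finset ι} {t : ι} (ht : t ∉ S)
    (hS : quatVol (fun i : S => x i) ≠ 0) :
    quatVol (fun i : ↥(insert t S) => x i) = quatVol (fun i : S => x i) *
      quatBilin (rowCompl (quatBlock fun i : S => x i)) (x t) (x t) := by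
  rw [quatVol_rows_insert_eq_elim x ht, quatVol_elim hS]

lemma quatVol_rows_insert_eq_zero (x : ι → β → ℂ × ℂ) {S : Finset ι} {t : ι} (ht : t ∉ S)
    (hS : quatVol (fun i : S => x i) = 0) : quatVol (fun i : ↥(insert t S) => x i) = 0 := by
  rw [quatVol_rows_insert_eq_elim x ht, quatVol_elim_eq_zero hS]

end Rows

section CauchyBinet

lemma sum_powersetCard_succ_sum_erase {κ M : Type*} [Fintype κ] [DecidableEq κ] [AddCommMonoid M]
    (j : ℕ) (f : Finset κ → κ → M) :
    ∑ S ∈ Finset.powersetCard (j + 1) Finset.univ, ∑ t ∈ S, f (S.erase t) t =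
      ∑ S ∈ Finset.powersetCard j Finset.univ, ∑ t ∈ Sᶜ, f S t := by
  rw [Finset.sum_sigma', Finset.sum_sigma']
  refine Finset.sum_bij' (fun p _ => ⟨p.1.erase p.2, p.2⟩) (fun p _ => ⟨insert p.2 p.1, p.2⟩)
    ?_ ?_ ?_ ?_ fun _ _ => rfl
  · rintro ⟨S, t⟩ h
    simp only [Finset.mem_sigma, Finset.mem_powersetCard_univ] at h
    simp [Finset.card_erase_of_mem h.2, h.1]
  · rintro ⟨S, t⟩ h
    simp only [Finset.mem_sigma, Finset.mem_powersetCard_univ, Finset.mem_compl] at h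
    simp [Finset.card_insert_of_notMem h.2, h.1]
  · rintro ⟨S, t⟩ h
    simp only [Finset.mem_sigma] at h
    simp [Finset.insert_erase h.2]
  · rintro ⟨S, t⟩ h
    simp only [Finset.mem_sigma, Finset.mem_compl] at h
    simp [Finset.erase_insert h.2]

variable {α κ : Type*}

lemma quatBlock_columns_mul_conjTranspose (v : α → κ → ℂ × ℂ) (T : Finset κ) :
    quatBlock (fun i (k : T) => v i k) * (quatBlock fun i (k : T) => v i k)ᴴ =
      ∑ k ∈ T, quatCol (fun i => v i k) * (quatCol fun i => v i k)ᴴ := by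
  ext a b
  rw [Matrix.sum_apply, ← Finset.sum_coe_sort T]
  simp [Matrix.mul_apply, Fintype.sum_prod_type, quatBlock]

variable [Fintype α] [DecidableEq α]

lemma quatVol_eq_mul_of_gram_eq_sub {β γ : Type*} [Fintype β] [Fintype γ] {v : α → β → ℂ × ℂ}
    {w : α → γ → ℂ × ℂ} {a : α → ℂ × ℂ} (hv : quatVol v ≠ 0)
    (h : quatBlock w * (quatBlock w)ᴴ = quatBlock v * (quatBlock v)ᴴ - quatCol a * (quatCol a)ᴴ) :
    (quatVol w : ℂ) = quatVol v * (1 -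
      ((quatCol a)ᴴ * (quatBlock v * (quatBlock v)ᴴ)⁻¹ * quatCol a).trace / 2) := by
  set X := quatBlock v * (quatBlock v)ᴴ with hX
  have hX_pos : X.PosDef := quatVol_ne_zero_iff.1 hv
  have hX_inv : IsQuat X⁻¹ :=
    ((isQuat_quatBlock v).mul (isQuat_quatBlock v).conjTranspose).inv hX_pos.det_pos.ne'
  obtain ⟨c, hc⟩ : ∃ c : ℝ, (quatCol a)ᴴ * X⁻¹ * quatCol a = (c : ℂ) • 1 :=
    ⟨_, (((isQuat_quatBlock _).conjTranspose.mul hX_inv).mul (isQuat_quatBlock _)).eq_smul_one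
      (isHermitian_conjTranspose_mul_mul _ hX_pos.isHermitian.inv)⟩
  have h_one_sub : 1 - (quatCol a)ᴴ * X⁻¹ * quatCol a = ((1 - c : ℝ) : ℂ) • 1 := by
    rw [hc, Complex.ofReal_sub, sub_smul, Complex.ofReal_one, one_smul]
  have hc_le : 0 ≤ 1 - c := by
    have h_psd : (X - quatCol a * (quatCol a)ᴴ).PosSemidef :=
      h ▸ posSemidef_self_mul_conjTranspose _
    rw [posSemidef_sub_mul_conjTranspose_iff hX_pos, h_one_sub] at h_psd
    simpa using (Complex.le_def.1 (h_psd.diag_nonneg (i := ((), 0)))).1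
  have h_vol : quatVol w = quatVol v * (1 - c) := by
    refine quatVol_eq_of_det_eq (mul_nonneg (quatVol_nonneg _) hc_le) ?_
    rw [h, det_sub_mul_conjTranspose hX_pos.det_pos.ne', h_one_sub, hX,
      det_quatBlock_mul_conjTranspose]
    simp [mul_pow]
  rw [h_vol, hc, trace_smul, trace_one]
  simp

lemma quatVol_erase_column_eq_zero [DecidableEq κ] (v : α → κ → ℂ × ℂ) (T : Finset κ)
    (hT : quatVol (fun i (k : T) => v i k) = 0) {k : κ} (hk : k ∈ T) :
    quatVol (fun i (l : T.erase k) => v i l) = 0 := by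
  by_contra h
  refine quatVol_ne_zero_iff.2 ?_ hT
  rw [quatBlock_columns_mul_conjTranspose, ← Finset.sum_erase_add T _ hk,
    ← quatBlock_columns_mul_conjTranspose]
  exact (quatVol_ne_zero_iff.1 h).add_posSemidef (posSemidef_self_mul_conjTranspose _)

lemma sum_quatVol_erase_column [DecidableEq κ] (v : α → κ → ℂ × ℂ) (T : Finset κ) :
    ∑ k ∈ T, quatVol (fun i (l : T.erase k) => v i l) =
      ((T.card : ℝ) - Fintype.card α) * quatVol (fun i (l : T) => v i l) := by
  by_cases hT : quatVol (fun i (k : T) => v i k) = 0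
  · rw [hT, mul_zero, Finset.sum_eq_zero fun k hk => quatVol_erase_column_eq_zero v T hT hk]
  set X := quatBlock (fun i (l : T) => v i l) * (quatBlock fun i (l : T) => v i l)ᴴ with hX
  have hX_unit : IsUnit X.det := (quatVol_ne_zero_iff.1 hT).det_pos.ne'.isUnit
  have h_erase (k : κ) (hk : k ∈ T) : (quatVol (fun i (l : T.erase k) => v i l) : ℂ) =
      quatVol (fun i (l : T) => v i l) *
        (1 - ((quatCol fun i => v i k)ᴴ * X⁻¹ * quatCol fun i => v i k).trace / 2) := by
    refine quatVol_eq_mul_of_gram_eq_sub hT ?_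
    rw [quatBlock_columns_mul_conjTranspose, quatBlock_columns_mul_conjTranspose,
      ← Finset.add_sum_erase T _ hk, add_sub_cancel_left]
  have h_trace : ∑ k ∈ T, ((quatCol fun i => v i k)ᴴ * X⁻¹ * quatCol fun i => v i k).trace =
      2 * Fintype.card α := by
    simp_rw [fun k => Matrix.trace_mul_comm ((quatCol fun i => v i k)ᴴ * X⁻¹)
      (quatCol fun i => v i k), ← Matrix.mul_assoc]
    rw [← trace_sum, ← Finset.sum_mul, ← quatBlock_columns_mul_conjTranspose, ← hX,
      mul_nonsing_inv _ hX_unit, trace_one]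
    simp [mul_comm]
  apply Complex.ofReal_injective
  rw [Complex.ofReal_sum, Finset.sum_congr rfl h_erase, ← Finset.mul_sum, Finset.sum_sub_distrib,
    ← Finset.sum_div, h_trace]
  push_cast
  simp only [Finset.sum_const, nsmul_eq_mul, mul_one, ne_eq, OfNat.ofNat_ne_zero, not_false_eq_true,
    mul_div_cancel_left₀]
  ring

variable [Fintype κ]

lemma sum_powersetCard_quatVol_eq_choose_mul (v : α → κ → ℂ × ℂ) (m d : ℕ)
    (hd : d + m = Fintype.card κ) (hα : Fintype.card α ≤ d) :
    ∑ T ∈ Finset.powersetCard d (Finset.univ : Finset κ), quatVol (fun i (k : T) => v i k) =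
      (Fintype.card κ - Fintype.card α).choose m * quatVol v := by
  classical
  induction m generalizing d with
  | zero =>
    have h_univ : quatVol (fun i (k : (Finset.univ : Finset κ)) => v i k) = quatVol v :=
      quatVol_submatrix_equiv (Equiv.refl α) (Equiv.subtypeUnivEquiv Finset.mem_univ) v
    rw [add_zero] at hd
    rw [hd, ← Finset.card_univ (α := κ), Finset.powersetCard_self, Finset.sum_singleton, h_univ,
      Nat.choose_zero_right, Nat.cast_one, one_mul]
  | succ m ih =>
    have h_count : ((d + 1 : ℕ) - Fintype.card α : ℝ) *
        ∑ T ∈ Finset.powersetCard (d + 1) (Finset.univ : Finset κ),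
          quatVol (fun i (k : T) => v i k) =
        (m + 1 : ℕ) *
          ∑ T ∈ Finset.powersetCard d (Finset.univ : Finset κ),
            quatVol (fun i (k : T) => v i k) := by
      have h := sum_powersetCard_succ_sum_erase d
        fun (T : Finset κ) (_ : κ) => quatVol (fun i (k : T) => v i k)
      simp_rw [sum_quatVol_erase_column, Finset.sum_const, nsmul_eq_mul] at h
      rw [Finset.mul_sum, Finset.mul_sum]
      convert h using 2 with T hT T hT
      · rw [(Finset.mem_powersetCard.1 hT).2]
      · rw [Finset.card_compl, (Finset.mem_powersetCard.1 hT).2, ← hd, Nat.add_sub_cancel_left]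
    rw [ih (d + 1) (by omega) (by omega)] at h_count
    have h_choose : ((Fintype.card κ - Fintype.card α).choose (m + 1) : ℝ) * (m + 1 : ℕ) =
        (Fintype.card κ - Fintype.card α).choose m * ((d + 1 : ℕ) - Fintype.card α) := by
      rw [← Nat.cast_sub (by omega)]
      have h := Nat.choose_succ_right_eq (Fintype.card κ - Fintype.card α) m
      rw [show Fintype.card κ - Fintype.card α - m = d + 1 - Fintype.card α by omega] at h
      exact_mod_cast h
    have h_ne : ((m + 1 : ℕ) : ℝ) ≠ 0 := by positivity
    apply mul_left_cancel₀ h_ne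
    linear_combination -h_count - quatVol v * h_choose

/-- A quaternionic Cauchy–Binet formula; unlike the complex one it is linear in the minors, because
`quatVol` is a square root of the Gram determinant. -/
lemma sum_powersetCard_quatVol (v : α → κ → ℂ × ℂ) (h : Fintype.card α ≤ Fintype.card κ) :
    ∑ T ∈ Finset.powersetCard (Fintype.card α) (Finset.univ : Finset κ),
      quatVol (fun i (k : T) => v i k) = quatVol v := by
  simpa using sum_powersetCard_quatVol_eq_choose_mul v (Fintype.card κ - Fintype.card α)
    (Fintype.card α) (by omega) le_rfl

end CauchyBinet

section RowIntegration

lemma trace_restrictScalars_complex {V : Type*} [AddCommGroup V] [Module ℂ V] [Module ℝ V]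
    [IsScalarTower ℝ ℂ V] [FiniteDimensional ℂ V] (f : V →ₗ[ℂ] V) :
    LinearMap.trace ℝ V (f.restrictScalars ℝ) = 2 * (LinearMap.trace ℂ V f).re := by
  classical
  let b := Module.finBasis ℂ V
  rw [LinearMap.trace_eq_matrix_trace ℝ (Complex.basisOneI.smulTower b),
    LinearMap.trace_eq_matrix_trace ℂ b]
  simp only [Matrix.trace, Matrix.diag_apply, LinearMap.toMatrix_apply, Fintype.sum_prod_type,
    Fin.sum_univ_two, Module.Basis.smulTower_repr, Module.Basis.smulTower_apply,
    LinearMap.coe_restrictScalars, map_smul, Complex.re_sum]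
  simp [two_mul, Complex.coe_basisOneI_repr]

instance : (volume : Measure (ℂ × ℂ)).IsAddHaarMeasure := by
  rw [Measure.volume_eq_prod]
  infer_instance

instance {β : Type*} [Fintype β] : (volume : Measure (β → ℂ × ℂ)).IsAddHaarMeasure :=
  Measure.pi.isAddHaarMeasure _

variable {β : Type*} [Fintype β] {M P Q : Matrix (β × Fin 2) (β × Fin 2) ℂ} {b c : ℝ}

lemma integrable_quatBilin_mul_rpow_mul_truncPow [DecidableEq β] (hM : M.PosDef) (hb : 0 ≤ b)
    (hc : 0 ≤ c) :
    Integrable fun y : β → ℂ × ℂ =>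
      quatBilin P y y * quatBilin Q y y ^ b * truncPow c (1 - quatBilin M⁻¹ y y) :=
  integrable_mul_truncPow_one_sub volume (fun _ hy => quatBilin_self_pos hM.inv hy)
    (by fun_prop (disch := assumption)) hc

lemma integrable_quatBilin_rpow_mul_truncPow [DecidableEq β] (hM : M.PosDef) (hb : 0 ≤ b)
    (hc : 0 ≤ c) :
    Integrable fun y : β → ℂ × ℂ => quatBilin Q y y ^ b * truncPow c (1 - quatBilin M⁻¹ y y) :=
  integrable_mul_truncPow_one_sub volume (fun _ hy => quatBilin_self_pos hM.inv hy)
    (by fun_prop (disch := assumption)) hc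

/- Integration by parts along the vector field `y ↦ y P M`, which scales the form of `Q` and pairs
with `y` under the form of `M⁻¹` to give the form of `P`. -/
lemma integral_quatBilin_mul_rpow_mul_truncPow [DecidableEq β] (hM : M.PosDef) (hP : P.PosSemidef)
    (hQ : Q.PosSemidef) (hPMQ : P * M * Q = Q) (hb : 0 ≤ b) (hc : 0 ≤ c) :
    (c + 2 * Fintype.card β + b + 1) * ∫ y : β → ℂ × ℂ,
        quatBilin P y y * quatBilin Q y y ^ b * truncPow c (1 - quatBilin M⁻¹ y y) =
      ((P * M).trace.re + b) * ∫ y : β → ℂ × ℂ,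
        quatBilin Q y y ^ b * truncPow c (1 - quatBilin M⁻¹ y y) := by
  let L := (quatMulRight (P * M)).restrictScalars ℝ
  have h_adj : (P * M)ᴴ = M * P := by
    rw [conjTranspose_mul, hM.isHermitian.eq, hP.isHermitian.eq]
  have h_form (y : β → ℂ × ℂ) : quatBilin M⁻¹ y (L y) = quatBilin P y y := by
    rw [LinearMap.coe_restrictScalars, quatBilin_quatMulRight_right, h_adj, ← Matrix.mul_assoc,
      nonsing_inv_mul _ hM.det_pos.ne'.isUnit, Matrix.one_mul]
  have hQ_left (y w : β → ℂ × ℂ) : quatBilin Q (L y) w = quatBilin Q y w := by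
    rw [LinearMap.coe_restrictScalars, quatBilin_quatMulRight_left, hPMQ]
  have hQ_scale (t : ℝ) (y : β → ℂ × ℂ) :
      quatBilin Q (y + t • L y) (y + t • L y) = (1 + t) ^ 2 * quatBilin Q y y := by
    have hQ_right : quatBilin Q y (L y) = quatBilin Q y y := by
      rw [(quatBilin_isSymm hQ.isHermitian).eq, hQ_left]
    simp only [map_add, map_smul, LinearMap.add_apply, LinearMap.smul_apply, smul_eq_mul, hQ_left,
      hQ_right]
    ring
  have h_rpow (u : ℝ) (hu : 0 < u) (r : ℝ) (hr : 0 ≤ r) :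
      (u ^ 2 * r) ^ b = u ^ (2 * b) * r ^ b := by
    rw [Real.mul_rpow (sq_nonneg u) hr, ← Real.rpow_natCast, ← Real.rpow_mul hu.le, Nat.cast_ofNat]
  have h := integral_bilinForm_mul_truncPow_one_sub (volume : Measure (β → ℂ × ℂ)) (L := L)
    (h := fun y => quatBilin Q y y ^ b) (m := 2 * b) (k := 2 * b)
    (quatBilin_isSymm hM.inv.isHermitian) (fun _ hy => quatBilin_self_pos hM.inv hy)
    (fun y => (h_form y).symm ▸ quatBilin_self_nonneg hP y) (by fun_prop (disch := assumption))
    (fun y => Real.rpow_nonneg (quatBilin_self_nonneg hQ y) b) (by positivity)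
    (fun a ha y => by
      rw [bilinForm_smul_self, h_rpow a ha _ (quatBilin_self_nonneg hQ y)])
    (fun t ht y => by
      rw [hQ_scale, h_rpow _ ht _ (quatBilin_self_nonneg hQ y)])
    (neg_one_lt_zero.trans_le hc)
  have h_rank : (Module.finrank ℝ (β → ℂ × ℂ) : ℝ) = 4 * Fintype.card β := by
    simp [Module.finrank_pi_fintype, mul_comm]
  rw [h_rank, trace_restrictScalars_complex, trace_quatMulRight] at h
  simp only [h_form] at h
  convert h using 2 <;> ring

end RowIntegration

section Continuity

variable {α β : Type*}

@[fun_prop]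
lemma continuous_quatBlock :
    Continuous (quatBlock : (α → β → ℂ × ℂ) → Matrix (α × Fin 2) (β × Fin 2) ℂ) := by
  refine continuous_matrix fun i j => ?_
  simp only [quatBlock, Matrix.of_apply]
  split_ifs <;> fun_prop

lemma continuous_quatMatrix (n : ℕ) : Continuous (quatMatrix n) := continuous_quatBlock

@[fun_prop]
lemma continuous_quatVol [Fintype α] [DecidableEq α] [Fintype β] :
    Continuous (quatVol : (α → β → ℂ × ℂ) → ℝ) := by
  unfold quatVol
  fun_prop

lemma measurableSet_setOf_posDef {X m : Type*} [TopologicalSpace X] [MeasurableSpace X]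
    [OpensMeasurableSpace X] [Finite m] {f : X → Matrix m m ℂ} (hf : Continuous f) :
    MeasurableSet {x | (f x).PosDef} := by
  classical
  let _ := Fintype.ofFinite m
  have h_eq : {x | (f x).PosDef} = ({x | (f x).IsHermitian} ∩
      ⋂ v : m → ℂ, {x | 0 ≤ star v ⬝ᵥ f x *ᵥ v}) ∩ {x | (f x).det = 0}ᶜ := by
    ext x
    simp only [Set.mem_inter_iff, Set.mem_iInter, Set.mem_compl_iff, Set.mem_ofPred_eq,
      ← posSemidef_iff_dotProduct_mulVec]
    exact ⟨fun h => ⟨h.posSemidef, h.det_pos.ne'⟩, fun h => h.1.posDef_iff_det_ne_zero.2 h.2⟩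
  have h_herm : IsClosed {x | (f x).IsHermitian} := isClosed_eq (by fun_prop) hf
  have h_nonneg : IsClosed (⋂ v : m → ℂ, {x | 0 ≤ star v ⬝ᵥ f x *ᵥ v}) :=
    isClosed_iInter fun v => isClosed_le continuous_const (by fun_prop)
  have h_det : IsClosed {x | (f x).det = 0} := isClosed_eq (by fun_prop) continuous_const
  rw [h_eq]
  exact (h_herm.inter h_nonneg).measurableSet.inter h_det.measurableSet.compl

end Continuity

section Weight

variable {n : ℕ} {β₁ β₂ : ℝ}

lemma det_conjTranspose_mul_quatMatrix (x : Fin n → Fin n → ℂ × ℂ) :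
    ((quatMatrix n x)ᴴ * quatMatrix n x).det = (quatVol x : ℂ) ^ 2 := by
  rw [det_mul_comm, quatMatrix_eq_quatBlock, det_quatBlock_mul_conjTranspose]

lemma measurable_quatAntiSphericalWeight (n : ℕ) (β₁ β₂ : ℝ) :
    Measurable (quatAntiSphericalWeight n β₁ β₂) := by
  have h_cont := continuous_quatMatrix n
  refine Measurable.indicator (.mul (.pow_const ?_ β₁) (.pow_const ?_ β₂))
    (measurableSet_setOf_posDef (by fun_prop))
  · exact Continuous.measurable (by fun_prop)
  · exact Continuous.measurable (by fun_prop)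

lemma quatAntiSphericalWeight_nonneg (x : Fin n → Fin n → ℂ × ℂ) :
    0 ≤ quatAntiSphericalWeight n β₁ β₂ x := by
  refine Set.indicator_nonneg (fun x hx => ?_) x
  refine mul_nonneg (Real.rpow_nonneg ?_ _) (Real.rpow_nonneg ?_ _)
  · exact (Complex.le_def.1 (posSemidef_conjTranspose_mul_self (quatMatrix n x)).det_nonneg).1
  · exact (Complex.le_def.1 (PosDef.det_pos hx).le).1

lemma quatAntiSphericalWeight_of_posDef {x : Fin n → Fin n → ℂ × ℂ}
    (h : (1 - (quatMatrix n x)ᴴ * quatMatrix n x).PosDef) : quatAntiSphericalWeight n β₁ β₂ x =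
      quatVol x ^ (2 * β₁) * (1 - (quatMatrix n x)ᴴ * quatMatrix n x).det.re ^ β₂ := by
  refine (Set.indicator_of_mem (Set.mem_ofPred_eq ▸ h) _).trans ?_
  rw [det_conjTranspose_mul_quatMatrix, ← Complex.ofReal_pow, Complex.ofReal_re, ← Real.rpow_two,
    ← Real.rpow_mul (quatVol_nonneg x)]

lemma quatAntiSphericalWeight_of_not_posDef {x : Fin n → Fin n → ℂ × ℂ}
    (h : ¬(1 - (quatMatrix n x)ᴴ * quatMatrix n x).PosDef) :
    quatAntiSphericalWeight n β₁ β₂ x = 0 :=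
  Set.indicator_of_notMem (Set.mem_ofPred_eq ▸ h) _

end Weight

section RankOneUpdate

variable {β : Type*} [Fintype β] [DecidableEq β] {M : Matrix (β × Fin 2) (β × Fin 2) ℂ}

lemma one_sub_quatRow_mul_inv_mul (hM : M.PosDef) (hM_quat : IsQuat M) (y : β → ℂ × ℂ) :
    1 - quatRow y * M⁻¹ * (quatRow y)ᴴ = ((1 - quatBilin M⁻¹ y y : ℝ) : ℂ) • 1 := by
  rw [quatRow_mul_mul_conjTranspose (hM_quat.inv hM.det_pos.ne') hM.isHermitian.inv,
    Complex.ofReal_sub, sub_smul, Complex.ofReal_one, one_smul]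

lemma det_sub_conjTranspose_quatRow_mul (hM : M.PosDef) (hM_quat : IsQuat M) (y : β → ℂ × ℂ) :
    (M - (quatRow y)ᴴ * quatRow y).det.re = M.det.re * (1 - quatBilin M⁻¹ y y) ^ 2 := by
  have h := det_sub_mul_conjTranspose hM.det_pos.ne' (quatRow y)ᴴ
  rw [conjTranspose_conjTranspose, one_sub_quatRow_mul_inv_mul hM hM_quat] at h
  rw [h, det_smul, det_one, mul_one, ← Complex.ofReal_pow, Complex.re_mul_ofReal]
  simp

lemma posDef_sub_conjTranspose_quatRow_mul_iff (hM : M.PosDef) (hM_quat : IsQuat M)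
    (y : β → ℂ × ℂ) : (M - (quatRow y)ᴴ * quatRow y).PosDef ↔ 0 < 1 - quatBilin M⁻¹ y y := by
  have h_det := det_sub_conjTranspose_quatRow_mul hM hM_quat y
  have h_psd := posSemidef_sub_mul_conjTranspose_iff hM (quatRow y)ᴴ
  rw [conjTranspose_conjTranspose, one_sub_quatRow_mul_inv_mul hM hM_quat] at h_psd
  constructor
  · intro h
    have h_nonneg := (Complex.le_def.1 ((h_psd.1 h.posSemidef).diag_nonneg (i := ((), 0)))).1
    refine lt_of_le_of_ne (by simpa using h_nonneg) fun h_zero => ?_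
    rw [← h_zero] at h_det
    simpa [h_det] using (Complex.lt_def.1 h.det_pos).1
  · intro h
    refine (h_psd.2 (PosSemidef.one.smul (Complex.zero_le_real.2 h.le))).posDef_iff_det_ne_zero.2 ?_
    have h_pos : 0 < M.det.re := (Complex.lt_def.1 hM.det_pos).1
    intro h_zero
    rw [h_zero, Complex.zero_re] at h_det
    exact (mul_pos h_pos (pow_pos h 2)).ne h_det

end RankOneUpdate

section RowUpdate

lemma exists_quatVol_update {ι β : Type*} [Fintype ι] [DecidableEq ι] [Fintype β]
    (x : ι → β → ℂ × ℂ) (t : ι) :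
    ∃ C : ℝ, 0 ≤ C ∧ ∃ Q : Matrix (β × Fin 2) (β × Fin 2) ℂ, Q.PosSemidef ∧
      (∀ s ≠ t, quatRow (x s) * Q = 0) ∧
      ∀ y, quatVol (Function.update x t y) = C * quatBilin Q y y := by
  classical
  let v (i : ↥(Finset.univ.erase t)) : β → ℂ × ℂ := x i
  have h_rows (y : β → ℂ × ℂ) :
      (fun i : ↥(Finset.univ.erase t) => Function.update x t y i) = v :=
    funext fun i => Function.update_of_ne (Finset.ne_of_mem_erase i.2) _ _
  have h_insert (y : β → ℂ × ℂ) : quatVol (Function.update x t y) =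
      quatVol (fun i : ↥(insert t (Finset.univ.erase t)) => Function.update x t y i) :=
    (quatVol_submatrix_equiv (Equiv.subtypeUnivEquiv fun i => by simp) (Equiv.refl _)
      (Function.update x t y)).symm
  have h_notMem := Finset.notMem_erase t Finset.univ
  by_cases hv : quatVol v = 0
  · refine ⟨0, le_rfl, 0, PosSemidef.zero, fun s _ => Matrix.mul_zero _, fun y => ?_⟩
    rw [zero_mul, h_insert, quatVol_rows_insert_eq_zero _ h_notMem (by rw [h_rows, hv])]
  · have hdet := (quatVol_ne_zero_iff.1 hv).det_pos.ne'
    refine ⟨quatVol v, quatVol_nonneg v, rowCompl (quatBlock v), rowCompl_posSemidef hdet,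
      fun s hs => ?_, fun y => ?_⟩
    · ext ⟨_, e⟩ j
      exact congrFun (congrFun (mul_rowCompl hdet)
        (⟨s, Finset.mem_erase.2 ⟨hs, Finset.mem_univ s⟩⟩, e)) j
    · rw [h_insert, quatVol_rows_insert _ h_notMem (by rwa [h_rows]), h_rows, Function.update_self]

variable {n : ℕ} {β₁ β₂ : ℝ}

/-- The matrix `I - C† C`, where `C` consists of all quaternion rows except the `t`-th. -/
noncomputable def complGram (x : Fin n → Fin n → ℂ × ℂ) (t : Fin n) :
    Matrix (Fin n × Fin 2) (Fin n × Fin 2) ℂ :=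
  1 - ∑ s ∈ Finset.univ.erase t, (quatRow (x s))ᴴ * quatRow (x s)

lemma isQuat_complGram (x : Fin n → Fin n → ℂ × ℂ) (t : Fin n) : IsQuat (complGram x t) :=
  IsQuat.one.sub (IsQuat.sum fun _ _ =>
    (isQuat_quatBlock _).conjTranspose.mul (isQuat_quatBlock _))

lemma conjTranspose_quatMatrix_mul (x : Fin n → Fin n → ℂ × ℂ) :
    (quatMatrix n x)ᴴ * quatMatrix n x = ∑ s, (quatRow (x s))ᴴ * quatRow (x s) := by
  ext a b
  rw [Matrix.sum_apply]
  simp [Matrix.mul_apply, Fintype.sum_prod_type, quatMatrix, quatBlock]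

lemma one_sub_conjTranspose_mul_quatMatrix_update (x : Fin n → Fin n → ℂ × ℂ) (t : Fin n)
    (y : Fin n → ℂ × ℂ) :
    1 - (quatMatrix n (Function.update x t y))ᴴ * quatMatrix n (Function.update x t y) =
      complGram x t - (quatRow y)ᴴ * quatRow y := by
  rw [conjTranspose_quatMatrix_mul, complGram, ← Finset.sum_erase_add _ _ (Finset.mem_univ t),
    Function.update_self, ← sub_sub]
  congr 2
  exact Finset.sum_congr rfl fun s hs => by
    rw [Function.update_of_ne (Finset.ne_of_mem_erase hs)]

lemma quatAntiSphericalWeight_update_eq_zero {x : Fin n → Fin n → ℂ × ℂ} {t : Fin n}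
    (h : ¬(complGram x t).PosDef) (y : Fin n → ℂ × ℂ) :
    quatAntiSphericalWeight n β₁ β₂ (Function.update x t y) = 0 := by
  refine quatAntiSphericalWeight_of_not_posDef fun h_posDef => h ?_
  rw [one_sub_conjTranspose_mul_quatMatrix_update] at h_posDef
  simpa using h_posDef.add_posSemidef (posSemidef_conjTranspose_mul_self (quatRow y))

lemma exists_quatAntiSphericalWeight_update {x : Fin n → Fin n → ℂ × ℂ} {t : Fin n}
    (hM : (complGram x t).PosDef) :
    ∃ (C : ℝ) (Q : Matrix (Fin n × Fin 2) (Fin n × Fin 2) ℂ), Q.PosSemidef ∧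
      (∀ s ≠ t, quatRow (x s) * Q = 0) ∧
      ∀ y, quatAntiSphericalWeight n β₁ β₂ (Function.update x t y) = C *
        (quatBilin Q y y ^ (2 * β₁) * truncPow (2 * β₂) (1 - quatBilin (complGram x t)⁻¹ y y)) := by
  obtain ⟨C, hC, Q, hQ, hxQ, h_vol⟩ := exists_quatVol_update x t
  refine ⟨C ^ (2 * β₁) * (complGram x t).det.re ^ β₂, Q, hQ, hxQ, fun y => ?_⟩
  have h_posDef := posDef_sub_conjTranspose_quatRow_mul_iff hM (isQuat_complGram x t) y
  have h_det_nonneg : 0 ≤ (complGram x t).det.re := (Complex.le_def.1 hM.det_pos.le).1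
  rw [← one_sub_conjTranspose_mul_quatMatrix_update] at h_posDef
  rcases lt_or_ge 0 (1 - quatBilin (complGram x t)⁻¹ y y) with h_pos | h_nonpos
  · rw [quatAntiSphericalWeight_of_posDef (h_posDef.2 h_pos), h_vol,
      one_sub_conjTranspose_mul_quatMatrix_update,
      det_sub_conjTranspose_quatRow_mul hM (isQuat_complGram x t), truncPow_of_pos h_pos,
      Real.mul_rpow h_det_nonneg (sq_nonneg _), ← Real.rpow_two, ← Real.rpow_mul h_pos.le,
      Real.mul_rpow hC (quatBilin_self_nonneg hQ y)]
    ring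
  · rw [quatAntiSphericalWeight_of_not_posDef fun h => (h_posDef.1 h).not_ge h_nonpos,
      truncPow_of_nonpos h_nonpos, mul_zero, mul_zero]

end RowUpdate

section Integrability

instance {α β : Type*} [Fintype α] [Fintype β] :
    (volume : Measure (α → β → ℂ × ℂ)).IsAddHaarMeasure :=
  Measure.pi.isAddHaarMeasure _

variable {n : ℕ} {β₁ β₂ : ℝ}

lemma norm_quatMatrix_le_one {x : Fin n → Fin n → ℂ × ℂ}
    (hx : (1 - (quatMatrix n x)ᴴ * quatMatrix n x).PosDef) (a b : Fin n × Fin 2) :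
    ‖quatMatrix n x a b‖ ≤ 1 := by
  have h_diag := (Complex.le_def.1 (hx.posSemidef.diag_nonneg (i := b))).1
  simp only [Matrix.sub_apply, one_apply_eq, Matrix.mul_apply, conjTranspose_apply,
    Complex.star_def, Complex.conj_mul', Complex.sub_re, Complex.one_re, Complex.zero_re,
    Complex.re_sum, ← Complex.ofReal_pow, Complex.ofReal_re] at h_diag
  have h_single := Finset.single_le_sum (f := fun a => ‖quatMatrix n x a b‖ ^ 2)
    (fun _ _ => sq_nonneg _) (Finset.mem_univ a)
  exact (sq_le_one_iff₀ (norm_nonneg _)).1 (by linarith)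

lemma mem_closedBall_of_quatAntiSphericalWeight_ne_zero {x : Fin n → Fin n → ℂ × ℂ}
    (hx : quatAntiSphericalWeight n β₁ β₂ x ≠ 0) : x ∈ Metric.closedBall 0 1 := by
  have h_posDef := not_imp_comm.1 quatAntiSphericalWeight_of_not_posDef hx
  rw [mem_closedBall_zero_iff, pi_norm_le_iff_of_nonneg zero_le_one]
  refine fun i => (pi_norm_le_iff_of_nonneg zero_le_one).2 fun k => max_le ?_ ?_
  · simpa [quatMatrix] using norm_quatMatrix_le_one h_posDef (i, 0) (k, 0)
  · simpa [quatMatrix] using norm_quatMatrix_le_one h_posDef (i, 0) (k, 1)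

lemma integrable_quatAntiSphericalWeight_smul {E : Type*} [NormedAddCommGroup E] [NormedSpace ℝ E]
    (hβ₁ : 0 ≤ β₁) (hβ₂ : 0 ≤ β₂) {f : (Fin n → Fin n → ℂ × ℂ) → E} (hf : Continuous f) :
    Integrable fun x => quatAntiSphericalWeight n β₁ β₂ x • f x := by
  have h_cont := continuous_quatMatrix n
  have h_supp : Function.support (fun x => quatAntiSphericalWeight n β₁ β₂ x • f x) ⊆
      Metric.closedBall 0 1 := fun x hx =>
    mem_closedBall_of_quatAntiSphericalWeight_ne_zero (left_ne_zero_of_smul hx)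
  rw [← integrableOn_iff_integrable_of_support_subset h_supp]
  have h_bound : Continuous fun x => |((quatMatrix n x)ᴴ * quatMatrix n x).det.re| ^ β₁ *
      |(1 - (quatMatrix n x)ᴴ * quatMatrix n x).det.re| ^ β₂ * ‖f x‖ :=
    ((Continuous.rpow_const (by fun_prop) fun _ => Or.inr hβ₁).mul
      (Continuous.rpow_const (by fun_prop) fun _ => Or.inr hβ₂)).mul hf.norm
  refine Integrable.mono' (h_bound.continuousOn.integrableOn_compact (isCompact_closedBall 0 1))
    ((measurable_quatAntiSphericalWeight n β₁ β₂).aestronglyMeasurable.smul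
      hf.aestronglyMeasurable) (Filter.Eventually.of_forall fun x => ?_)
  rw [norm_smul]
  refine mul_le_mul_of_nonneg_right ?_ (norm_nonneg _)
  refine (norm_indicator_le_norm_self _ _).trans ?_
  rw [norm_mul]
  exact mul_le_mul (Real.abs_rpow_le_abs_rpow _ _) (Real.abs_rpow_le_abs_rpow _ _)
    (norm_nonneg _) (by positivity)

open scoped Matrix.Norms.L2Operator MatrixOrder in
lemma posDef_one_sub_of_norm_lt_one {m : Type*} [Fintype m] [DecidableEq m] {A : Matrix m m ℂ}
    (hA : A.IsHermitian) (hA_norm : ‖A‖ < 1) : (1 - A).PosDef := by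
  have h_le : A ≤ algebraMap ℝ _ ‖A‖ := IsSelfAdjoint.le_algebraMap_norm_self hA
  have h_pos := (PosDef.one (n := m) (R := ℂ)).smul (Complex.zero_lt_real.2 (sub_pos.2 hA_norm))
  convert! h_pos.add_posSemidef (Matrix.le_iff.1 h_le) using 1
  rw [Algebra.algebraMap_eq_smul_one, Complex.ofReal_sub, sub_smul]
  simp

lemma quatAntiSphericalWeight_pos {x : Fin n → Fin n → ℂ × ℂ}
    (hx : (1 - (quatMatrix n x)ᴴ * quatMatrix n x).PosDef) (hx_vol : quatVol x ≠ 0) :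
    0 < quatAntiSphericalWeight n β₁ β₂ x := by
  rw [quatAntiSphericalWeight_of_posDef hx]
  exact mul_pos (Real.rpow_pos_of_pos ((quatVol_nonneg x).lt_of_ne' hx_vol) _)
    (Real.rpow_pos_of_pos (Complex.lt_def.1 hx.det_pos).1 _)

open scoped Matrix.Norms.L2Operator in
lemma integral_quatAntiSphericalWeight_pos (hβ₁ : 0 ≤ β₁) (hβ₂ : 0 ≤ β₂) :
    0 < ∫ x, quatAntiSphericalWeight n β₁ β₂ x := by
  have h_cont := continuous_quatMatrix n
  have h_int : Integrable (quatAntiSphericalWeight n β₁ β₂) := by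
    simpa using integrable_quatAntiSphericalWeight_smul hβ₁ hβ₂
      (continuous_const (y := (1 : ℝ)) (X := Fin n → Fin n → ℂ × ℂ))
  rw [integral_pos_iff_support_of_nonneg (fun x => quatAntiSphericalWeight_nonneg x) h_int]
  let U : Set (Fin n → Fin n → ℂ × ℂ) :=
    {x | ‖(quatMatrix n x)ᴴ * quatMatrix n x‖ < 1} ∩ {x | (quatMatrix n x).det ≠ 0}
  have hU_open : IsOpen U :=
    (isOpen_lt (by fun_prop) continuous_const).inter (isOpen_ne_fun (by fun_prop) continuous_const)
  have h_half : quatMatrix n (fun i k => if i = k then (1 / 2, 0) else 0) =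
      diagonal fun _ => 1 / 2 := by
    ext ⟨i, e⟩ ⟨k, f⟩
    rcases eq_or_ne i k with rfl | h
    · fin_cases e <;> fin_cases f <;> simp [quatMatrix, map_ofNat]
    · simp [quatMatrix, h]
  have hU_nonempty : U.Nonempty := by
    refine ⟨fun i k => if i = k then (1 / 2, 0) else 0, ?_, ?_⟩
    · rw [Set.mem_ofPred_eq, h_half, diagonal_conjTranspose, diagonal_mul_diagonal,
        l2_opNorm_diagonal, pi_norm_lt_iff one_pos]
      intro
      norm_num
    · rw [Set.mem_ofPred_eq, h_half]
      simp
  refine (hU_open.measure_pos volume hU_nonempty).trans_le (measure_mono fun x hx => ?_)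
  refine (quatAntiSphericalWeight_pos (posDef_one_sub_of_norm_lt_one
    (isHermitian_conjTranspose_mul_self _) hx.1) fun h_zero => hx.2 ?_).ne'
  rw [quatMatrix_eq_quatBlock, ← quatVol_square, h_zero, Complex.ofReal_zero]

end Integrability

section Fubini

lemma integral_eq_of_forall_integral_update_eq {n : ℕ} {X : Fin n → Type*}
    [∀ i, MeasureSpace (X i)] [∀ i, SigmaFinite (volume : Measure (X i))] {E : Type*}
    [NormedAddCommGroup E] [NormedSpace ℝ E] {f g : (∀ i, X i) → E} (t : Fin n)
    (hf : Integrable f) (hg : Integrable g)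
    (h : ∀ x, ∫ y, f (Function.update x t y) = ∫ y, g (Function.update x t y)) :
    ∫ x, f x = ∫ x, g x := by
  obtain ⟨m, rfl⟩ : ∃ m, n = m + 1 := Nat.exists_eq_succ_of_ne_zero (NeZero.of_pos t.pos).out
  rcases isEmpty_or_nonempty (∀ i, X i) with _ | ⟨⟨x₀⟩⟩
  · rw [Measure.eq_zero_of_isEmpty volume, integral_zero_measure, integral_zero_measure]
  let e := (MeasurableEquiv.piFinSuccAbove X t).symm
  have he : MeasurePreserving e := (volume_preserving_piFinSuccAbove X t).symm
  have h_insert (y : X t) (v : ∀ i, X (t.succAbove i)) :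
      e (y, v) = Function.update (t.insertNth (x₀ t) v) t y :=
    (Fin.update_insertNth t (x₀ t) y v).symm
  rw [← he.integral_comp e.measurableEmbedding, ← he.integral_comp e.measurableEmbedding,
    Measure.volume_eq_prod]
  refine (integral_prod_symm _ (he.integrable_comp_of_integrable hf)).trans <| .trans ?_
    (integral_prod_symm _ (he.integrable_comp_of_integrable hg)).symm
  simp only [Function.comp_apply, h_insert, h]

end Fubini

section RowMoments

variable {n : ℕ} {β₁ β₂ : ℝ} {S : Finset (Fin n)} {x : Fin n → Fin n → ℂ × ℂ} {t : Fin n}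

/-- The quaternionic volume of the rows of `x` indexed by `S`. -/
noncomputable def rowVol (S : Finset (Fin n)) (x : Fin n → Fin n → ℂ × ℂ) : ℝ :=
  quatVol fun i : S => x i

/-- The orthogonal projection onto the complement of the rows of `x` indexed by `S`, when these
are independent. -/
noncomputable def rowProj (S : Finset (Fin n)) (x : Fin n → Fin n → ℂ × ℂ) :
    Matrix (Fin n × Fin 2) (Fin n × Fin 2) ℂ :=
  rowCompl (quatBlock fun i : S => x i)

@[fun_prop]
lemma continuous_rowVol (S : Finset (Fin n)) : Continuous (rowVol S) :=
  continuous_quatVol.comp (by fun_prop)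

lemma rowVol_update (ht : t ∉ S) (x : Fin n → Fin n → ℂ × ℂ) (y : Fin n → ℂ × ℂ) :
    rowVol S (Function.update x t y) = rowVol S x := by
  unfold rowVol
  congr 1
  ext1 i
  rw [Function.update_of_ne (ne_of_mem_of_not_mem i.2 ht)]

lemma rowProj_update (ht : t ∉ S) (x : Fin n → Fin n → ℂ × ℂ) (y : Fin n → ℂ × ℂ) :
    rowProj S (Function.update x t y) = rowProj S x := by
  unfold rowProj
  congr 2
  ext1 i
  rw [Function.update_of_ne (ne_of_mem_of_not_mem i.2 ht)]

lemma isQuat_rowProj (hS : rowVol S x ≠ 0) : IsQuat (rowProj S x) := isQuat_rowCompl hS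

lemma rowVol_insert_eq_zero (hS : rowVol S x = 0) (t : Fin n) : rowVol (insert t S) x = 0 := by
  by_cases ht : t ∈ S
  · rwa [Finset.insert_eq_of_mem ht]
  · exact quatVol_rows_insert_eq_zero x ht hS

lemma rowVol_insert (ht : t ∉ S) (hS : rowVol S x ≠ 0) :
    rowVol (insert t S) x = rowVol S x * quatBilin (rowProj S x) (x t) (x t) :=
  quatVol_rows_insert x ht hS

lemma rowProj_posSemidef (hS : rowVol S x ≠ 0) : (rowProj S x).PosSemidef :=
  rowCompl_posSemidef (quatVol_ne_zero_iff.1 hS).det_pos.ne'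

lemma trace_rowProj (hS : rowVol S x ≠ 0) : (rowProj S x).trace = 2 * (n - S.card) := by
  rw [rowProj, trace_rowCompl (quatVol_ne_zero_iff.1 hS).det_pos.ne']
  simp only [Fintype.card_prod, Fintype.card_fin, Nat.cast_mul, Nat.cast_ofNat, Fintype.card_coe]
  ring

lemma rowProj_mul_eq_self {Q : Matrix (Fin n × Fin 2) (Fin n × Fin 2) ℂ}
    (hQ : ∀ s ∈ S, quatRow (x s) * Q = 0) : rowProj S x * Q = Q := by
  refine rowCompl_mul_of_mul_eq_zero ?_
  ext ⟨⟨s, hs⟩, e⟩ j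
  exact congrFun (congrFun (hQ s hs) ((), e)) j

lemma quatBilin_rowProj_eq_zero (hS : rowVol S x ≠ 0) {s : Fin n} (hs : s ∈ S) :
    quatBilin (rowProj S x) (x s) (x s) = 0 := by
  have h_mul : quatRow (x s) * rowProj S x = 0 := by
    ext ⟨_, e⟩ j
    exact congrFun (congrFun (mul_rowCompl (quatVol_ne_zero_iff.1 hS).det_pos.ne') (⟨s, hs⟩, e)) j
  rw [quatBilin_self, h_mul]
  simp

lemma complGram_mul_eq_self {Q : Matrix (Fin n × Fin 2) (Fin n × Fin 2) ℂ}
    (hQ : ∀ s ≠ t, quatRow (x s) * Q = 0) : complGram x t * Q = Q := by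
  rw [complGram, Matrix.sub_mul, Matrix.one_mul, Finset.sum_mul, Finset.sum_eq_zero, sub_zero]
  intro s hs
  rw [Matrix.mul_assoc, hQ s (Finset.ne_of_mem_erase hs), Matrix.mul_zero]

lemma trace_mul_complGram {P : Matrix (Fin n × Fin 2) (Fin n × Fin 2) ℂ} (hP : IsQuat P)
    (hP_herm : P.IsHermitian) :
    (P * complGram x t).trace =
      P.trace - 2 * ∑ s ∈ Finset.univ.erase t, (quatBilin P (x s) (x s) : ℂ) := by
  rw [complGram, Matrix.mul_sub, Matrix.mul_one, trace_sub, Finset.mul_sum, trace_sum,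
    Finset.mul_sum]
  congr 1
  refine Finset.sum_congr rfl fun s _ => ?_
  rw [← Matrix.mul_assoc, trace_mul_comm, ← Matrix.mul_assoc,
    quatRow_mul_mul_conjTranspose hP hP_herm, trace_smul, trace_one]
  simp [mul_comm]

lemma re_trace_rowProj_mul_complGram (hS : rowVol S x ≠ 0) :
    (rowProj S x * complGram x t).trace.re =
      2 * (n - S.card) - 2 * ∑ s ∈ (insert t S)ᶜ, quatBilin (rowProj S x) (x s) (x s) := by
  have h_sum : ∑ s ∈ (insert t S)ᶜ, quatBilin (rowProj S x) (x s) (x s) =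
      ∑ s ∈ Finset.univ.erase t, quatBilin (rowProj S x) (x s) (x s) := by
    refine Finset.sum_subset (fun s hs => ?_) fun s hs hs' => quatBilin_rowProj_eq_zero hS ?_
    · simp only [Finset.mem_compl, Finset.mem_insert, not_or] at hs
      simp [hs.1]
    · simp only [Finset.mem_compl, Finset.mem_insert, not_or, not_and, not_not] at hs'
      exact hs' (Finset.ne_of_mem_erase hs)
  rw [trace_mul_complGram (isQuat_rowProj hS) (rowProj_posSemidef hS).isHermitian,
    trace_rowProj hS, h_sum, ← Complex.ofReal_sum]
  simp

lemma rowVol_insert_update (ht : t ∉ S) (hS : rowVol S x ≠ 0) (y : Fin n → ℂ × ℂ) :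
    rowVol (insert t S) (Function.update x t y) =
      rowVol S x * quatBilin (rowProj S x) y y := by
  rw [rowVol_insert ht (by rwa [rowVol_update ht]), rowVol_update ht, rowProj_update ht,
    Function.update_self]

lemma rowVol_insert_update_of_notMem {s : Fin n} (ht : t ∉ S) (hs : s ∉ insert t S)
    (hS : rowVol S x ≠ 0) (y : Fin n → ℂ × ℂ) :
    rowVol (insert s S) (Function.update x t y) =
      rowVol S x * quatBilin (rowProj S x) (x s) (x s) := by
  rw [Finset.mem_insert, not_or] at hs
  rw [rowVol_update (by simp [ht, Ne.symm hs.1]), rowVol_insert hs.2 hS]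

lemma integral_update_rowVol (hβ₁ : 0 ≤ β₁) (hβ₂ : 0 ≤ β₂) (x : Fin n → Fin n → ℂ × ℂ)
    (ht : t ∉ S) :
    ∫ y, quatAntiSphericalWeight n β₁ β₂ (Function.update x t y) *
        ((2 * β₂ + 2 * n + 2 * β₁ + 1) * rowVol (insert t S) (Function.update x t y) +
          2 * ∑ s ∈ (insert t S)ᶜ, rowVol (insert s S) (Function.update x t y)) =
      ∫ y, quatAntiSphericalWeight n β₁ β₂ (Function.update x t y) *
        ((2 * (n - S.card) + 2 * β₁) * rowVol S (Function.update x t y)) := by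
  by_cases hS : rowVol S x = 0
  · have h_zero (y : Fin n → ℂ × ℂ) : rowVol S (Function.update x t y) = 0 := by
      rw [rowVol_update ht, hS]
    simp [h_zero, rowVol_insert_eq_zero (h_zero _)]
  by_cases hM : (complGram x t).PosDef
  swap
  · simp [quatAntiSphericalWeight_update_eq_zero hM]
  obtain ⟨C, Q, hQ, hxQ, h_weight⟩ :=
    exists_quatAntiSphericalWeight_update (β₁ := β₁) (β₂ := β₂) hM
  set σ := ∑ s ∈ (insert t S)ᶜ, quatBilin (rowProj S x) (x s) (x s) with hσ
  have h_sum (y : Fin n → ℂ × ℂ) :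
      ∑ s ∈ (insert t S)ᶜ, rowVol (insert s S) (Function.update x t y) = rowVol S x * σ := by
    rw [hσ, Finset.mul_sum]
    exact Finset.sum_congr rfl fun s hs =>
      rowVol_insert_update_of_notMem ht (Finset.mem_compl.1 hs) hS y
  have hPMQ : rowProj S x * complGram x t * Q = Q := by
    rw [Matrix.mul_assoc, complGram_mul_eq_self hxQ,
      rowProj_mul_eq_self fun s hs => hxQ s (ne_of_mem_of_not_mem hs ht)]
  have hb := mul_nonneg zero_le_two hβ₁
  have hc := mul_nonneg zero_le_two hβ₂
  have h_row := integral_quatBilin_mul_rpow_mul_truncPow hM (rowProj_posSemidef hS) hQ hPMQ hb hc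
  rw [re_trace_rowProj_mul_complGram hS, Fintype.card_fin] at h_row
  have h_expand (y : Fin n → ℂ × ℂ) (q r : ℝ) :
      C * (q * r) * ((2 * β₂ + 2 * n + 2 * β₁ + 1) *
          (rowVol S x * quatBilin (rowProj S x) y y) + 2 * (rowVol S x * σ)) =
        C * rowVol S x * ((2 * β₂ + 2 * n + 2 * β₁ + 1) *
          (quatBilin (rowProj S x) y y * q * r) + 2 * σ * (q * r)) := by
    ring
  have h_collect (q : ℝ) :
      C * q * ((2 * (n - S.card) + 2 * β₁) * rowVol S x) =
        C * rowVol S x * ((2 * (n - S.card) + 2 * β₁) * q) := by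
    ring
  simp only [h_weight, h_sum, rowVol_insert_update ht hS, rowVol_update ht, h_expand, h_collect]
  rw [integral_const_mul, integral_const_mul, integral_const_mul,
    integral_add ((integrable_quatBilin_mul_rpow_mul_truncPow hM hb hc).const_mul _)
      ((integrable_quatBilin_rpow_mul_truncPow hM hb hc).const_mul _),
    integral_const_mul, integral_const_mul]
  linear_combination C * rowVol S x * h_row

/-- The unnormalized expectation of the volume of the rows indexed by `S`. -/
noncomputable def rowMoment (β₁ β₂ : ℝ) (S : Finset (Fin n)) : ℝ :=
  ∫ x, quatAntiSphericalWeight n β₁ β₂ x * rowVol S x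

lemma integrable_quatAntiSphericalWeight_mul_rowVol (hβ₁ : 0 ≤ β₁) (hβ₂ : 0 ≤ β₂)
    (S : Finset (Fin n)) :
    Integrable fun x => quatAntiSphericalWeight n β₁ β₂ x * rowVol S x :=
  integrable_quatAntiSphericalWeight_smul hβ₁ hβ₂ (continuous_rowVol S)

lemma rowMoment_insert (hβ₁ : 0 ≤ β₁) (hβ₂ : 0 ≤ β₂) (ht : t ∉ S) :
    (2 * β₂ + 2 * n + 2 * β₁ + 1) * rowMoment β₁ β₂ (insert t S) +
        2 * ∑ s ∈ (insert t S)ᶜ, rowMoment β₁ β₂ (insert s S) =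
      (2 * (n - S.card) + 2 * β₁) * rowMoment β₁ β₂ S := by
  have h_int := integrable_quatAntiSphericalWeight_mul_rowVol (n := n) hβ₁ hβ₂
  have h_left : Continuous fun x => (2 * β₂ + 2 * n + 2 * β₁ + 1) * rowVol (insert t S) x +
      2 * ∑ s ∈ (insert t S)ᶜ, rowVol (insert s S) x := by
    fun_prop
  have h_right : Continuous fun x => (2 * (n - S.card) + 2 * β₁) * rowVol S x := by fun_prop
  have h := integral_eq_of_forall_integral_update_eq t
    (integrable_quatAntiSphericalWeight_smul hβ₁ hβ₂ h_left)
    (integrable_quatAntiSphericalWeight_smul hβ₁ hβ₂ h_right)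
    fun x => integral_update_rowVol hβ₁ hβ₂ x ht
  simp only [smul_eq_mul, mul_add, mul_left_comm (quatAntiSphericalWeight n β₁ β₂ _),
    Finset.mul_sum] at h
  rw [integral_add ((h_int _).const_mul _)
      (integrable_finsetSum _ fun s _ => (h_int _).const_mul _),
    integral_finsetSum _ fun s _ => (h_int _).const_mul _] at h
  simpa only [rowMoment, integral_const_mul, ← Finset.mul_sum] using h

lemma sum_sum_erase_eq {κ R : Type*} [DecidableEq κ] [CommRing R] (A : Finset κ) (f : κ → R) :
    ∑ t ∈ A, ∑ s ∈ A.erase t, f s = (A.card - 1) * ∑ s ∈ A, f s := by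
  rw [Finset.sum_congr rfl fun t ht => Finset.sum_erase_eq_sub ht, Finset.sum_sub_distrib,
    Finset.sum_const, nsmul_eq_mul]
  ring

lemma sum_rowMoment_insert (hβ₁ : 0 ≤ β₁) (hβ₂ : 0 ≤ β₂) (S : Finset (Fin n)) :
    (2 * β₂ + 2 * n + 2 * β₁ + 1 + 2 * (n - (S.card + 1))) *
        ∑ t ∈ Sᶜ, rowMoment β₁ β₂ (insert t S) =
      (n - S.card) * (2 * (n - S.card) + 2 * β₁) * rowMoment β₁ β₂ S := by
  have h_card : (Sᶜ.card : ℝ) = n - S.card := by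
    rw [Finset.card_compl, Nat.cast_sub (Finset.card_le_univ S), Fintype.card_fin]
  have h := Finset.sum_congr (s₁ := Sᶜ) rfl fun t ht =>
    rowMoment_insert hβ₁ hβ₂ (Finset.mem_compl.1 ht)
  simp only [Finset.sum_add_distrib, ← Finset.mul_sum, Finset.compl_insert, sum_sum_erase_eq,
    Finset.sum_const, nsmul_eq_mul, h_card] at h
  linear_combination h

lemma sum_powersetCard_succ_rowMoment (hβ₁ : 0 ≤ β₁) (hβ₂ : 0 ≤ β₂) (j : ℕ) :
    (j + 1) * (2 * β₂ + 2 * n + 2 * β₁ + 1 + 2 * (n - (j + 1))) *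
        ∑ S ∈ Finset.powersetCard (j + 1) (Finset.univ : Finset (Fin n)), rowMoment β₁ β₂ S =
      (n - j) * (2 * (n - j) + 2 * β₁) *
        ∑ S ∈ Finset.powersetCard j (Finset.univ : Finset (Fin n)), rowMoment β₁ β₂ S := by
  have h_count : (j + 1) * ∑ T ∈ Finset.powersetCard (j + 1) (Finset.univ : Finset (Fin n)),
        rowMoment β₁ β₂ T =
      ∑ S ∈ Finset.powersetCard j (Finset.univ : Finset (Fin n)),
        ∑ t ∈ Sᶜ, rowMoment β₁ β₂ (insert t S) := by
    rw [← sum_powersetCard_succ_sum_erase j fun S t => rowMoment β₁ β₂ (insert t S),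
      Finset.mul_sum]
    refine Finset.sum_congr rfl fun T hT => ?_
    rw [Finset.sum_congr rfl fun t ht => by rw [Finset.insert_erase ht], Finset.sum_const,
      (Finset.mem_powersetCard.1 hT).2, nsmul_eq_mul, Nat.cast_add_one]
  rw [mul_comm ((j : ℝ) + 1), mul_assoc, h_count, Finset.mul_sum, Finset.mul_sum]
  refine Finset.sum_congr rfl fun S hS => ?_
  rw [← (Finset.mem_powersetCard.1 hS).2]
  exact sum_rowMoment_insert hβ₁ hβ₂ S

lemma rowMoment_empty : rowMoment (n := n) β₁ β₂ ∅ = ∫ x, quatAntiSphericalWeight n β₁ β₂ x := by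
  simp [rowMoment, rowVol, quatVol]

lemma sum_powersetCard_rowMoment (hβ₁ : 0 ≤ β₁) (hβ₂ : 0 ≤ β₂) {j : ℕ} (hj : j ≤ n) :
    ∑ S ∈ Finset.powersetCard j (Finset.univ : Finset (Fin n)), rowMoment β₁ β₂ S =
      n.choose j * (∏ i ∈ Finset.range j,
        (β₁ + n + 1 - (i + 1)) / (β₁ + β₂ + 2 * n + 1 / 2 - (i + 1))) *
          ∫ x, quatAntiSphericalWeight n β₁ β₂ x := by
  induction j with
  | zero => simp [rowMoment_empty]
  | succ j ih =>
    have h_rec := sum_powersetCard_succ_rowMoment (n := n) hβ₁ hβ₂ j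
    rw [ih (by lia)] at h_rec
    have h_choose : (n.choose (j + 1) : ℝ) * (j + 1) = n.choose j * (n - j) := by
      rw [← Nat.cast_sub (by lia)]
      exact_mod_cast Nat.choose_succ_right_eq n j
    have hjn : (j : ℝ) + 1 ≤ n := by exact_mod_cast hj
    have h_denom : β₁ + β₂ + 2 * n + 1 / 2 - (j + 1) ≠ 0 := by linarith
    have h_succ : (j : ℝ) + 1 ≠ 0 := by positivity
    rw [Finset.prod_range_succ]
    refine mul_left_cancel₀ (mul_ne_zero h_succ h_denom) ?_
    generalize ∏ i ∈ Finset.range j,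
      (β₁ + n + 1 - (i + 1)) / (β₁ + β₂ + 2 * n + 1 / 2 - (i + 1)) = p at h_rec ⊢
    generalize ∫ x, quatAntiSphericalWeight n β₁ β₂ x = I at h_rec ⊢
    have h_ratio := mul_div_cancel₀ (β₁ + n + 1 - (j + 1)) h_denom
    linear_combination h_rec / 2 - p * I * (β₁ + n - j) * h_choose -
      (j + 1) * n.choose (j + 1) * p * I * h_ratio

end RowMoments

section Symmetry

variable {n : ℕ} {β₁ β₂ : ℝ}

lemma integral_quatAntiSphericalWeight_smul_comp {E : Type*} [NormedAddCommGroup E]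
    [NormedSpace ℝ E] {φ : (Fin n → Fin n → ℂ × ℂ) → Fin n → Fin n → ℂ × ℂ}
    (hφ : MeasurePreserving φ)
    (hφ_weight : ∀ x, quatAntiSphericalWeight n β₁ β₂ (φ x) = quatAntiSphericalWeight n β₁ β₂ x)
    {f : (Fin n → Fin n → ℂ × ℂ) → E} (hf : Continuous f) :
    ∫ x, quatAntiSphericalWeight n β₁ β₂ x • f (φ x) =
      ∫ x, quatAntiSphericalWeight n β₁ β₂ x • f x := by
  have h_meas : AEStronglyMeasurable (fun x => quatAntiSphericalWeight n β₁ β₂ x • f x)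
      (Measure.map φ volume) :=
    (measurable_quatAntiSphericalWeight n β₁ β₂).aestronglyMeasurable.smul hf.aestronglyMeasurable
  conv_rhs => rw [← hφ.map_eq, integral_map hφ.aemeasurable h_meas]
  simp only [hφ_weight]

lemma quatAntiSphericalWeight_congr {x y : Fin n → Fin n → ℂ × ℂ}
    (h_posDef : (1 - (quatMatrix n x)ᴴ * quatMatrix n x).PosDef ↔
      (1 - (quatMatrix n y)ᴴ * quatMatrix n y).PosDef)
    (h_gram : ((quatMatrix n x)ᴴ * quatMatrix n x).det = ((quatMatrix n y)ᴴ * quatMatrix n y).det)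
    (h_compl : (1 - (quatMatrix n x)ᴴ * quatMatrix n x).det =
      (1 - (quatMatrix n y)ᴴ * quatMatrix n y).det) :
    quatAntiSphericalWeight n β₁ β₂ x = quatAntiSphericalWeight n β₁ β₂ y := by
  classical
  simp only [quatAntiSphericalWeight, Set.indicator_apply, Set.mem_ofPred_eq, h_posDef, h_gram,
    h_compl]

lemma quatAntiSphericalWeight_permute_columns (σ : Equiv.Perm (Fin n))
    (x : Fin n → Fin n → ℂ × ℂ) :
    quatAntiSphericalWeight n β₁ β₂ (fun i k => x i (σ k)) =
      quatAntiSphericalWeight n β₁ β₂ x := by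
  let e : Fin n × Fin 2 ≃ Fin n × Fin 2 := Equiv.prodCongr σ (Equiv.refl _)
  have h_matrix : quatMatrix n (fun i k => x i (σ k)) = (quatMatrix n x).submatrix id e := rfl
  have h_gram : (quatMatrix n fun i k => x i (σ k))ᴴ * quatMatrix n (fun i k => x i (σ k)) =
      ((quatMatrix n x)ᴴ * quatMatrix n x).submatrix e e := by
    rw [h_matrix, conjTranspose_submatrix, ← submatrix_mul _ _ e id e Function.bijective_id]
  have h_compl : 1 - ((quatMatrix n x)ᴴ * quatMatrix n x).submatrix e e =
      (1 - (quatMatrix n x)ᴴ * quatMatrix n x).submatrix e e := by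
    rw [submatrix_sub, Pi.sub_apply, Pi.sub_apply, submatrix_one_equiv]
  refine quatAntiSphericalWeight_congr ?_ ?_ ?_ <;> rw [h_gram]
  · rw [h_compl]
    exact ⟨fun h => by simpa using h.submatrix e.symm.injective, fun h => h.submatrix e.injective⟩
  · rw [det_submatrix_equiv_self]
  · rw [h_compl, det_submatrix_equiv_self]

lemma measurePreserving_permute_columns {ι κ Y : Type*} [Fintype ι] [Fintype κ] [MeasureSpace Y]
    [SigmaFinite (volume : Measure Y)] (σ : Equiv.Perm κ) :
    MeasurePreserving fun (x : ι → κ → Y) i k => x i (σ k) :=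
  volume_preserving_pi (f := fun _ (y : κ → Y) k => y (σ k)) fun _ =>
    volume_preserving_arrowCongr' σ.symm (MeasurableEquiv.refl Y) (.id _)

lemma integral_quatVol_columns_eq {S T : Finset (Fin n)} (hST : S.card = T.card) :
    ∫ x, quatAntiSphericalWeight n β₁ β₂ x * quatVol (fun (i : S) (k : T) => x i k) =
      ∫ x, quatAntiSphericalWeight n β₁ β₂ x * quatVol (fun i k : S => x i k) := by
  let e : S ≃ T := Finset.equivOfCardEq hST
  have h_permute (x : Fin n → Fin n → ℂ × ℂ) :
      quatVol (fun (i : S) (k : T) => x i k) =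
        quatVol fun i k : S => x i (e.extendSubtype k) := by
    rw [← quatVol_submatrix_equiv (Equiv.refl S) e]
    simp only [Equiv.extendSubtype_apply_of_mem e _ (Subtype.prop _), Equiv.refl_apply,
      Subtype.coe_eta]
  simp only [h_permute]
  exact integral_quatAntiSphericalWeight_smul_comp
    (measurePreserving_permute_columns e.extendSubtype)
    (quatAntiSphericalWeight_permute_columns _)
    (f := fun x => quatVol fun i k : S => x i k) (continuous_quatVol.comp (by fun_prop))

lemma choose_mul_integral_quatVol (hβ₁ : 0 ≤ β₁) (hβ₂ : 0 ≤ β₂) (S : Finset (Fin n)) :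
    n.choose S.card * ∫ x, quatAntiSphericalWeight n β₁ β₂ x *
        quatVol (fun i k : S => x i k) = rowMoment β₁ β₂ S := by
  have h_cauchyBinet (x : Fin n → Fin n → ℂ × ℂ) :
      rowVol S x = ∑ T ∈ Finset.powersetCard S.card (Finset.univ : Finset (Fin n)),
        quatVol (fun (i : S) (k : T) => x i k) := by
    simpa [rowVol] using (sum_powersetCard_quatVol (fun i : S => x i) (by
      simpa using Finset.card_le_univ S)).symm
  have h_int (T : Finset (Fin n)) : Integrable fun x =>
      quatAntiSphericalWeight n β₁ β₂ x * quatVol fun (i : S) (k : T) => x i k :=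
    integrable_quatAntiSphericalWeight_smul hβ₁ hβ₂ (continuous_quatVol.comp (by fun_prop))
  simp only [rowMoment, h_cauchyBinet, Finset.mul_sum]
  rw [integral_finsetSum _ fun T _ => h_int T, Finset.sum_congr rfl fun T hT =>
      integral_quatVol_columns_eq (Finset.mem_powersetCard.1 hT).2.symm,
    Finset.sum_const, Finset.card_powersetCard, Finset.card_univ, Fintype.card_fin, nsmul_eq_mul]

lemma sum_powersetCard_integral_quatVol (hβ₁ : 0 ≤ β₁) (hβ₂ : 0 ≤ β₂) {j : ℕ} (hj : j ≤ n) :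
    ∑ S ∈ Finset.powersetCard j (Finset.univ : Finset (Fin n)),
        ∫ x, quatAntiSphericalWeight n β₁ β₂ x * quatVol (fun i k : S => x i k) =
      (∏ i ∈ Finset.range j, (β₁ + n + 1 - (i + 1)) / (β₁ + β₂ + 2 * n + 1 / 2 - (i + 1))) *
        ∫ x, quatAntiSphericalWeight n β₁ β₂ x := by
  have h_choose : (n.choose j : ℝ) ≠ 0 := Nat.cast_ne_zero.2 (Nat.choose_pos hj).ne'
  refine mul_left_cancel₀ h_choose ?_
  rw [← mul_assoc, ← sum_powersetCard_rowMoment hβ₁ hβ₂ hj, Finset.mul_sum]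
  refine Finset.sum_congr rfl fun S hS => ?_
  rw [← choose_mul_integral_quatVol hβ₁ hβ₂ S, (Finset.mem_powersetCard.1 hS).2]

/-- Left multiplication of the quaternion row `t` by the imaginary unit `diag (i, -i)`. -/
noncomputable def rotateRow (t : Fin n) (x : Fin n → Fin n → ℂ × ℂ) : Fin n → Fin n → ℂ × ℂ :=
  fun i => if i = t then fun k => (Complex.I * (x i k).1, Complex.I * (x i k).2) else x i

/-- The diagonal entries of the matrix implementing `rotateRow`. -/
noncomputable def rotateDiag (t : Fin n) (a : Fin n × Fin 2) : ℂ :=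
  if a.1 = t then (if a.2 = 0 then Complex.I else -Complex.I) else 1

lemma star_rotateDiag_mul_self (t : Fin n) (a : Fin n × Fin 2) :
    star (rotateDiag t a) * rotateDiag t a = 1 := by
  unfold rotateDiag
  split_ifs <;> simp

lemma quatMatrix_rotateRow (t : Fin n) (x : Fin n → Fin n → ℂ × ℂ) :
    quatMatrix n (rotateRow t x) = diagonal (rotateDiag t) * quatMatrix n x := by
  ext ⟨i, e⟩ ⟨k, f⟩
  rw [diagonal_mul]
  rcases eq_or_ne i t with rfl | h
  · fin_cases e <;> fin_cases f <;> simp [quatMatrix, rotateRow, rotateDiag]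
  · simp [quatMatrix, rotateRow, rotateDiag, h]

lemma quatAntiSphericalWeight_rotateRow (t : Fin n) (x : Fin n → Fin n → ℂ × ℂ) :
    quatAntiSphericalWeight n β₁ β₂ (rotateRow t x) = quatAntiSphericalWeight n β₁ β₂ x := by
  have h_unitary : (diagonal (rotateDiag t))ᴴ * diagonal (rotateDiag t) = 1 := by
    rw [diagonal_conjTranspose, diagonal_mul_diagonal, ← diagonal_one]
    exact congrArg diagonal (funext (star_rotateDiag_mul_self t))
  have h_gram : (quatMatrix n (rotateRow t x))ᴴ * quatMatrix n (rotateRow t x) =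
      (quatMatrix n x)ᴴ * quatMatrix n x := by
    rw [quatMatrix_rotateRow, conjTranspose_mul, Matrix.mul_assoc,
      ← Matrix.mul_assoc (diagonal _)ᴴ, h_unitary, Matrix.one_mul]
  refine quatAntiSphericalWeight_congr ?_ ?_ ?_ <;> rw [h_gram]

lemma measurePreserving_rotateRow (t : Fin n) : MeasurePreserving (rotateRow t) := by
  refine volume_preserving_pi (f := fun i (y : Fin n → ℂ × ℂ) =>
    if i = t then fun k => (Complex.I * (y k).1, Complex.I * (y k).2) else y) fun i => ?_
  have h_mul_I : MeasurePreserving fun w : ℂ => Complex.I * w :=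
    (rotation ⟨Complex.I, by simp [Submonoid.unitSphere]⟩).measurePreserving
  by_cases h : i = t
  · simp only [h, if_true]
    exact volume_preserving_pi fun _ => h_mul_I.prod h_mul_I
  · simp only [h, if_false]
    exact .id _

end Symmetry

section Expansion

variable {n : ℕ} {β₁ β₂ : ℝ}

/-- The matrix whose rows in `U` are those of `-G` and whose other rows are those of `z I`. -/
noncomputable def mixedRows (z : ℂ) (U : Finset (Fin n × Fin 2)) (x : Fin n → Fin n → ℂ × ℂ) :
    Matrix (Fin n × Fin 2) (Fin n × Fin 2) ℂ :=
  Matrix.of fun a b => if a ∈ U then -quatMatrix n x a b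
    else (z • (1 : Matrix (Fin n × Fin 2) (Fin n × Fin 2) ℂ)) a b

lemma det_smul_one_sub_quatMatrix (z : ℂ) (x : Fin n → Fin n → ℂ × ℂ) :
    (z • (1 : Matrix (Fin n × Fin 2) (Fin n × Fin 2) ℂ) - quatMatrix n x).det =
      ∑ U, (mixedRows z U x).det := by
  rw [sub_eq_neg_add]
  refine ((detRowAlternating (R := ℂ)).toMultilinearMap.map_add_univ (-quatMatrix n x)
    (z • (1 : Matrix (Fin n × Fin 2) (Fin n × Fin 2) ℂ))).trans
      (Finset.sum_congr rfl fun U _ => congrArg Matrix.det ?_)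
  ext a b
  by_cases h : a ∈ U
  · refine (congrFun (Finset.piecewise_eq_of_mem U _ _ h) b).trans ?_
    simp [mixedRows, h]
  · refine (congrFun (Finset.piecewise_eq_of_notMem U _ _ h) b).trans ?_
    simp [mixedRows, h]

lemma continuous_mixedRows (z : ℂ) (U : Finset (Fin n × Fin 2)) :
    Continuous (mixedRows z U) := by
  refine continuous_matrix fun a b => ?_
  simp only [mixedRows, Matrix.of_apply]
  split_ifs
  · exact ((continuous_quatMatrix n).matrix_elem a b).neg
  · exact continuous_const

lemma det_mixedRows_rotateRow (z : ℂ) (U : Finset (Fin n × Fin 2)) (t : Fin n)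
    (x : Fin n → Fin n → ℂ × ℂ) :
    (mixedRows z U (rotateRow t x)).det =
      (∏ a, if a ∈ U then rotateDiag t a else 1) * (mixedRows z U x).det := by
  rw [← det_mul_column]
  congr 1
  ext a b
  by_cases h : a ∈ U <;> simp [mixedRows, h, quatMatrix_rotateRow]

lemma prod_rotateDiag_ne_one {U : Finset (Fin n × Fin 2)} {t : Fin n}
    (ht : ¬((t, 0) ∈ U ↔ (t, 1) ∈ U)) : (∏ a, if a ∈ U then rotateDiag t a else 1) ≠ 1 := by
  have h_I : Complex.I ≠ 1 := by simp [Complex.ext_iff]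
  have h_neg_I : -Complex.I ≠ 1 := by simp [Complex.ext_iff]
  rw [Fintype.prod_prod_type, Fintype.prod_eq_single t fun i hi => by simp [rotateDiag, hi],
    Fin.prod_univ_two]
  by_cases h₀ : (t, (0 : Fin 2)) ∈ U <;> by_cases h₁ : (t, (1 : Fin 2)) ∈ U
  · exact absurd (iff_of_true h₀ h₁) ht
  · simpa [rotateDiag, h₀, h₁] using h_I
  · simpa [rotateDiag, h₀, h₁] using h_neg_I
  · exact absurd (iff_of_false h₀ h₁) ht

lemma integral_det_mixedRows_eq_zero (z : ℂ) {U : Finset (Fin n × Fin 2)} {t : Fin n}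
    (ht : ¬((t, 0) ∈ U ↔ (t, 1) ∈ U)) :
    ∫ x, quatAntiSphericalWeight n β₁ β₂ x • (mixedRows z U x).det = 0 := by
  have h := integral_quatAntiSphericalWeight_smul_comp (β₁ := β₁) (β₂ := β₂)
    (measurePreserving_rotateRow t) (quatAntiSphericalWeight_rotateRow t)
    (continuous_mixedRows z U).matrix_det
  simp only [det_mixedRows_rotateRow, ← mul_smul_comm] at h
  rw [integral_const_mul] at h
  by_contra h_ne
  exact prod_rotateDiag_ne_one ht (mul_right_cancel₀ h_ne (h.trans (one_mul _).symm))

lemma det_mixedRows_product (z : ℂ) (S : Finset (Fin n)) (x : Fin n → Fin n → ℂ × ℂ) :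
    (mixedRows z (S ×ˢ Finset.univ) x).det =
      z ^ (2 * (n - S.card)) * quatVol (fun i k : S => x i k) := by
  have h_triangular (a : Fin n × Fin 2) (ha : a.1 ∉ S) (b : Fin n × Fin 2) (hb : b.1 ∈ S) :
      mixedRows z (S ×ˢ Finset.univ) x a b = 0 := by
    have hab : a ≠ b := fun h => ha (h ▸ hb)
    simp [mixedRows, ha, hab]
  have h_scalar : (mixedRows z (S ×ˢ Finset.univ) x).toSquareBlockProp (fun a => a.1 ∉ S) =
      z • 1 := by
    ext ⟨a, ha⟩ ⟨b, hb⟩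
    simp [mixedRows, toSquareBlockProp, ha, Matrix.one_apply, Subtype.ext_iff]
  have h_card : Fintype.card {a : Fin n × Fin 2 // a.1 ∉ S} = 2 * (n - S.card) := by
    rw [Fintype.card_congr (Equiv.prodSubtypeFstEquivSubtypeProd (p := fun i => i ∉ S)),
      Fintype.card_prod, Fintype.card_fin, Fintype.card_subtype_compl, Fintype.card_fin,
      Fintype.card_coe, mul_comm]
  let e := Equiv.prodSubtypeFstEquivSubtypeProd (β := Fin 2) (p := fun i => i ∈ S)
  have h_quat : (mixedRows z (S ×ˢ Finset.univ) x).toSquareBlockProp (fun a => a.1 ∈ S) =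
      (-quatBlock fun i k : S => x i k).submatrix e e := by
    ext ⟨a, ha⟩ b
    exact if_pos (Finset.mem_product.2 ⟨ha, Finset.mem_univ _⟩)
  rw [twoBlockTriangular_det _ (fun a => a.1 ∈ S) h_triangular, h_scalar, det_smul, det_one,
    mul_one, h_card, mul_comm, h_quat, det_submatrix_equiv_self, det_neg, Fintype.card_prod,
    Fintype.card_fin, (even_two.mul_left _).neg_one_pow, one_mul, quatVol_square]

lemma exists_product_univ_eq {ι κ : Type*} [Fintype κ] (k₀ : κ) {U : Finset (ι × κ)}
    (hU : ∀ i k, (i, k) ∈ U ↔ (i, k₀) ∈ U) : ∃ S : Finset ι, S ×ˢ Finset.univ = U := by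
  classical
  refine ⟨U.image Prod.fst, ?_⟩
  ext ⟨i, k⟩
  simpa [hU i] using fun _ => ⟨k⟩

lemma integral_quatAntiSphericalWeight_mul_det (hβ₁ : 0 ≤ β₁) (hβ₂ : 0 ≤ β₂) (z : ℂ) :
    ∫ x, (quatAntiSphericalWeight n β₁ β₂ x : ℂ) *
        (z • (1 : Matrix (Fin n × Fin 2) (Fin n × Fin 2) ℂ) - quatMatrix n x).det =
      ∑ S : Finset (Fin n), z ^ (2 * (n - S.card)) *
        ((∫ x, quatAntiSphericalWeight n β₁ β₂ x * quatVol (fun i k : S => x i k) : ℝ) : ℂ) := by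
  simp only [← Complex.real_smul, det_smul_one_sub_quatMatrix, Finset.smul_sum]
  rw [integral_finsetSum _ fun U _ => integrable_quatAntiSphericalWeight_smul hβ₁ hβ₂
    (continuous_mixedRows z U).matrix_det]
  symm
  refine Finset.sum_of_injOn (fun S => S ×ˢ Finset.univ) ?_ (by simp) (fun U _ hU => ?_)
    fun S _ => ?_
  · intro S _ T _ hST
    ext i
    simpa using Finset.ext_iff.1 hST (i, 0)
  · by_cases h : ∀ t, (t, 0) ∈ U ↔ (t, 1) ∈ U
    · obtain ⟨S, rfl⟩ := exists_product_univ_eq (U := U) 0 (by simp [Fin.forall_fin_two, h])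
      exact (hU ⟨S, by simp⟩).elim
    · obtain ⟨t, ht⟩ := not_forall.1 h
      exact integral_det_mixedRows_eq_zero z ht
  · simp only [det_mixedRows_product, ← mul_smul_comm, integral_const_mul,
      ← integral_complex_ofReal, Complex.ofReal_mul, Complex.real_smul]

end Expansion

/-- The even-degree skew orthogonal polynomial for the quaternion real anti-spherical
ensemble: `⟨det (z I - G)⟩ = ∑_{j=0}^{n} z^{2(n-j)} ∏_{i=1}^{j}
(β₁ + n + 1 - i)/(β₁ + β₂ + 2n + 1/2 - i)`. -/
theorem quatAntiSpherical_even_skew_orthogonal_poly (n : ℕ) (hn : 0 < n)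
    (β₁ β₂ : ℝ) (hβ₁ : 0 ≤ β₁) (hβ₂ : 0 ≤ β₂) (z : ℂ) :
    (∫ x : Fin n → Fin n → ℂ × ℂ,
        (quatAntiSphericalWeight n β₁ β₂ x : ℂ) *
          (z • (1 : Matrix (Fin n × Fin 2) (Fin n × Fin 2) ℂ) - quatMatrix n x).det) /
      ((∫ x : Fin n → Fin n → ℂ × ℂ, quatAntiSphericalWeight n β₁ β₂ x : ℝ) : ℂ)
      = ∑ j ∈ Finset.range (n + 1), z ^ (2 * (n - j)) *
          ∏ i ∈ Finset.range j,
            (((β₁ + n + 1 - (i + 1)) / (β₁ + β₂ + 2 * n + 1 / 2 - (i + 1)) : ℝ) : ℂ) := by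
  have h_norm : ((∫ x, quatAntiSphericalWeight n β₁ β₂ x : ℝ) : ℂ) ≠ 0 :=
    Complex.ofReal_ne_zero.2 (integral_quatAntiSphericalWeight_pos hβ₁ hβ₂).ne'
  rw [div_eq_iff h_norm, integral_quatAntiSphericalWeight_mul_det hβ₁ hβ₂, ← Finset.powerset_univ,
    Finset.sum_powerset, Finset.card_univ, Fintype.card_fin, Finset.sum_mul]
  refine Finset.sum_congr rfl fun j hj => ?_
  rw [← Complex.ofReal_prod, mul_assoc, ← Complex.ofReal_mul,
    ← sum_powersetCard_integral_quatVol hβ₁ hβ₂ (Finset.mem_range_succ_iff.1 hj),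
    Complex.ofReal_sum, Finset.mul_sum]
  refine Finset.sum_congr rfl fun S hS => ?_
  rw [(Finset.mem_powersetCard.1 hS).2]
end

section
/- Let n be a positive integer and let β₁, β₂ be real parameters with β₁ ≥ 0 and β₂ ≥ 0. For G drawn from the quaternion real anti-spherical ensemble of size 2n with parameters (β₁, β₂), and for every complex number z, z·⟨det(z·I − G)⟩ + ⟨det(z·I − G)·Tr(G)⟩ = z^{2n+1}; that is, the odd-degree skew orthogonal polynomial for the quaternion real anti-spherical ensemble is the monomial Q_{2n+1}(z) = z^{2n+1}. -/
open MeasureTheory Matrix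
open scoped ComplexOrder

/-!
Expand `det (z • 1 - G) = ∑ S, z ^ |Sᶜ| (-1) ^ |S| m S`, where `m S` is the principal minor of `G`
on `S`. The ensemble is invariant under left multiplication by the compact symplectic group `Sp(n)`.
Multiplying one block row by the quaternion `i`, that is by `diag(i, -i)`, shows that
`⟨m S * G c c⟩ = 0` for `c ∈ S`, and that `⟨m S⟩` and every term of its Laplace expansions vanish
unless `S` is a union of blocks. If `S` is such a union, multiplying a block row by the quaternion
`j` and permuting block rows show that the term in column `c` of the Laplace expansion of `⟨m S⟩`
along a row of `S` does not depend on the row. So for `S ≠ ∅` the sum over `c ∈ S` of the diagonal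
terms is `⟨m S⟩`, just as the sum along one row. For `c ∉ S`, `m S * G c c` is the diagonal term at
`c` for `insert c S`, and hence in `z ⟨det (z • 1 - G)⟩ + ⟨det (z • 1 - G) * tr G⟩` everything
cancels except for the contribution `z ^ (2 * n + 1)` of `S = ∅`.
-/

namespace QuatAntiSpherical

section PrincipalMinors

variable {ι R : Type*} [DecidableEq ι]

/-- The matrix with the rows of `G` indexed by `S` and the rows of the identity elsewhere. Its
determinant is the principal minor of `G` on `S`. -/
def principalBlock [Zero R] [One R] (S : Finset ι) (G : Matrix ι ι R) : Matrix ι ι R :=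
  Matrix.of (S.piecewise G.row (1 : Matrix ι ι R).row)

theorem principalBlock_apply [Zero R] [One R] (S : Finset ι) (G : Matrix ι ι R) (u v : ι) :
    principalBlock S G u v = if u ∈ S then G u v else if u = v then 1 else 0 := by
  by_cases hu : u ∈ S <;> simp [principalBlock, hu, Matrix.one_apply]

theorem principalBlock_empty [Zero R] [One R] (G : Matrix ι ι R) : principalBlock ∅ G = 1 := by
  ext u v
  simp [principalBlock_apply, Matrix.one_apply]

theorem principalBlock_eq_self [Zero R] [One R] {S : Finset ι} {G : Matrix ι ι R}
    (h : ∀ u ∉ S, ∀ v, G u v = (1 : Matrix ι ι R) u v) : principalBlock S G = G := by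
  ext u v
  by_cases hu : u ∈ S <;> simp [principalBlock, hu, h]

theorem continuous_principalBlock [Zero R] [One R] [TopologicalSpace R] (S : Finset ι) :
    Continuous (principalBlock S : Matrix ι ι R → Matrix ι ι R) := by
  refine continuous_matrix fun u v => ?_
  simp only [principalBlock_apply]
  split_ifs <;> fun_prop

variable [Fintype ι] [CommRing R]

theorem principalBlock_mul {S : Finset ι} {U : Matrix ι ι R} (hU : ∀ u ∈ S, ∀ v ∉ S, U u v = 0)
    (G : Matrix ι ι R) :
    principalBlock S (U * G) = principalBlock S U * principalBlock S G := by
  ext u v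
  by_cases hu : u ∈ S
  · simp only [Matrix.mul_apply, principalBlock_apply, hu, if_true]
    refine Finset.sum_congr rfl fun w _ => ?_
    by_cases hw : w ∈ S <;> simp [hw, hU u hu]
  · rw [Matrix.mul_apply, Finset.sum_eq_single u] <;>
      simp +contextual [principalBlock_apply, hu, eq_comm]

theorem det_principalBlock_diagonal (S : Finset ι) (s : ι → R) :
    (principalBlock S (diagonal s)).det = ∏ u ∈ S, s u := by
  have h : principalBlock S (diagonal s) = diagonal fun u => if u ∈ S then s u else 1 := by
    ext u v
    by_cases hu : u ∈ S <;> simp [principalBlock_apply, hu, diagonal_apply]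
  rw [h, det_diagonal, Fintype.prod_ite_mem]

theorem det_smul_one_sub (z : R) (G : Matrix ι ι R) :
    (z • 1 - G).det =
      ∑ S : Finset ι, z ^ Sᶜ.card * (-1) ^ S.card * (principalBlock S G).det := by
  nontriviality R
  calc (z • 1 - G).det
      = ∑ k ∈ Finset.range (Fintype.card ι + 1),
          G.charpoly.coeff (Fintype.card ι - k) * z ^ (Fintype.card ι - k) := by
        rw [smul_one_eq_diagonal, ← scalar_apply, ← eval_charpoly, Polynomial.eval_eq_sum_range,
          charpoly_natDegree_eq_dim, ← Finset.sum_range_reflect]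
        simp only [Nat.add_sub_cancel]
    _ = ∑ k ∈ Finset.range (Fintype.card ι + 1), ∑ S ∈ Finset.powersetCard k Finset.univ,
          z ^ Sᶜ.card * (-1) ^ S.card * (principalBlock S G).det := by
        refine Finset.sum_congr rfl fun k hk => ?_
        rw [charpoly_coeff_eq_sum_minors G k (Finset.mem_range_succ_iff.mp hk), mul_assoc,
          Finset.sum_mul, Finset.mul_sum]
        refine Finset.sum_congr rfl fun S hS => ?_
        rw [← det_piecewise_one_eq_submatrix_det, ← principalBlock, Finset.card_compl,
          (Finset.mem_powersetCard.mp hS).2]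
        ring
    _ = _ := by rw [← Finset.powerset_univ, Finset.sum_powerset, Finset.card_univ]

/-- The `c`-th term in the Laplace expansion along row `u` of the principal minor of `G` on `S`. -/
def laplaceTerm (S : Finset ι) (u c : ι) (G : Matrix ι ι R) : R :=
  G u c * (principalBlock S G).adjugate c u

theorem adjugate_principalBlock_eq_zero {S : Finset ι} {u c : ι} (hc : c ∉ S) (huc : u ≠ c)
    (G : Matrix ι ι R) : (principalBlock S G).adjugate c u = 0 := by
  have h := congrFun₂ (mul_adjugate (principalBlock S G)) c u
  simpa [Matrix.mul_apply, principalBlock_apply, hc, huc.symm] using h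

theorem sum_laplaceTerm {S : Finset ι} {u : ι} (hu : u ∈ S) (G : Matrix ι ι R) :
    ∑ c ∈ S, laplaceTerm S u c G = (principalBlock S G).det := by
  rw [det_eq_sum_mul_adjugate_row _ u]
  simp only [principalBlock_apply, hu, if_true]
  refine Finset.sum_subset (Finset.subset_univ S) fun c _ hc => ?_
  rw [laplaceTerm, adjugate_principalBlock_eq_zero hc (fun h => hc (h ▸ hu)), mul_zero]

theorem laplaceTerm_insert_self {S : Finset ι} {c : ι} (hc : c ∉ S) (G : Matrix ι ι R) :
    laplaceTerm (insert c S) c c G = (principalBlock S G).det * G c c := by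
  have h : (principalBlock (insert c S) G).updateRow c (Pi.single c 1) = principalBlock S G := by
    ext u v
    by_cases hu : u = c
    · subst hu
      simp [principalBlock_apply, hc, Pi.single_apply, eq_comm]
    · simp [principalBlock_apply, hu]
  rw [laplaceTerm, adjugate_apply, h, mul_comm]

/-- The monomial matrix whose only nonzero entry in row `u` is `s u`, in column `τ u`. -/
def monomialMatrix (s : ι → R) (τ : Equiv.Perm ι) : Matrix ι ι R :=
  diagonal s * τ.permMatrix R

theorem monomialMatrix_apply (s : ι → R) (τ : Equiv.Perm ι) (u v : ι) :
    monomialMatrix s τ u v = if τ u = v then s u else 0 := by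
  simp [monomialMatrix, PEquiv.toMatrix_apply]

theorem monomialMatrix_one (s : ι → R) : monomialMatrix s 1 = diagonal s := by
  simp [monomialMatrix]

theorem det_monomialMatrix (s : ι → R) (τ : Equiv.Perm ι) :
    (monomialMatrix s τ).det = (∏ u, s u) * ((Equiv.Perm.sign τ : ℤ) : R) := by
  rw [monomialMatrix, det_mul, det_diagonal, det_permutation]

theorem monomialMatrix_mul_apply (s : ι → R) (τ : Equiv.Perm ι) (G : Matrix ι ι R) (u v : ι) :
    (monomialMatrix s τ * G) u v = s u * G (τ u) v := by
  simp [Matrix.mul_apply, monomialMatrix_apply]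

theorem monomialMatrix_mem_unitaryGroup [StarRing R] {s : ι → R} (hs : ∀ u, star (s u) * s u = 1)
    (τ : Equiv.Perm ι) : monomialMatrix s τ ∈ unitaryGroup ι R := by
  rw [mem_unitaryGroup_iff']
  ext u v
  rw [star_eq_conjTranspose, Matrix.mul_apply, ← Equiv.sum_comp τ.symm]
  simp [monomialMatrix_apply, apply_ite star, hs, Matrix.one_apply, eq_comm]

section

variable {S : Finset ι} {s : ι → R} {τ : Equiv.Perm ι}

theorem principalBlock_monomialMatrix_mul (hτ : ∀ u ∈ S, τ u ∈ S) (G : Matrix ι ι R) :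
    principalBlock S (monomialMatrix s τ * G) =
      principalBlock S (monomialMatrix s τ) * principalBlock S G :=
  principalBlock_mul (fun u hu v hv => by
    rw [monomialMatrix_apply, if_neg fun h : τ u = v => hv (h ▸ hτ u hu)]) G

theorem det_principalBlock_diagonal_mul (S : Finset ι) (s : ι → R) (G : Matrix ι ι R) :
    (principalBlock S (monomialMatrix s 1 * G)).det =
      (∏ u ∈ S, s u) * (principalBlock S G).det := by
  rw [principalBlock_monomialMatrix_mul (fun _ hu => hu), det_mul, monomialMatrix_one,
    det_principalBlock_diagonal]

theorem laplaceTerm_monomialMatrix_mul (hτ : ∀ u ∈ S, τ u ∈ S) {u : ι} (hu : u ∈ S) (c : ι)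
    (G : Matrix ι ι R) :
    laplaceTerm S u c (monomialMatrix s τ * G) =
      (principalBlock S (monomialMatrix s τ)).det * laplaceTerm S (τ u) c G := by
  set U := monomialMatrix s τ
  have hcol (w : ι) : (principalBlock S U).adjugate w u * s u =
      (principalBlock S U).det * (1 : Matrix ι ι R) w (τ u) := by
    have h := congrFun₂ (adjugate_mul (principalBlock S U)) w (τ u)
    rw [Matrix.mul_apply, Finset.sum_eq_single u] at h
    · simpa [principalBlock_apply, hu, U, monomialMatrix_apply] using h
    · intro v _ hvu
      by_cases hv : v ∈ S
      · simp [principalBlock_apply, hv, U, monomialMatrix_apply, hvu]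
      · have hvτ : v ≠ τ u := fun h => hv (h ▸ hτ u hu)
        simp [principalBlock_apply, hv, hvτ]
    · simp
  calc laplaceTerm S u c (U * G)
      = G (τ u) c * ∑ w, (principalBlock S G).adjugate c w *
          ((principalBlock S U).adjugate w u * s u) := by
        rw [laplaceTerm, monomialMatrix_mul_apply, principalBlock_monomialMatrix_mul hτ,
          adjugate_mul_distrib, Matrix.mul_apply]
        simp only [Finset.mul_sum]
        exact Finset.sum_congr rfl fun w _ => by ring
    _ = (principalBlock S U).det * laplaceTerm S (τ u) c G := by
        simp only [hcol, Matrix.one_apply, mul_ite, mul_one, mul_zero, Finset.sum_ite_eq',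
          Finset.mem_univ, if_true, laplaceTerm]
        ring

theorem laplaceTerm_monomialMatrix_mul_of_fixed_compl (hτ : ∀ u ∉ S, τ u = u)
    (hs : ∀ u ∉ S, s u = 1) (hdet : (∏ u, s u) * ((Equiv.Perm.sign τ : ℤ) : R) = 1) {u : ι}
    (hu : u ∈ S) (c : ι) (G : Matrix ι ι R) :
    laplaceTerm S u c (monomialMatrix s τ * G) = laplaceTerm S (τ u) c G := by
  have hS : ∀ v ∈ S, τ v ∈ S := fun v hv =>
    by_contra fun h => h ((τ.injective (hτ _ h)).symm ▸ hv)
  have hself : principalBlock S (monomialMatrix s τ) = monomialMatrix s τ :=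
    principalBlock_eq_self fun v hv w => by
      simp [monomialMatrix_apply, hτ v hv, hs v hv, Matrix.one_apply]
  rw [laplaceTerm_monomialMatrix_mul hS hu, hself, det_monomialMatrix, hdet, one_mul]

theorem laplaceTerm_diagonal_mul {u : ι} (hu : u ∈ S) (c : ι) (s : ι → R) (G : Matrix ι ι R) :
    laplaceTerm S u c (monomialMatrix s 1 * G) = (∏ v ∈ S, s v) * laplaceTerm S u c G := by
  rw [laplaceTerm_monomialMatrix_mul (fun _ hv => hv) hu, monomialMatrix_one,
    det_principalBlock_diagonal, Equiv.Perm.one_apply]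

end

variable [TopologicalSpace R] [IsTopologicalRing R]

@[fun_prop]
theorem continuous_det_principalBlock (S : Finset ι) :
    Continuous fun G : Matrix ι ι R => (principalBlock S G).det :=
  (continuous_principalBlock S).matrix_det

@[fun_prop]
theorem continuous_laplaceTerm (S : Finset ι) (u c : ι) :
    Continuous fun G : Matrix ι ι R => laplaceTerm S u c G :=
  (continuous_id.matrix_elem u c).mul
    ((continuous_principalBlock S).matrix_adjugate.matrix_elem c u)

end PrincipalMinors

theorem sum_notMem_insert_eq_sum_mem {ι M : Type*} [Fintype ι] [DecidableEq ι] [AddCommMonoid M]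
    (f : Finset ι → ι → M) :
    ∑ S : Finset ι, ∑ c ∈ Sᶜ, f (insert c S) c = ∑ S : Finset ι, ∑ c ∈ S, f S c := by
  rw [Finset.sum_sigma', Finset.sum_sigma']
  refine Finset.sum_bij' (fun p _ => ⟨insert p.2 p.1, p.2⟩) (fun p _ => ⟨p.1.erase p.2, p.2⟩)
    ?_ ?_ ?_ ?_ ?_ <;>
  rintro ⟨S, c⟩ h <;> simp_all [Finset.insert_erase]

section InvariantMeasures

variable {n : ℕ}

/-- The type of complex matrices with rows and columns indexed by `n` blocks of size two. -/
abbrev BlockMatrix (n : ℕ) : Type := Matrix (Fin n × Fin 2) (Fin n × Fin 2) ℂ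

noncomputable instance : MeasurableSpace (BlockMatrix n) :=
  inferInstanceAs (MeasurableSpace (Fin n × Fin 2 → Fin n × Fin 2 → ℂ))

instance : BorelSpace (BlockMatrix n) :=
  inferInstanceAs (BorelSpace (Fin n × Fin 2 → Fin n × Fin 2 → ℂ))

instance : SecondCountableTopology (BlockMatrix n) :=
  inferInstanceAs (SecondCountableTopology (Fin n × Fin 2 → Fin n × Fin 2 → ℂ))

theorem mem_range_quatMatrix_iff {G : BlockMatrix n} :
    G ∈ Set.range (quatMatrix n) ↔ ∀ j k, G (j, 1) (k, 0) = -star (G (j, 0) (k, 1)) ∧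
      G (j, 1) (k, 1) = star (G (j, 0) (k, 0)) := by
  constructor
  · rintro ⟨x, rfl⟩ j k
    simp [quatMatrix]
  · intro h
    refine ⟨fun j k => (G (j, 0) (k, 0), G (j, 0) (k, 1)), ?_⟩
    ext ⟨j, a⟩ ⟨k, b⟩
    fin_cases a <;> fin_cases b <;> simp [quatMatrix, h]

/-- The compact symplectic group `Sp(n)`: the unitary matrices of quaternion block form. -/
def compactSymplectic (n : ℕ) : Set (BlockMatrix n) :=
  {U | U ∈ unitaryGroup (Fin n × Fin 2) ℂ ∧ U ∈ Set.range (quatMatrix n)}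

theorem monomialMatrix_mem_compactSymplectic {s : Fin n × Fin 2 → ℂ}
    {τ : Equiv.Perm (Fin n × Fin 2)} (hs : ∀ u, ‖s u‖ = 1)
    (h : monomialMatrix s τ ∈ Set.range (quatMatrix n)) :
    monomialMatrix s τ ∈ compactSymplectic n :=
  ⟨monomialMatrix_mem_unitaryGroup (fun u => by simp [Complex.conj_mul', hs]) τ, h⟩

/-- The row factors in left multiplication of the `i`-th block row by the quaternion `i`. -/
noncomputable def blockPhase (i : Fin n) (u : Fin n × Fin 2) : ℂ :=
  if u.1 = i then (if u.2 = 0 then Complex.I else -Complex.I) else 1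

theorem monomialMatrix_blockPhase_mem (i : Fin n) :
    monomialMatrix (blockPhase i) 1 ∈ compactSymplectic n := by
  refine monomialMatrix_mem_compactSymplectic (fun u => ?_)
    (mem_range_quatMatrix_iff.mpr fun j k => ?_)
  · unfold blockPhase
    split_ifs <;> simp
  · by_cases hj : j = i <;> simp [monomialMatrix_apply, blockPhase, hj, apply_ite]

/-- The row factors in left multiplication of the `i`-th block row by the quaternion `j`, which
moreover swaps the two rows of that block row. -/
noncomputable def blockFlip (i : Fin n) (u : Fin n × Fin 2) : ℂ :=
  if u = (i, 1) then -1 else 1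

theorem monomialMatrix_blockFlip_mem (i : Fin n) :
    monomialMatrix (blockFlip i) (Equiv.swap (i, 0) (i, 1)) ∈ compactSymplectic n := by
  refine monomialMatrix_mem_compactSymplectic (fun u => ?_)
    (mem_range_quatMatrix_iff.mpr fun j k => ?_)
  · unfold blockFlip
    split_ifs <;> simp
  · by_cases hj : j = i
    · simp [monomialMatrix_apply, blockFlip, hj, apply_ite]
    · simp [monomialMatrix_apply, blockFlip, hj, Equiv.swap_apply_of_ne_of_ne, apply_ite]

theorem monomialMatrix_blockSwap_mem (i k : Fin n) :
    monomialMatrix 1 (Equiv.prodCongrLeft fun _ => Equiv.swap i k) ∈ compactSymplectic n :=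
  monomialMatrix_mem_compactSymplectic (by simp)
    (mem_range_quatMatrix_iff.mpr fun j l => by simp [monomialMatrix_apply, apply_ite])

/-- Invariance of a measure on block matrices under left multiplication by `Sp(n)`. -/
def IsLeftSymplecticInvariant (μ : Measure (BlockMatrix n)) : Prop :=
  ∀ U ∈ compactSymplectic n, MeasurePreserving (U * ·) μ μ

namespace IsLeftSymplecticInvariant

variable {μ : Measure (BlockMatrix n)} (hμ : IsLeftSymplecticInvariant μ)

include hμ

theorem integral_mul_left {U : BlockMatrix n} (hU : U ∈ compactSymplectic n)
    {F : BlockMatrix n → ℂ} (hF : Continuous F) : ∫ G, F (U * G) ∂μ = ∫ G, F G ∂μ := by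
  conv_rhs => rw [← (hμ U hU).map_eq]
  exact (integral_map (hμ U hU).measurable.aemeasurable hF.aestronglyMeasurable).symm

theorem integral_eq_zero {U : BlockMatrix n} (hU : U ∈ compactSymplectic n)
    {F : BlockMatrix n → ℂ} (hF : Continuous F) {p : ℂ} (hp : p ≠ 1)
    (h : ∀ G, F (U * G) = p * F G) : ∫ G, F G ∂μ = 0 := by
  have hfix : p * ∫ G, F G ∂μ = ∫ G, F G ∂μ := by
    rw [← integral_const_mul, ← hμ.integral_mul_left hU hF]
    simp only [h]
  exact by_contra fun h0 => hp ((mul_eq_right₀ h0).mp hfix)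

end IsLeftSymplecticInvariant

theorem prod_blockPhase (i : Fin n) (S : Finset (Fin n × Fin 2)) :
    ∏ u ∈ S, blockPhase i u =
      (if (i, 0) ∈ S then Complex.I else 1) * (if (i, 1) ∈ S then -Complex.I else 1) := by
  rw [← Fintype.prod_ite_mem, Fintype.prod_prod_type, Finset.prod_eq_single i]
  · simp [Fin.prod_univ_two, blockPhase]
  · intro j _ hj
    simp [blockPhase, hj]
  · simp

theorem I_ne_one : Complex.I ≠ 1 := fun h => by simpa using congrArg Complex.re h

theorem neg_I_ne_one : -Complex.I ≠ 1 := fun h => by simpa using congrArg Complex.re h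

theorem prod_blockPhase_ne_one {i : Fin n} {S : Finset (Fin n × Fin 2)}
    (hi : ¬((i, 0) ∈ S ↔ (i, 1) ∈ S)) : ∏ u ∈ S, blockPhase i u ≠ 1 := by
  rw [prod_blockPhase]
  by_cases h0 : (i, 0) ∈ S <;> by_cases h1 : (i, 1) ∈ S <;>
    simp_all [I_ne_one, neg_I_ne_one]

theorem prod_blockPhase_mul_blockPhase_ne_one {c : Fin n × Fin 2} {S : Finset (Fin n × Fin 2)}
    (hc : c ∈ S) : (∏ u ∈ S, blockPhase c.1 u) * blockPhase c.1 c ≠ 1 := by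
  obtain ⟨i, a⟩ := c
  have h : (-1 : ℂ) ≠ 1 := by norm_num
  rw [prod_blockPhase]
  fin_cases a <;> by_cases h0 : (i, 0) ∈ S <;> by_cases h1 : (i, 1) ∈ S <;>
    simp_all [blockPhase, I_ne_one, neg_I_ne_one]

/-- A set of rows is a union of blocks if it contains both or neither of the rows of each block. -/
def IsBlockUnion (S : Finset (Fin n × Fin 2)) : Prop :=
  ∀ i, (i, 0) ∈ S ↔ (i, 1) ∈ S

theorem IsBlockUnion.mem_iff {S : Finset (Fin n × Fin 2)} (hS : IsBlockUnion S) (i : Fin n)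
    (a b : Fin 2) : (i, a) ∈ S ↔ (i, b) ∈ S := by
  have h := hS i
  fin_cases a <;> fin_cases b <;> simp_all

theorem integral_det_smul_one_sub {μ : Measure (BlockMatrix n)}
    (hint : ∀ F : BlockMatrix n → ℂ, Continuous F → Integrable F μ) (z : ℂ) :
    ∫ G, (z • 1 - G).det ∂μ = ∑ S : Finset (Fin n × Fin 2), z ^ Sᶜ.card * (-1) ^ S.card *
      ∫ G, (principalBlock S G).det ∂μ := by
  simp only [det_smul_one_sub]
  rw [integral_finsetSum _ fun S _ => hint _ (by fun_prop)]
  simp only [integral_const_mul]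

namespace IsLeftSymplecticInvariant

variable {μ : Measure (BlockMatrix n)} (hμ : IsLeftSymplecticInvariant μ)
  {S : Finset (Fin n × Fin 2)}

include hμ

theorem integral_det_principalBlock_mul_diag {c : Fin n × Fin 2} (hc : c ∈ S) :
    ∫ G, (principalBlock S G).det * G c c ∂μ = 0 := by
  refine hμ.integral_eq_zero (monomialMatrix_blockPhase_mem c.1) (by fun_prop)
    (prod_blockPhase_mul_blockPhase_ne_one hc) fun G => ?_
  rw [det_principalBlock_diagonal_mul, monomialMatrix_mul_apply, Equiv.Perm.one_apply]
  ring

theorem integral_det_principalBlock_eq_zero (hS : ¬IsBlockUnion S) :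
    ∫ G, (principalBlock S G).det ∂μ = 0 := by
  obtain ⟨i, hi⟩ := not_forall.mp hS
  exact hμ.integral_eq_zero (monomialMatrix_blockPhase_mem i) (by fun_prop)
    (prod_blockPhase_ne_one hi) (det_principalBlock_diagonal_mul S _)

theorem integral_laplaceTerm_eq_zero (hS : ¬IsBlockUnion S) {u : Fin n × Fin 2} (hu : u ∈ S)
    (c : Fin n × Fin 2) : ∫ G, laplaceTerm S u c G ∂μ = 0 := by
  obtain ⟨i, hi⟩ := not_forall.mp hS
  exact hμ.integral_eq_zero (monomialMatrix_blockPhase_mem i) (by fun_prop)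
    (prod_blockPhase_ne_one hi) (laplaceTerm_diagonal_mul hu c _)

theorem integral_laplaceTerm_flip (hS : IsBlockUnion S) {i : Fin n} (hi : (i, 0) ∈ S)
    (c : Fin n × Fin 2) :
    ∫ G, laplaceTerm S (i, 1) c G ∂μ = ∫ G, laplaceTerm S (i, 0) c G ∂μ := by
  have hfix : ∀ u ∉ S, u ≠ (i, 0) ∧ u ≠ (i, 1) := fun u hu =>
    ⟨fun h => hu (h ▸ hi), fun h => hu (h ▸ (hS i).mp hi)⟩
  rw [← hμ.integral_mul_left (monomialMatrix_blockFlip_mem i) (by fun_prop)]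
  congr 1 with G
  rw [laplaceTerm_monomialMatrix_mul_of_fixed_compl _ _ _ ((hS i).mp hi),
    Equiv.swap_apply_right]
  · exact fun u hu => Equiv.swap_apply_of_ne_of_ne (hfix u hu).1 (hfix u hu).2
  · exact fun u hu => if_neg (hfix u hu).2
  · rw [Equiv.Perm.sign_swap (by simp)]
    simp [blockFlip]

theorem integral_laplaceTerm_swap (hS : IsBlockUnion S) {i k : Fin n} (hi : (i, 0) ∈ S)
    (hk : (k, 0) ∈ S) (c : Fin n × Fin 2) :
    ∫ G, laplaceTerm S (k, 0) c G ∂μ = ∫ G, laplaceTerm S (i, 0) c G ∂μ := by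
  have hfix : ∀ u ∉ S, u.1 ≠ i ∧ u.1 ≠ k := fun u hu =>
    ⟨fun h => hu ((hS.mem_iff u.1 u.2 0).mpr (h ▸ hi)),
      fun h => hu ((hS.mem_iff u.1 u.2 0).mpr (h ▸ hk))⟩
  rw [← hμ.integral_mul_left (monomialMatrix_blockSwap_mem i k) (by fun_prop)]
  congr 1 with G
  rw [laplaceTerm_monomialMatrix_mul_of_fixed_compl _ _ _ hk]
  · simp
  · exact fun u hu => Prod.ext (Equiv.swap_apply_of_ne_of_ne (hfix u hu).1 (hfix u hu).2) rfl
  · simp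
  · rw [Equiv.Perm.sign_prodCongrLeft]
    rcases Int.units_eq_one_or (Equiv.Perm.sign (Equiv.swap i k)) with h | h <;> simp [h]

theorem integral_laplaceTerm_eq (hS : IsBlockUnion S) {u v : Fin n × Fin 2} (hu : u ∈ S)
    (hv : v ∈ S) (c : Fin n × Fin 2) :
    ∫ G, laplaceTerm S u c G ∂μ = ∫ G, laplaceTerm S v c G ∂μ := by
  have hzero : ∀ w ∈ S,
      ∫ G, laplaceTerm S w c G ∂μ = ∫ G, laplaceTerm S (w.1, 0) c G ∂μ := by
    rintro ⟨i, a⟩ hi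
    fin_cases a
    · rfl
    · exact hμ.integral_laplaceTerm_flip hS ((hS i).mpr hi) c
  rw [hzero u hu, hzero v hv]
  exact hμ.integral_laplaceTerm_swap hS ((hS.mem_iff v.1 v.2 0).mp hv)
    ((hS.mem_iff u.1 u.2 0).mp hu) c

variable (hint : ∀ F : BlockMatrix n → ℂ, Continuous F → Integrable F μ)

include hint

theorem sum_integral_laplaceTerm (hne : S.Nonempty) :
    ∑ c ∈ S, ∫ G, laplaceTerm S c c G ∂μ = ∫ G, (principalBlock S G).det ∂μ := by
  by_cases hS : IsBlockUnion S
  · obtain ⟨u, hu⟩ := hne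
    calc ∑ c ∈ S, ∫ G, laplaceTerm S c c G ∂μ
        = ∑ c ∈ S, ∫ G, laplaceTerm S u c G ∂μ :=
          Finset.sum_congr rfl fun c hc => hμ.integral_laplaceTerm_eq hS hc hu c
      _ = ∫ G, ∑ c ∈ S, laplaceTerm S u c G ∂μ :=
          (integral_finsetSum S fun c _ => hint _ (by fun_prop)).symm
      _ = ∫ G, (principalBlock S G).det ∂μ := by simp only [sum_laplaceTerm hu]
  · rw [hμ.integral_det_principalBlock_eq_zero hS]
    exact Finset.sum_eq_zero fun c hc => hμ.integral_laplaceTerm_eq_zero hS hc c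

theorem integral_det_principalBlock_mul_trace (S : Finset (Fin n × Fin 2)) :
    ∫ G, (principalBlock S G).det * G.trace ∂μ =
      ∑ c ∈ Sᶜ, ∫ G, laplaceTerm (insert c S) c c G ∂μ := by
  simp only [trace, diag_apply, Finset.mul_sum]
  rw [integral_finsetSum _ fun c _ => hint _ (by fun_prop)]
  refine (Finset.sum_subset_zero_on_sdiff (Finset.subset_univ _) (fun c hc => ?_)
    fun c hc => ?_).symm
  · exact hμ.integral_det_principalBlock_mul_diag (by simpa using hc)
  · simp only [laplaceTerm_insert_self (Finset.mem_compl.mp hc)]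

theorem integral_det_mul_trace (z : ℂ) :
    ∫ G, (z • 1 - G).det * G.trace ∂μ =
      -(z * ∑ S : Finset (Fin n × Fin 2), z ^ Sᶜ.card * (-1) ^ S.card *
        ∑ c ∈ S, ∫ G, laplaceTerm S c c G ∂μ) := by
  have hcoeff {S : Finset (Fin n × Fin 2)} {c : Fin n × Fin 2} (hc : c ∈ Sᶜ) :
      z ^ Sᶜ.card * (-1) ^ S.card =
        -(z * (z ^ (insert c S)ᶜ.card * (-1) ^ (insert c S).card)) := by
    rw [Finset.compl_insert, Finset.card_insert_of_notMem (Finset.mem_compl.mp hc),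
      ← Finset.card_erase_add_one hc]
    ring
  calc ∫ G, (z • 1 - G).det * G.trace ∂μ
      = ∑ S : Finset (Fin n × Fin 2), z ^ Sᶜ.card * (-1) ^ S.card *
          ∫ G, (principalBlock S G).det * G.trace ∂μ := by
        simp only [det_smul_one_sub, Finset.sum_mul, mul_assoc]
        rw [integral_finsetSum _ fun S _ => hint _ (by fun_prop)]
        simp only [integral_const_mul]
    _ = ∑ S : Finset (Fin n × Fin 2), ∑ c ∈ Sᶜ,
          -(z * (z ^ (insert c S)ᶜ.card * (-1) ^ (insert c S).card)) *
            ∫ G, laplaceTerm (insert c S) c c G ∂μ := by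
        simp only [hμ.integral_det_principalBlock_mul_trace hint, Finset.mul_sum]
        exact Finset.sum_congr rfl fun S _ => Finset.sum_congr rfl fun c hc => by rw [hcoeff hc]
    _ = _ := by
        rw [sum_notMem_insert_eq_sum_mem fun S c => -(z * (z ^ Sᶜ.card * (-1) ^ S.card)) *
          ∫ G, laplaceTerm S c c G ∂μ]
        simp only [Finset.mul_sum, ← Finset.sum_neg_distrib, neg_mul, mul_assoc]

theorem mul_integral_det_add_integral_det_mul_trace (z : ℂ) :
    z * ∫ G, (z • 1 - G).det ∂μ + ∫ G, (z • 1 - G).det * G.trace ∂μ =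
      z ^ (2 * n + 1) * μ.real Set.univ := by
  rw [integral_det_smul_one_sub hint, hμ.integral_det_mul_trace hint, ← sub_eq_add_neg, ← mul_sub,
    ← Finset.sum_sub_distrib, Finset.sum_eq_single ∅]
  · simp only [principalBlock_empty, det_one, integral_const, Finset.compl_empty, Finset.card_univ,
      Fintype.card_prod, Fintype.card_fin, Finset.card_empty, Finset.sum_empty, pow_zero, mul_one,
      mul_zero, sub_zero, Complex.real_smul]
    ring
  · intro S _ hS
    rw [hμ.sum_integral_laplaceTerm hint (Finset.nonempty_iff_ne_empty.mpr hS), sub_self]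
  · simp

end IsLeftSymplecticInvariant

end InvariantMeasures

theorem isStrictlyPositive_one_sub_star_mul_self_iff {A : Type*} [CStarAlgebra A] [PartialOrder A]
    [StarOrderedRing A] {a : A} : IsStrictlyPositive (1 - star a * a) ↔ ‖a‖ < 1 := by
  nontriviality A
  constructor
  · intro h
    obtain ⟨r, hr, hle⟩ := (CFC.exists_pos_algebraMap_le_iff h.isSelfAdjoint).mpr
      fun x hx => h.spectrum_pos hx
    have hstar : star a * a ≤ algebraMap ℝ A (1 - r) := by
      rw [map_sub, map_one]
      exact le_sub_comm.mp hle
    have hr1 : 0 ≤ 1 - r := by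
      have h0 := (star_mul_self_nonneg a).trans hstar
      rw [← map_zero (algebraMap ℝ A)] at h0
      exact (algebraMap_le_algebraMap).mp h0
    have hnorm := (CStarAlgebra.norm_le_iff_le_algebraMap _ hr1 (star_mul_self_nonneg a)).mpr hstar
    rw [CStarRing.norm_star_mul_self] at hnorm
    nlinarith [norm_nonneg a]
  · intro h
    have hpos : 0 < 1 - ‖a‖ ^ 2 := by nlinarith [norm_nonneg a]
    refine (isStrictlyPositive_algebraMap hpos).of_le ?_
    rw [map_sub, map_one]
    exact sub_le_sub_left CStarAlgebra.star_mul_le_algebraMap_norm_sq 1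

section Contractions

open scoped Matrix.Norms.L2Operator MatrixOrder

variable {ι : Type*} [Fintype ι] [DecidableEq ι]

theorem posDef_one_sub_conjTranspose_mul_self_iff {G : Matrix ι ι ℂ} :
    (1 - Gᴴ * G).PosDef ↔ ‖G‖ < 1 := by
  rw [← isStrictlyPositive_iff_posDef, ← star_eq_conjTranspose,
    isStrictlyPositive_one_sub_star_mul_self_iff]

theorem isOpen_posDef_one_sub_conjTranspose_mul_self :
    IsOpen {G : Matrix ι ι ℂ | (1 - Gᴴ * G).PosDef} := by
  simp only [posDef_one_sub_conjTranspose_mul_self_iff]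
  exact isOpen_lt continuous_norm continuous_const

theorem posDef_one_sub_conjTranspose_mul_self_smul_one {c : ℂ} (hc : ‖c‖ < 1) :
    (1 - (c • (1 : Matrix ι ι ℂ))ᴴ * (c • (1 : Matrix ι ι ℂ))).PosDef := by
  rw [posDef_one_sub_conjTranspose_mul_self_iff, smul_one_eq_diagonal, l2_opNorm_diagonal]
  exact (pi_norm_const_le c).trans_lt hc

theorem norm_apply_lt_one_of_posDef {G : Matrix ι ι ℂ} (h : (1 - Gᴴ * G).PosDef) (u v : ι) :
    ‖G u v‖ < 1 := by
  have hdiag : 0 < 1 - ∑ w, ‖G w v‖ ^ 2 := by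
    have heq : (1 - Gᴴ * G) v v = ((1 - ∑ w, ‖G w v‖ ^ 2 : ℝ) : ℂ) := by
      simp [Matrix.mul_apply, Complex.conj_mul']
    exact_mod_cast heq ▸ h.diag_pos (i := v)
  have hle := Finset.single_le_sum (f := fun w => ‖G w v‖ ^ 2) (fun _ _ => by positivity)
    (Finset.mem_univ u)
  nlinarith [norm_nonneg (G u v)]

end Contractions

section InvarianceCriteria

theorem measurePreserving_of_preimage_eq {E : Type*} [NormedAddCommGroup E] [NormedSpace ℝ E]
    [FiniteDimensional ℝ E] [MeasurableSpace E] [BorelSpace E] {μ : Measure E} [μ.IsAddHaarMeasure]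
    {T : E →ₗ[ℝ] E} (hT : Function.Injective T) {s : Set E} (hs : T ⁻¹' s = s) (h0 : μ s ≠ 0)
    (htop : μ s ≠ ⊤) : MeasurePreserving T μ μ := by
  have hdet : LinearMap.det T ≠ 0 := fun h =>
    (LinearMap.bot_lt_ker_of_det_eq_zero h).ne' (LinearMap.ker_eq_bot.mpr hT)
  have hone : ENNReal.ofReal |(LinearMap.det T)⁻¹| = 1 := by
    have h := Measure.addHaar_preimage_linearMap μ hdet s
    rw [hs] at h
    exact (ENNReal.mul_eq_right h0 htop).mp h.symm
  refine ⟨T.continuous_of_finiteDimensional.measurable, ?_⟩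
  rw [Measure.map_linearMap_addHaar_eq_smul_addHaar μ hdet, hone, one_smul]

theorem measurePreserving_withDensity {α : Type*} [MeasurableSpace α] {μ : Measure α}
    {T : α → α} (hT : MeasurePreserving T μ μ) (hemb : MeasurableEmbedding T)
    {f : α → ENNReal} (hf : ∀ x, f (T x) = f x) :
    MeasurePreserving T (μ.withDensity f) (μ.withDensity f) := by
  refine ⟨hT.measurable, Measure.ext fun s hs => ?_⟩
  rw [Measure.map_apply hT.measurable hs, withDensity_apply _ hs,
    withDensity_apply _ (hT.measurable hs)]
  calc ∫⁻ x in T ⁻¹' s, f x ∂μ = ∫⁻ x in T ⁻¹' s, f (T x) ∂μ := by simp only [hf]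
    _ = ∫⁻ x in s, f x ∂μ := hT.setLIntegral_comp_preimage_emb hemb f s

end InvarianceCriteria

section Ensemble

variable {n : ℕ} {β₁ β₂ : ℝ}

instance : (volume : Measure (ℂ × ℂ)).IsAddHaarMeasure :=
  inferInstanceAs (volume.prod volume : Measure (ℂ × ℂ)).IsAddHaarMeasure

instance : (volume : Measure (Fin n → ℂ × ℂ)).IsAddHaarMeasure :=
  Measure.pi.isAddHaarMeasure _

instance : (volume : Measure (Fin n → Fin n → ℂ × ℂ)).IsAddHaarMeasure :=
  Measure.pi.isAddHaarMeasure _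

@[fun_prop]
theorem continuous_quatMatrix : Continuous (quatMatrix n) := by
  refine continuous_matrix fun a b => ?_
  simp only [quatMatrix, of_apply]
  split_ifs <;> fun_prop

/-- The parametrization `quatMatrix` of the matrices of quaternion block form by their entries, as
a real-linear map. -/
noncomputable def quatMatrixₗ (n : ℕ) : (Fin n → Fin n → ℂ × ℂ) →ₗ[ℝ] BlockMatrix n where
  toFun := quatMatrix n
  map_add' x y := by
    ext a b
    simp only [quatMatrix, of_apply, Matrix.add_apply, Pi.add_apply, Prod.fst_add, Prod.snd_add,
      map_add]
    split_ifs <;> ring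
  map_smul' r x := by
    ext a b
    simp only [quatMatrix, of_apply, Matrix.smul_apply, Pi.smul_apply, Prod.smul_fst, Prod.smul_snd]
    split_ifs <;> simp

/-- The entries `(z_{jk}, w_{jk})` in the first row of each block, a left inverse of
`quatMatrixₗ`. -/
def quatEntriesₗ (n : ℕ) : BlockMatrix n →ₗ[ℝ] (Fin n → Fin n → ℂ × ℂ) where
  toFun G j k := (G (j, 0) (k, 0), G (j, 0) (k, 1))
  map_add' _ _ := rfl
  map_smul' _ _ := rfl

theorem quatEntriesₗ_quatMatrix (x : Fin n → Fin n → ℂ × ℂ) :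
    quatEntriesₗ n (quatMatrix n x) = x :=
  rfl

theorem quatMatrix_injective : Function.Injective (quatMatrix n) :=
  Function.LeftInverse.injective quatEntriesₗ_quatMatrix

theorem quatMatrix_quatEntriesₗ {G : BlockMatrix n} (hG : G ∈ Set.range (quatMatrix n)) :
    quatMatrix n (quatEntriesₗ n G) = G := by
  obtain ⟨x, rfl⟩ := hG
  rw [quatEntriesₗ_quatMatrix]

theorem mul_mem_range_quatMatrix {U V : BlockMatrix n} (hU : U ∈ Set.range (quatMatrix n))
    (hV : V ∈ Set.range (quatMatrix n)) : U * V ∈ Set.range (quatMatrix n) := by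
  rw [mem_range_quatMatrix_iff] at hU hV ⊢
  intro j k
  simp only [mul_apply, Fintype.sum_prod_type, Fin.sum_univ_two, hU, hV, star_sum, star_add,
    star_mul', star_neg, star_star, ← Finset.sum_neg_distrib]
  exact ⟨Finset.sum_congr rfl fun i _ => by ring, Finset.sum_congr rfl fun i _ => by ring⟩

/-- Left multiplication by `U` in the coordinates given by `quatMatrix`; meaningful for `U` of
quaternion block form. -/
noncomputable def leftMul (U : BlockMatrix n) :
    (Fin n → Fin n → ℂ × ℂ) →ₗ[ℝ] (Fin n → Fin n → ℂ × ℂ) :=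
  quatEntriesₗ n ∘ₗ LinearMap.mulLeft ℝ U ∘ₗ quatMatrixₗ n

theorem quatMatrix_leftMul {U : BlockMatrix n} (hU : U ∈ Set.range (quatMatrix n))
    (x : Fin n → Fin n → ℂ × ℂ) : quatMatrix n (leftMul U x) = U * quatMatrix n x :=
  quatMatrix_quatEntriesₗ (mul_mem_range_quatMatrix hU ⟨x, rfl⟩)

theorem conjTranspose_mul_self_quatMatrix_leftMul {U : BlockMatrix n}
    (hU : U ∈ compactSymplectic n) (x : Fin n → Fin n → ℂ × ℂ) :
    (quatMatrix n (leftMul U x))ᴴ * quatMatrix n (leftMul U x) =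
      (quatMatrix n x)ᴴ * quatMatrix n x := by
  rw [quatMatrix_leftMul hU.2, conjTranspose_mul, mul_assoc, ← mul_assoc Uᴴ,
    ← star_eq_conjTranspose U, mem_unitaryGroup_iff'.mp hU.1, one_mul]

theorem leftMul_injective {U : BlockMatrix n} (hU : U ∈ compactSymplectic n) :
    Function.Injective (leftMul U) := by
  intro x y h
  have hmul : U * quatMatrix n x = U * quatMatrix n y := by
    rw [← quatMatrix_leftMul hU.2, h, quatMatrix_leftMul hU.2]
  refine quatMatrix_injective ?_
  rw [← one_mul (quatMatrix n x), ← one_mul (quatMatrix n y), ← mem_unitaryGroup_iff'.mp hU.1,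
    mul_assoc, hmul, mul_assoc]

/-- The support of the anti-spherical ensemble, in the coordinates given by `quatMatrix`. -/
def ensembleSupport (n : ℕ) : Set (Fin n → Fin n → ℂ × ℂ) :=
  {x | (1 - (quatMatrix n x)ᴴ * quatMatrix n x).PosDef}

theorem isOpen_ensembleSupport : IsOpen (ensembleSupport n) :=
  isOpen_posDef_one_sub_conjTranspose_mul_self.preimage continuous_quatMatrix

theorem ensembleSupport_subset_closedBall : ensembleSupport n ⊆ Metric.closedBall 0 1 := by
  intro x hx
  rw [mem_closedBall_zero_iff, ← quatEntriesₗ_quatMatrix x, pi_norm_le_iff_of_nonneg zero_le_one]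
  refine fun j => (pi_norm_le_iff_of_nonneg zero_le_one).mpr fun k => ?_
  exact max_le (norm_apply_lt_one_of_posDef hx _ _).le (norm_apply_lt_one_of_posDef hx _ _).le

theorem measurePreserving_leftMul {U : BlockMatrix n} (hU : U ∈ compactSymplectic n) :
    MeasurePreserving (leftMul U) := by
  have hzero : (0 : Fin n → Fin n → ℂ × ℂ) ∈ ensembleSupport n := by
    have h : quatMatrix n 0 = 0 := map_zero (quatMatrixₗ n)
    simp [ensembleSupport, h, PosDef.one]
  refine measurePreserving_of_preimage_eq (leftMul_injective hU) (s := ensembleSupport n) ?_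
    (isOpen_ensembleSupport.measure_pos volume ⟨0, hzero⟩).ne' ?_
  · ext x
    simp only [ensembleSupport, Set.mem_preimage, Set.mem_ofPred_eq,
      conjTranspose_mul_self_quatMatrix_leftMul hU]
  · exact ((isCompact_closedBall 0 1).measure_lt_top.trans_le'
      (measure_mono ensembleSupport_subset_closedBall)).ne

theorem weight_leftMul {U : BlockMatrix n} (hU : U ∈ compactSymplectic n)
    (x : Fin n → Fin n → ℂ × ℂ) :
    quatAntiSphericalWeight n β₁ β₂ (leftMul U x) = quatAntiSphericalWeight n β₁ β₂ x := by
  classical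
  simp only [quatAntiSphericalWeight, Set.indicator_apply, Set.mem_ofPred_eq,
    conjTranspose_mul_self_quatMatrix_leftMul hU]

theorem det_conjTranspose_mul_self_re {ι : Type*} [Fintype ι] [DecidableEq ι] (G : Matrix ι ι ℂ) :
    (Gᴴ * G).det.re = ‖G.det‖ ^ 2 := by
  rw [det_mul, det_conjTranspose, Complex.star_def, Complex.conj_mul']
  norm_cast

theorem weight_nonneg (x : Fin n → Fin n → ℂ × ℂ) : 0 ≤ quatAntiSphericalWeight n β₁ β₂ x := by
  refine Set.indicator_nonneg (fun y hy => mul_nonneg (Real.rpow_nonneg ?_ _)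
    (Real.rpow_nonneg (Complex.pos_iff.mp (PosDef.det_pos hy)).1.le _)) x
  rw [det_conjTranspose_mul_self_re]
  positivity

theorem weight_pos {x : Fin n → Fin n → ℂ × ℂ} (hx : x ∈ ensembleSupport n)
    (hdet : (quatMatrix n x).det ≠ 0) : 0 < quatAntiSphericalWeight n β₁ β₂ x := by
  rw [quatAntiSphericalWeight, Set.indicator_of_mem (by exact hx), det_conjTranspose_mul_self_re]
  have hdet' := (Complex.pos_iff.mp (PosDef.det_pos hx)).1
  positivity

theorem integrable_weight (hβ₁ : 0 ≤ β₁) (hβ₂ : 0 ≤ β₂) :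
    Integrable (quatAntiSphericalWeight n β₁ β₂) := by
  refine (integrable_indicator_iff isOpen_ensembleSupport.measurableSet).mpr
    (IntegrableOn.mono_set (Continuous.continuousOn ?_ |>.integrableOn_compact
      (isCompact_closedBall 0 1)) ensembleSupport_subset_closedBall)
  refine .mul (.rpow_const ?_ fun _ => .inr hβ₁) (.rpow_const ?_ fun _ => .inr hβ₂) <;> fun_prop

theorem integral_weight_pos (hint : Integrable (quatAntiSphericalWeight n β₁ β₂)) :
    0 < ∫ x, quatAntiSphericalWeight n β₁ β₂ x := by
  rw [integral_pos_iff_support_of_nonneg weight_nonneg hint]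
  have hopen : IsOpen (ensembleSupport n ∩ {x | (quatMatrix n x).det ≠ 0}) :=
    isOpen_ensembleSupport.inter (isOpen_ne_fun (by fun_prop) continuous_const)
  have hscalar : (2⁻¹ : ℂ) • (1 : BlockMatrix n) ∈ Set.range (quatMatrix n) :=
    mem_range_quatMatrix_iff.mpr fun j k => by simp [one_apply, apply_ite]
  obtain ⟨x, hx⟩ := hscalar
  have hmem : x ∈ ensembleSupport n ∩ {x | (quatMatrix n x).det ≠ 0} := by
    simp only [ensembleSupport, Set.mem_inter_iff, Set.mem_ofPred_eq, hx]
    exact ⟨posDef_one_sub_conjTranspose_mul_self_smul_one (by norm_num), by simp⟩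
  exact (hopen.measure_pos volume ⟨x, hmem⟩).trans_le
    (measure_mono fun y hy => (weight_pos hy.1 hy.2).ne')

/-- The unnormalized distribution of the anti-spherical ensemble, as a measure on matrices. -/
noncomputable def ensembleMeasure (n : ℕ) (β₁ β₂ : ℝ) : Measure (BlockMatrix n) :=
  (volume.withDensity fun x => ENNReal.ofReal (quatAntiSphericalWeight n β₁ β₂ x)).map
    (quatMatrix n)

theorem isLeftSymplecticInvariant_ensembleMeasure :
    IsLeftSymplecticInvariant (ensembleMeasure n β₁ β₂) := by
  intro U hU
  have hU_meas : Measurable (U * · : BlockMatrix n → BlockMatrix n) :=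
    Continuous.measurable (by fun_prop)
  have hleft := measurePreserving_withDensity (measurePreserving_leftMul hU)
    ((leftMul U).isClosedEmbedding_of_injective
      (LinearMap.ker_eq_bot.mpr (leftMul_injective hU))).measurableEmbedding
    (f := fun x => ENNReal.ofReal (quatAntiSphericalWeight n β₁ β₂ x))
    fun x => by rw [weight_leftMul hU]
  refine ⟨hU_meas, ?_⟩
  rw [ensembleMeasure, Measure.map_map hU_meas continuous_quatMatrix.measurable]
  conv_rhs => rw [← hleft.map_eq,
    Measure.map_map continuous_quatMatrix.measurable hleft.measurable]
  congr 1
  exact funext fun x => (quatMatrix_leftMul hU.2 x).symm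

theorem integral_ensembleMeasure (hint : Integrable (quatAntiSphericalWeight n β₁ β₂))
    {F : BlockMatrix n → ℂ} (hF : Continuous F) : ∫ G, F G ∂ensembleMeasure n β₁ β₂ =
      ∫ x, (quatAntiSphericalWeight n β₁ β₂ x : ℂ) * F (quatMatrix n x) := by
  rw [ensembleMeasure, integral_map continuous_quatMatrix.aemeasurable hF.aestronglyMeasurable,
    integral_withDensity_eq_integral_toReal_smul₀ hint.aemeasurable.ennreal_ofReal (by simp)]
  simp only [ENNReal.toReal_ofReal (weight_nonneg _), Complex.real_smul]

theorem integrable_ensembleMeasure (hint : Integrable (quatAntiSphericalWeight n β₁ β₂))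
    {F : BlockMatrix n → ℂ} (hF : Continuous F) : Integrable F (ensembleMeasure n β₁ β₂) := by
  rw [ensembleMeasure, integrable_map_measure hF.aestronglyMeasurable
    continuous_quatMatrix.aemeasurable,
    integrable_withDensity_iff_integrable_smul₀' hint.aemeasurable.ennreal_ofReal (by simp)]
  simp only [ENNReal.toReal_ofReal (weight_nonneg _)]
  have hball := hint.integrableOn.smul_continuousOn
    (hF.comp continuous_quatMatrix).continuousOn (isCompact_closedBall 0 1)
  refine (integrableOn_iff_integrable_of_support_subset ?_).mp hball
  exact (Function.support_smul_subset_left (quatAntiSphericalWeight n β₁ β₂) _).trans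
    (Set.support_indicator_subset.trans ensembleSupport_subset_closedBall)

theorem measureReal_univ_ensembleMeasure (hint : Integrable (quatAntiSphericalWeight n β₁ β₂)) :
    (ensembleMeasure n β₁ β₂).real Set.univ = ∫ x, quatAntiSphericalWeight n β₁ β₂ x := by
  have h := integral_ensembleMeasure hint (continuous_const (y := (1 : ℂ)))
  simp only [integral_const, Complex.real_smul, mul_one, integral_complex_ofReal] at h
  exact_mod_cast h

end Ensemble

end QuatAntiSpherical

open QuatAntiSpherical in
theorem quatAntiSpherical_odd_skew_orthogonal_poly_general (n : ℕ) (β₁ β₂ : ℝ)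
    (hint : Integrable (quatAntiSphericalWeight n β₁ β₂)) (z : ℂ) :
    z * ((∫ x : Fin n → Fin n → ℂ × ℂ,
          (quatAntiSphericalWeight n β₁ β₂ x : ℂ) *
            (z • (1 : Matrix (Fin n × Fin 2) (Fin n × Fin 2) ℂ) - quatMatrix n x).det) /
        ((∫ x : Fin n → Fin n → ℂ × ℂ, quatAntiSphericalWeight n β₁ β₂ x : ℝ) : ℂ))
      + (∫ x : Fin n → Fin n → ℂ × ℂ,
          (quatAntiSphericalWeight n β₁ β₂ x : ℂ) *
            ((z • (1 : Matrix (Fin n × Fin 2) (Fin n × Fin 2) ℂ) - quatMatrix n x).det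
              * (quatMatrix n x).trace)) /
        ((∫ x : Fin n → Fin n → ℂ × ℂ, quatAntiSphericalWeight n β₁ β₂ x : ℝ) : ℂ)
      = z ^ (2 * n + 1) := by
  have hmass : ((∫ x, quatAntiSphericalWeight n β₁ β₂ x : ℝ) : ℂ) ≠ 0 := by
    exact_mod_cast (integral_weight_pos hint).ne'
  have hmoment := IsLeftSymplecticInvariant.mul_integral_det_add_integral_det_mul_trace
    isLeftSymplecticInvariant_ensembleMeasure (fun _ hF => integrable_ensembleMeasure hint hF) z
  rw [integral_ensembleMeasure hint (by fun_prop), integral_ensembleMeasure hint (by fun_prop),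
    measureReal_univ_ensembleMeasure hint] at hmoment
  rw [← mul_div_assoc, ← add_div, hmoment, mul_div_cancel_right₀ _ hmass]

/-- The odd-degree skew orthogonal polynomial for the quaternion real anti-spherical
ensemble is a monomial: `z ⟨det (z I - G)⟩ + ⟨det (z I - G) Tr G⟩ = z^(2n+1)`. -/
theorem quatAntiSpherical_odd_skew_orthogonal_poly (n : ℕ) (hn : 0 < n)
    (β₁ β₂ : ℝ) (hβ₁ : 0 ≤ β₁) (hβ₂ : 0 ≤ β₂) (z : ℂ) :
    z * ((∫ x : Fin n → Fin n → ℂ × ℂ,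
          (quatAntiSphericalWeight n β₁ β₂ x : ℂ) *
            (z • (1 : Matrix (Fin n × Fin 2) (Fin n × Fin 2) ℂ) - quatMatrix n x).det) /
        ((∫ x : Fin n → Fin n → ℂ × ℂ, quatAntiSphericalWeight n β₁ β₂ x : ℝ) : ℂ))
      + (∫ x : Fin n → Fin n → ℂ × ℂ,
          (quatAntiSphericalWeight n β₁ β₂ x : ℂ) *
            ((z • (1 : Matrix (Fin n × Fin 2) (Fin n × Fin 2) ℂ) - quatMatrix n x).det
              * (quatMatrix n x).trace)) /
        ((∫ x : Fin n → Fin n → ℂ × ℂ, quatAntiSphericalWeight n β₁ β₂ x : ℝ) : ℂ)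
      = z ^ (2 * n + 1) :=
  quatAntiSpherical_odd_skew_orthogonal_poly_general n β₁ β₂
    (QuatAntiSpherical.integrable_weight hβ₁ hβ₂) z
end
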